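/- arXiv:math/0404097 — 7 statements merged into one kernel-verified Lean document; each statement's English description precedes it below -/
import Mathlib

section
/- Let X : [0,∞) × Ω → ℝ be a jointly measurable stochastic process on a probability space (Ω, F, P), and set X̄_t := t⁻¹ ∫₀ᵗ X_s ds. Suppose that for every t > 0 the pair (X_t, X̄_t) has the same joint distribution as (X_1, X̄_1), and that E|X_1| < ∞. Then for every t > 0, the conditional expectation of X_t given the σ-algebra generated by X̄_t equals X̄_t almost surely: E(X_t | σ(X̄_t)) = X̄_t a.s. -/
open MeasureTheory ProbabilityTheory

open scoped BoundedContinuousFunction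

lemma aux_ac_comp {f G : ℝ → ℝ} {a b C : ℝ} (hC : ∀ x y, |G x - G y| ≤ C * |x - y|)
    (hf : AbsolutelyContinuousOnInterval f a b) :
    AbsolutelyContinuousOnInterval (fun x => G (f x)) a b := by
  apply squeeze_zero (fun t ↦ ?_) (fun t ↦ ?_) (by simpa using Filter.Tendsto.const_mul C hf)
  · exact Finset.sum_nonneg (fun i hi ↦ by positivity)
  · rw [Finset.mul_sum]
    gcongr
    simpa [Real.dist_eq] using hC _ _

lemma aux_path (f : ℝ → ℝ) (hf : IntervalIntegrable f volume 0 2) (g : ℝ →ᵇ ℝ) (m : ℝ → ℝ)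
    (hm : ∀ t, m t = t⁻¹ * ∫ s in (0:ℝ)..t, f s) :
    ∫ t in (1:ℝ)..2, t⁻¹ * (g (m t) * (f t - m t))
      = (∫ x in (0:ℝ)..(m 2), g x) - ∫ x in (0:ℝ)..(m 1), g x := by
  have hsub : Set.uIcc (1:ℝ) 2 ⊆ Set.uIcc 0 2 := by
    rw [Set.uIcc_of_le (by norm_num), Set.uIcc_of_le (by norm_num)]
    exact Set.Icc_subset_Icc_left (by norm_num)
  have hgi : ∀ a b, IntervalIntegrable g volume a b :=
    fun a b => g.continuous.intervalIntegrable a b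
  have hA : AbsolutelyContinuousOnInterval (fun t => ∫ s in (0:ℝ)..t, f s) 1 2 :=
    (hf.absolutelyContinuousOnInterval_intervalIntegral (c := 0) (by simp)).mono hsub
  have hinv : AbsolutelyContinuousOnInterval (fun t : ℝ => t⁻¹) 1 2 := by
    apply ContDiffOn.absolutelyContinuousOnInterval
    intro t ht
    rw [Set.uIcc_of_le (by norm_num)] at ht
    exact (contDiffAt_inv ℝ (by have := ht.1; positivity)).contDiffWithinAt
  have hmac : AbsolutelyContinuousOnInterval m 1 2 := by
    have := hinv.fun_mul hA
    rwa [← funext hm] at this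
  have hGac := aux_ac_comp (G := fun y => ∫ x in (0:ℝ)..y, g x) (C := ‖g‖) (fun x y => by
    rw [intervalIntegral.integral_interval_sub_left (hgi _ _) (hgi _ _)]
    have := intervalIntegral.norm_integral_le_of_norm_le_const (a := y) (b := x) (f := g)
      (C := ‖g‖) (fun z _ => g.norm_coe_le_norm z)
    simpa using this) hmac
  rw [← hGac.integral_deriv_eq_sub]
  apply intervalIntegral.integral_congr_ae
  filter_upwards [hf.ae_hasDerivAt_integral] with t ht ht1
  rw [Set.uIoc_of_le (by norm_num)] at ht1
  have ht0 : t ≠ 0 := by have := ht1.1; positivity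
  have h1 := ht (by rw [Set.uIcc_of_le (by norm_num)]; exact ⟨by linarith [ht1.1], ht1.2⟩) 0
    (by simp)
  have h2 := (hasDerivAt_inv ht0).mul h1
  have h3 : HasDerivAt m (t⁻¹ * (f t - m t)) t := by
    have e : m = (fun t : ℝ => t⁻¹) * (fun t => ∫ s in (0:ℝ)..t, f s) := funext hm
    rw [← e] at h2
    convert! h2 using 1
    rw [hm t]
    field_simp
    ring
  have h4 : HasDerivAt (fun y => ∫ x in (0:ℝ)..y, g x) (g (m t)) (m t) :=
    intervalIntegral.integral_hasDerivAt_right (hgi _ _)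
      g.continuous.stronglyMeasurable.stronglyMeasurableAtFilter g.continuous.continuousAt
  have h5 := (h4.comp t h3).deriv
  simp only [Function.comp_def] at h5
  rw [h5]
  ring

lemma aux_ext {Ω : Type*} [MeasurableSpace Ω] (P : Measure Ω) [IsProbabilityMeasure P]
    (W Y : Ω → ℝ) (hWm : Measurable W) (hY : Measurable Y) (hW : Integrable W P)
    (h : ∀ g : ℝ →ᵇ ℝ, ∫ ω, g (Y ω) * W ω ∂P = 0) (B : Set ℝ) (hB : MeasurableSet B) :
    ∫ ω in Y ⁻¹' B, W ω ∂P = 0 := by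
  have hneg : Integrable (fun ω => - W ω) P := hW.neg
  have f1 : IsFiniteMeasure (P.withDensity fun ω => ENNReal.ofReal (W ω)) :=
    isFiniteMeasure_withDensity_ofReal hW.2
  have f2 : IsFiniteMeasure (P.withDensity fun ω => ENNReal.ofReal (- W ω)) :=
    isFiniteMeasure_withDensity_ofReal hneg.2
  have key : (P.withDensity fun ω => ENNReal.ofReal (W ω)).map Y
      = (P.withDensity fun ω => ENNReal.ofReal (- W ω)).map Y := by
    apply ext_of_forall_integral_eq_of_IsFiniteMeasure
    intro g
    have hgm : Measurable g := g.continuous.measurable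
    rw [integral_map hY.aemeasurable hgm.aestronglyMeasurable,
      integral_map hY.aemeasurable hgm.aestronglyMeasurable,
      integral_withDensity_eq_integral_toReal_smul hWm.ennreal_ofReal (by simp),
      integral_withDensity_eq_integral_toReal_smul (f := fun ω => ENNReal.ofReal (-W ω))
        hWm.neg.ennreal_ofReal (by simp),
      ← sub_eq_zero, ← integral_sub]
    · rw [← h g]
      congr 1
      ext ω
      simp only [ENNReal.toReal_ofReal', smul_eq_mul, ← sub_mul]
      rw [show max (W ω) 0 - max (-W ω) 0 = W ω from max_zero_sub_max_neg_zero_eq_self _]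
      ring
    · simp only [ENNReal.toReal_ofReal', smul_eq_mul]
      exact hW.pos_part.mul_bdd (c := ‖g‖) (hgm.comp hY).aestronglyMeasurable
        (Filter.Eventually.of_forall fun ω => g.norm_coe_le_norm _)
    · simp only [ENNReal.toReal_ofReal', smul_eq_mul]
      exact hneg.pos_part.mul_bdd (c := ‖g‖) (hgm.comp hY).aestronglyMeasurable
        (Filter.Eventually.of_forall fun ω => g.norm_coe_le_norm _)
  have k2 := congrArg (fun μ => μ B) key
  simp only [Measure.map_apply hY hB, withDensity_apply _ (hY hB)] at k2
  rw [integral_eq_lintegral_pos_part_sub_lintegral_neg_part hW.integrableOn, k2, sub_self]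

lemma aux_meas {Ω : Type*} [MeasurableSpace Ω] (X : ℝ → Ω → ℝ)
    (hX : Measurable fun p : ℝ × Ω => X p.1 p.2) :
    Measurable fun p : ℝ × Ω => ∫ s in (0:ℝ)..p.1, X s p.2 := by
  have hX' : Measurable fun q : ℝ × (ℝ × Ω) => X q.1 q.2.2 :=
    hX.comp (measurable_fst.prodMk measurable_snd.snd)
  have h1 : Measurable fun p : ℝ × Ω => ∫ s in Set.Ioc 0 p.1, X s p.2 := by
    have : Measurable fun q : ℝ × (ℝ × Ω) => (Set.Ioc 0 q.2.1).indicator (fun s => X s q.2.2) q.1 := by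
      have hs : MeasurableSet {q : ℝ × (ℝ × Ω) | q.1 ∈ Set.Ioc 0 q.2.1} :=
        (measurableSet_lt measurable_const measurable_fst).inter
          (measurableSet_le measurable_fst measurable_snd.fst)
      exact hX'.indicator hs
    have := (this.stronglyMeasurable.integral_prod_left' (μ := volume)).measurable
    simpa only [integral_indicator measurableSet_Ioc] using this
  have h2 : Measurable fun p : ℝ × Ω => ∫ s in Set.Ioc p.1 0, X s p.2 := by
    have : Measurable fun q : ℝ × (ℝ × Ω) => (Set.Ioc q.2.1 0).indicator (fun s => X s q.2.2) q.1 := by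
      have hs : MeasurableSet {q : ℝ × (ℝ × Ω) | q.1 ∈ Set.Ioc q.2.1 0} :=
        (measurableSet_lt measurable_snd.fst measurable_fst).inter
          (measurableSet_le measurable_fst measurable_const)
      exact hX'.indicator hs
    have := (this.stronglyMeasurable.integral_prod_left' (μ := volume)).measurable
    simpa only [integral_indicator measurableSet_Ioc] using this
  exact h1.sub h2

/-- Let `X : [0,∞) × Ω → ℝ` be a jointly measurable process on a
probability space, and `X̄_t := t⁻¹ ∫₀ᵗ X_s ds`.  If for every `t > 0` the pair
`(X_t, X̄_t)` has the same joint law as `(X_1, X̄_1)` and `E|X_1| < ∞`, then for every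
`t > 0`, `E(X_t | σ(X̄_t)) = X̄_t` a.s. -/
theorem statement0
    {Ω : Type*} [MeasurableSpace Ω] (P : Measure Ω) [IsProbabilityMeasure P]
    (X : ℝ → Ω → ℝ)
    (hX : Measurable fun p : ℝ × Ω => X p.1 p.2)
    (Xbar : ℝ → Ω → ℝ)
    (hXbar : ∀ t ω, Xbar t ω = t⁻¹ * ∫ s in (0:ℝ)..t, X s ω)
    (hss : ∀ t : ℝ, 0 < t →
      Measure.map (fun ω => (X t ω, Xbar t ω)) P
        = Measure.map (fun ω => (X 1 ω, Xbar 1 ω)) P)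
    (hint : Integrable (X 1) P) :
    ∀ t : ℝ, 0 < t →
      P[X t | MeasurableSpace.comap (Xbar t) inferInstance] =ᵐ[P] Xbar t := by
  have hm : Measurable fun p : ℝ × Ω => Xbar p.1 p.2 := by
    simp only [hXbar]
    exact measurable_fst.inv.mul (aux_meas X hX)
  have hXt : ∀ t, Measurable (X t) := fun t => hX.comp measurable_prodMk_left
  have hBt : ∀ t, Measurable (Xbar t) := fun t => hm.comp measurable_prodMk_left
  have hid : ∀ t, 0 < t → IdentDistrib (fun ω => (X t ω, Xbar t ω))
      (fun ω => (X 1 ω, Xbar 1 ω)) P P := fun t ht =>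
    ⟨((hXt t).prodMk (hBt t)).aemeasurable, ((hXt 1).prodMk (hBt 1)).aemeasurable, hss t ht⟩
  have hXi : ∀ t, 0 < t → Integrable (X t) P := fun t ht =>
    ((hid t ht).comp measurable_fst).integrable_iff.2 hint
  have hprod : Integrable (fun p : ℝ × Ω => X p.1 p.2)
      ((volume.restrict (Set.Ioc (0:ℝ) 2)).prod P) := by
    rw [integrable_prod_iff hX.aestronglyMeasurable]
    constructor
    · filter_upwards [ae_restrict_mem measurableSet_Ioc] with t ht using hXi t ht.1
    · refine (integrable_const (∫ ω, ‖X 1 ω‖ ∂P)).congr ?_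
      filter_upwards [ae_restrict_mem measurableSet_Ioc] with t ht
      exact ((hid t ht.1).comp (measurable_fst.norm)).integral_eq.symm
  have hB2 : Integrable (Xbar 2) P := by
    have := (hprod.integral_prod_right).const_mul (2:ℝ)⁻¹
    refine this.congr (Filter.Eventually.of_forall fun ω => ?_)
    simp only [hXbar, intervalIntegral.integral_of_le (zero_le_two (α := ℝ))]
  have hB1 : Integrable (Xbar 1) P :=
    ((hid 2 two_pos).comp measurable_snd).integrable_iff.1 hB2
  have hBi : ∀ t, 0 < t → Integrable (Xbar t) P := fun t ht =>
    ((hid t ht).comp measurable_snd).integrable_iff.2 hB1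
  have hpath : ∀ᵐ ω ∂P, IntervalIntegrable (fun s => X s ω) volume 0 2 := by
    filter_upwards [hprod.prod_left_ae] with ω h
    rw [intervalIntegrable_iff_integrableOn_Ioc_of_le zero_le_two]
    exact h
  have hWi : ∀ t, 0 < t → Integrable (fun ω => X t ω - Xbar t ω) P := fun t ht =>
    (hXi t ht).sub (hBi t ht)
  have hzero : ∀ g : ℝ →ᵇ ℝ, ∀ t, 0 < t → ∫ ω, g (Xbar t ω) * (X t ω - Xbar t ω) ∂P = 0 := by
    intro g
    have hgm : Measurable g := g.continuous.measurable
    have hcm : Measurable fun p : ℝ × ℝ => g p.2 * (p.1 - p.2) := by fun_prop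
    have hconst : ∀ t, 0 < t → ∫ ω, g (Xbar t ω) * (X t ω - Xbar t ω) ∂P
        = ∫ ω, g (Xbar 1 ω) * (X 1 ω - Xbar 1 ω) ∂P := fun t ht =>
      ((hid t ht).comp hcm).integral_eq
    set c := ∫ ω, g (Xbar 1 ω) * (X 1 ω - Xbar 1 ω) ∂P with hc
    suffices hc0 : c = 0 by
      intro t ht
      rw [hconst t ht, hc0]
    have hgi : ∀ t, 0 < t → Integrable (fun ω => g (Xbar t ω) * (X t ω - Xbar t ω)) P :=
      fun t ht => (hWi t ht).bdd_mul (c := ‖g‖) (hgm.comp (hBt t)).aestronglyMeasurable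
        (Filter.Eventually.of_forall fun ω => g.norm_coe_le_norm _)
    have hIinv : IntegrableOn (fun t : ℝ => t⁻¹) (Set.Ioc (1:ℝ) 2) := by
      rw [← intervalIntegrable_iff_integrableOn_Ioc_of_le one_le_two]
      apply intervalIntegral.intervalIntegrable_inv
      · intro x hx
        rw [Set.uIcc_of_le one_le_two] at hx
        have := hx.1
        positivity
      · exact continuousOn_id
    have hD : Integrable (Function.uncurry fun (t : ℝ) ω =>
        t⁻¹ * (g (Xbar t ω) * (X t ω - Xbar t ω)))
        ((volume.restrict (Set.uIoc (1:ℝ) 2)).prod P) := by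
      rw [Set.uIoc_of_le one_le_two, integrable_prod_iff]
      · constructor
        · filter_upwards [ae_restrict_mem measurableSet_Ioc] with t ht
          exact (hgi t (by linarith [ht.1])).const_mul t⁻¹
        · refine (hIinv.mul_const (∫ ω, ‖g (Xbar 1 ω) * (X 1 ω - Xbar 1 ω)‖ ∂P)).congr ?_
          filter_upwards [ae_restrict_mem measurableSet_Ioc] with t ht
          have ht0 : 0 < t := by linarith [ht.1]
          have e : ∫ ω, ‖g (Xbar t ω) * (X t ω - Xbar t ω)‖ ∂P
            = ∫ ω, ‖g (Xbar 1 ω) * (X 1 ω - Xbar 1 ω)‖ ∂P :=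
            ((hid t ht0).comp hcm.norm).integral_eq
          rw [← e, ← integral_const_mul]
          congr 1
          ext ω
          simp only [Function.uncurry, norm_mul, norm_inv, Real.norm_of_nonneg ht0.le]
      · refine Measurable.aestronglyMeasurable ?_
        exact measurable_fst.inv.mul (hcm.comp (hX.prodMk hm))
    have hsw := intervalIntegral_integral_swap hD
    have hL : ∫ t in (1:ℝ)..2, ∫ ω, t⁻¹ * (g (Xbar t ω) * (X t ω - Xbar t ω)) ∂P
        = Real.log 2 * c := by
      have : ∫ t in (1:ℝ)..2, ∫ ω, t⁻¹ * (g (Xbar t ω) * (X t ω - Xbar t ω)) ∂P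
        = ∫ t in (1:ℝ)..2, t⁻¹ * c := by
        apply intervalIntegral.integral_congr
        intro t ht
        rw [Set.uIcc_of_le one_le_two] at ht
        simp only [integral_const_mul]
        rw [hconst t (by linarith [ht.1])]
      rw [this, intervalIntegral.integral_mul_const, integral_inv_of_pos one_pos two_pos, div_one]
    have hGc : Continuous fun y => ∫ x in (0:ℝ)..y, g x :=
      intervalIntegral.continuous_primitive (fun a b => g.continuous.intervalIntegrable a b) 0
    have hGi : ∀ t, 0 < t → Integrable (fun ω => ∫ x in (0:ℝ)..(Xbar t ω), g x) P := by
      intro t ht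
      refine ((hBi t ht).norm.const_mul ‖g‖).mono'
        (hGc.measurable.comp (hBt t)).aestronglyMeasurable
        (Filter.Eventually.of_forall fun ω => ?_)
      have := intervalIntegral.norm_integral_le_of_norm_le_const (a := 0) (b := Xbar t ω)
        (f := g) (C := ‖g‖) (fun z _ => g.norm_coe_le_norm z)
      simpa using this
    have hR : ∫ ω, (∫ t in (1:ℝ)..2, t⁻¹ * (g (Xbar t ω) * (X t ω - Xbar t ω))) ∂P = 0 := by
      have e : ∫ ω, (∫ t in (1:ℝ)..2, t⁻¹ * (g (Xbar t ω) * (X t ω - Xbar t ω))) ∂P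
          = ∫ ω, ((∫ x in (0:ℝ)..(Xbar 2 ω), g x) - ∫ x in (0:ℝ)..(Xbar 1 ω), g x) ∂P := by
        apply integral_congr_ae
        filter_upwards [hpath] with ω hω
        exact aux_path (fun s => X s ω) hω g (fun t => Xbar t ω) (fun t => hXbar t ω)
      rw [e, integral_sub (hGi 2 two_pos) (hGi 1 one_pos), sub_eq_zero]
      exact ((hid 2 two_pos).comp (hGc.measurable.comp measurable_snd)).integral_eq
    rw [hL, hR] at hsw
    exact (mul_eq_zero.1 hsw).resolve_left (Real.log_pos one_lt_two).ne'
  intro t ht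
  symm
  refine ae_eq_condExp_of_forall_setIntegral_eq (hBt t).comap_le (hXi t ht)
    (fun s _ _ => (hBi t ht).integrableOn) ?_ ?_
  · rintro s ⟨B, hB, rfl⟩ -
    have := aux_ext P _ (Xbar t) ((hXt t).sub (hBt t)) (hBt t) (hWi t ht)
      (fun g => hzero g t ht) B hB
    simp only [Pi.sub_apply] at this
    rw [integral_sub (hXi t ht).integrableOn (hBi t ht).integrableOn, sub_eq_zero] at this
    exact this.symm
  · exact (comap_measurable (Xbar t)).stronglyMeasurable.aestronglyMeasurable
end

section
/- Let Θ : (0,∞) × Ω → S be a jointly measurable process with values in a measurable space S that is 0-self-similar, i.e. for every c > 0 the processes (Θ_{ct})_{t>0} and (Θ_t)_{t>0} have the same finite-dimensional distributions. For a measurable set B ⊆ S let μ_Θ(B) := ∫₀¹ 1_B(Θ_t) dt. Then for every measurable B ⊆ S, almost surely P(Θ_1 ∈ B | σ(μ_Θ(B))) = μ_Θ(B), where the conditional probability is taken with respect to the σ-algebra generated by the real random variable μ_Θ(B). -/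
open MeasureTheory ProbabilityTheory

lemma bdd_integrable {α : Type*} [MeasurableSpace α] (μ : Measure α) [IsFiniteMeasure μ]
    (f : α → ℝ) (hf : Measurable f) (h0 : ∀ x, 0 ≤ f x) (h1 : ∀ x, f x ≤ 1) : Integrable f μ :=
  Integrable.of_bound hf.aestronglyMeasurable 1
    (Filter.Eventually.of_forall fun x => by rw [Real.norm_eq_abs, abs_of_nonneg (h0 x)]; exact h1 x)

lemma pow_ftc (f : ℝ → ℝ) (hf : Measurable f) (h0 : ∀ x, 0 ≤ f x) (h1 : ∀ x, f x ≤ 1) (n : ℕ) :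
    (∫ t in (0:ℝ)..1, f t) ^ (n+1)
      = ∫ t in (0:ℝ)..1, ((n:ℝ)+1) * (∫ s in (0:ℝ)..t, f s) ^ n * f t := by
  have hi : IntervalIntegrable f volume 0 1 := by
    rw [intervalIntegrable_iff, Set.uIoc_of_le zero_le_one]
    exact bdd_integrable _ f hf h0 h1
  have hac : AbsolutelyContinuousOnInterval (fun t => ∫ s in (0:ℝ)..t, f s) 0 1 :=
    hi.absolutelyContinuousOnInterval_intervalIntegral (c := 0) (by simp)
  have hacn : ∀ k : ℕ, AbsolutelyContinuousOnInterval (fun t => (∫ s in (0:ℝ)..t, f s) ^ (k+1)) 0 1 := by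
    intro k
    induction k with
    | zero => simpa using hac
    | succ k ih => simpa only [pow_succ _ (k+1)] using ih.fun_mul hac
  have h := (hacn n).integral_deriv_eq_sub
  simp only [intervalIntegral.integral_same, ne_eq, Nat.succ_ne_zero, not_false_eq_true, zero_pow,
    sub_zero] at h
  rw [← h]
  apply intervalIntegral.integral_congr_ae
  filter_upwards [hi.ae_hasDerivAt_integral] with x hx hx'
  have := ((hx (Set.uIoc_subset_uIcc hx') 0 (by simp)).pow (n+1)).deriv
  simpa [Pi.pow_def] using this

lemma moment_scale {Ω S : Type*} [MeasurableSpace Ω] [MeasurableSpace S]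
    (P : Measure Ω) [IsProbabilityMeasure P]
    (Θ : ℝ → Ω → S)
    (hΘ : Measurable fun p : ℝ × Ω => Θ p.1 p.2)
    (hss : ∀ c : ℝ, 0 < c → ∀ (n : ℕ) (t : Fin n → ℝ), (∀ i, 0 < t i) →
      Measure.map (fun ω (i : Fin n) => Θ (c * t i) ω) P
        = Measure.map (fun ω (i : Fin n) => Θ (t i) ω) P)
    (g : S → ℝ) (hg : Measurable g) (h0 : ∀ x, 0 ≤ g x) (h1 : ∀ x, g x ≤ 1)
    (n : ℕ) (t : ℝ) (ht : 0 < t) :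
    ∫ ω, (∫ s in (0:ℝ)..1, g (Θ (t * s) ω)) ^ n * g (Θ t ω) ∂P
      = ∫ ω, (∫ s in (0:ℝ)..1, g (Θ s ω)) ^ n * g (Θ 1 ω) ∂P := by
  have key : ∀ c : ℝ, ∫ ω, (∫ s in (0:ℝ)..1, g (Θ (c * s) ω)) ^ n * g (Θ c ω) ∂P
      = ∫ s : Fin n → ℝ, ∫ ω, (∏ i, g (Θ (c * s i) ω)) * g (Θ c ω) ∂P
          ∂(Measure.pi fun _ : Fin n => volume.restrict (Set.Ioc (0:ℝ) 1)) := by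
    intro c
    rw [← integral_integral_swap]
    · congr 1 with ω
      rw [integral_mul_const, intervalIntegral.integral_of_le zero_le_one]
      congr 1
      have := integral_fintype_prod_eq_pow (ι := Fin n) (μ := volume.restrict (Set.Ioc (0:ℝ) 1))
        (fun s => g (Θ (c * s) ω))
      rw [this]; simp
    · apply bdd_integrable
      · have : ∀ i : Fin n, Measurable fun p : Ω × (Fin n → ℝ) => g (Θ (c * p.2 i) p.1) := fun i =>
          hg.comp (hΘ.comp (f := fun p : Ω × (Fin n → ℝ) => (c * p.2 i, p.1)) (by fun_prop))
        have h2 : Measurable fun p : Ω × (Fin n → ℝ) => g (Θ c p.1) := 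
          hg.comp (hΘ.comp (f := fun p : Ω × (Fin n → ℝ) => (c, p.1)) (by fun_prop))
        exact (Finset.measurable_fun_prod _ fun i _ => this i).mul h2
      · intro p; exact mul_nonneg (Finset.prod_nonneg fun i _ => h0 _) (h0 _)
      · intro p; exact mul_le_one₀ (Finset.prod_le_one (fun i _ => h0 _) (fun i _ => h1 _)) (h0 _) (h1 _)
  have k1 := key 1
  simp only [one_mul] at k1
  rw [key t, k1]
  apply integral_congr_ae
  have hpos : ∀ᵐ s ∂(Measure.pi fun _ : Fin n => volume.restrict (Set.Ioc (0:ℝ) 1)), ∀ i, 0 < s i := by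
    rw [← Measure.restrict_pi_pi]
    filter_upwards [ae_restrict_mem (MeasurableSet.univ_pi fun _ => measurableSet_Ioc)] with s hs i
    exact (hs i (Set.mem_univ i)).1
  filter_upwards [hpos] with s hs
  have hm : ∀ u : ℝ, Measurable (Θ u) := fun u => hΘ.comp (f := fun ω => (u, ω)) (by fun_prop)
  have h := hss t ht (n+1) (Fin.cons 1 s) (fun i => by refine Fin.cases ?_ ?_ i <;> simp [hs])
  have hG : Measurable fun x : Fin (n+1) → S => (∏ i : Fin n, g (x i.succ)) * g (x 0) :=
    (Finset.measurable_fun_prod _ fun i _ => hg.comp (measurable_pi_apply _)).mul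
      (hg.comp (measurable_pi_apply _))
  have h' := congrArg (fun μ : Measure (Fin (n+1) → S) => ∫ x, (∏ i : Fin n, g (x i.succ)) * g (x 0) ∂μ) h
  rw [integral_map (measurable_pi_lambda _ fun i => hm _).aemeasurable hG.aestronglyMeasurable,
    integral_map (measurable_pi_lambda _ fun i => hm _).aemeasurable hG.aestronglyMeasurable] at h'
  simpa using h'

lemma moment_eq {Ω S : Type*} [MeasurableSpace Ω] [MeasurableSpace S]
    (P : Measure Ω) [IsProbabilityMeasure P]
    (Θ : ℝ → Ω → S)
    (hΘ : Measurable fun p : ℝ × Ω => Θ p.1 p.2)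
    (hss : ∀ c : ℝ, 0 < c → ∀ (n : ℕ) (t : Fin n → ℝ), (∀ i, 0 < t i) →
      Measure.map (fun ω (i : Fin n) => Θ (c * t i) ω) P
        = Measure.map (fun ω (i : Fin n) => Θ (t i) ω) P)
    (g : S → ℝ) (hg : Measurable g) (h0 : ∀ x, 0 ≤ g x) (h1 : ∀ x, g x ≤ 1)
    (n : ℕ) :
    ∫ ω, (∫ s in (0:ℝ)..1, g (Θ s ω)) ^ (n+1) ∂P
      = ∫ ω, (∫ s in (0:ℝ)..1, g (Θ s ω)) ^ n * g (Θ 1 ω) ∂P := by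
  have hX : Measurable fun p : Ω × ℝ => g (Θ p.2 p.1) := hg.comp (hΘ.comp measurable_swap)
  have hMb : ∀ t ω, 0 ≤ (∫ s in (0:ℝ)..1, g (Θ (t*s) ω)) ∧ (∫ s in (0:ℝ)..1, g (Θ (t*s) ω)) ≤ 1 := by
    intro t ω
    rw [intervalIntegral.integral_of_le zero_le_one]
    refine ⟨integral_nonneg fun _ => h0 _, ?_⟩
    have hm : Measurable fun s => g (Θ (t*s) ω) :=
      hX.comp (f := fun s => (ω, t*s)) (by fun_prop)
    refine (integral_mono (bdd_integrable _ _ hm (fun _ => h0 _) (fun _ => h1 _))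
      (integrable_const 1) (fun _ => h1 _)).trans ?_
    simp
  have e1 : ∀ ω, (∫ s in (0:ℝ)..1, g (Θ s ω)) ^ (n+1) = ∫ t in Set.Ioc (0:ℝ) 1,
      ((n:ℝ)+1) * t^n * ((∫ s in (0:ℝ)..1, g (Θ (t*s) ω)) ^ n * g (Θ t ω)) := by
    intro ω
    rw [pow_ftc (fun s => g (Θ s ω)) (hX.comp (f := fun s => (ω, s)) (by fun_prop))
      (fun _ => h0 _) (fun _ => h1 _), intervalIntegral.integral_of_le zero_le_one]
    refine integral_congr_ae (Filter.Eventually.of_forall fun t => ?_)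
    have := intervalIntegral.mul_integral_comp_mul_left (f := fun s => g (Θ s ω)) (a := 0) (b := 1) t
    simp only [mul_zero, mul_one] at this
    simp only [← this]
    ring
  simp_rw [e1]
  rw [integral_integral_swap]
  · have e2 : ∀ t ∈ Set.Ioc (0:ℝ) 1, ∫ ω, ((n:ℝ)+1) * t^n * ((∫ s in (0:ℝ)..1, g (Θ (t*s) ω)) ^ n * g (Θ t ω)) ∂P
       = ((n:ℝ)+1) * t^n * ∫ ω, (∫ s in (0:ℝ)..1, g (Θ s ω)) ^ n * g (Θ 1 ω) ∂P := by
      intro t ht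
      rw [integral_const_mul, moment_scale P Θ hΘ hss g hg h0 h1 n t ht.1]
    rw [setIntegral_congr_fun measurableSet_Ioc e2, integral_mul_const,
      ← intervalIntegral.integral_of_le zero_le_one, intervalIntegral.integral_const_mul, integral_pow]
    have : (n:ℝ)+1 ≠ 0 := by positivity
    field_simp
    simp
  · have hb : Integrable (fun p : Ω × ℝ => (∫ s in (0:ℝ)..1, g (Θ (p.2*s) p.1)) ^ n * g (Θ p.2 p.1))
        (P.prod (volume.restrict (Set.Ioc (0:ℝ) 1))) := by
      apply bdd_integrable
      · refine Measurable.mul (Measurable.pow_const ?_ n) hX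
        simp_rw [intervalIntegral.integral_of_le zero_le_one]
        have : StronglyMeasurable fun q : (Ω × ℝ) × ℝ => g (Θ (q.1.2 * q.2) q.1.1) :=
          (hX.comp (f := fun q : (Ω × ℝ) × ℝ => (q.1.1, q.1.2 * q.2)) (by fun_prop)).stronglyMeasurable
        exact this.integral_prod_right.measurable
      · intro p; exact mul_nonneg (pow_nonneg (hMb _ _).1 _) (h0 _)
      · intro p; exact mul_le_one₀ (pow_le_one₀ (hMb _ _).1 (hMb _ _).2) (h0 _) (h1 _)
    refine hb.bdd_mul (f := fun p : Ω × ℝ => ((n:ℝ)+1) * p.2^n) (c := n+1)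
      (by fun_prop) ?_
    have hmem : ∀ᵐ p ∂(P.prod (volume.restrict (Set.Ioc (0:ℝ) 1))), p.2 ∈ Set.Ioc (0:ℝ) 1 :=
      Measure.quasiMeasurePreserving_snd.ae (ae_restrict_mem measurableSet_Ioc)
    filter_upwards [hmem] with p hp
    rw [Real.norm_eq_abs, abs_of_nonneg (mul_nonneg (by positivity) (pow_nonneg hp.1.le _))]
    exact mul_le_of_le_one_right (by positivity) (pow_le_one₀ hp.1.le hp.2)

lemma set_eq {Ω : Type*} [MeasurableSpace Ω] (P : Measure Ω) [IsProbabilityMeasure P]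
    (M Y : Ω → ℝ) (hM : Measurable M) (hY : Measurable Y)
    (hM0 : ∀ ω, 0 ≤ M ω) (hM1 : ∀ ω, M ω ≤ 1) (hY0 : ∀ ω, 0 ≤ Y ω) (hY1 : ∀ ω, Y ω ≤ 1)
    (h : ∀ n : ℕ, ∫ ω, M ω ^ (n+1) ∂P = ∫ ω, M ω ^ n * Y ω ∂P)
    (T : Set ℝ) (hT : MeasurableSet T) :
    ∫ ω in M ⁻¹' T, M ω ∂P = ∫ ω in M ⁻¹' T, Y ω ∂P := by
  have hMi := bdd_integrable P M hM hM0 hM1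
  have hYi := bdd_integrable P Y hY hY0 hY1
  have hDi : Integrable (fun ω => M ω - Y ω) P := hMi.sub hYi
  have hD1 : ∀ ω, |M ω - Y ω| ≤ 1 := fun ω => by
    rw [abs_le]; constructor <;> linarith [hM0 ω, hM1 ω, hY0 ω, hY1 ω]
  have hpi : ∀ p : Polynomial ℝ, Integrable (fun ω => p.eval (M ω) * (M ω - Y ω)) P := by
    intro p
    obtain ⟨C, hC⟩ := (isCompact_Icc (a := (0:ℝ)) (b := 1)).exists_bound_of_continuousOn
      p.continuous.continuousOn
    exact hDi.bdd_mul (c := C) (p.continuous.measurable.comp hM).aestronglyMeasurable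
      (Filter.Eventually.of_forall fun ω => hC _ ⟨hM0 ω, hM1 ω⟩)
  have hpoly : ∀ p : Polynomial ℝ, ∫ ω, p.eval (M ω) * (M ω - Y ω) ∂P = 0 := by
    intro p
    induction p using Polynomial.induction_on' with
    | add p q hp hq =>
      simp_rw [Polynomial.eval_add, add_mul]
      rw [integral_add (hpi p) (hpi q), hp, hq, add_zero]
    | monomial n a =>
      simp_rw [Polynomial.eval_monomial, mul_assoc]
      rw [integral_const_mul]
      have i1 : Integrable (fun ω => M ω ^ (n+1)) P := bdd_integrable _ _ (hM.pow_const _)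
        (fun ω => pow_nonneg (hM0 ω) _) (fun ω => pow_le_one₀ (hM0 ω) (hM1 ω))
      have i2 : Integrable (fun ω => M ω ^ n * Y ω) P := bdd_integrable _ _ ((hM.pow_const _).mul hY)
        (fun ω => mul_nonneg (pow_nonneg (hM0 ω) _) (hY0 ω))
        (fun ω => mul_le_one₀ (pow_le_one₀ (hM0 ω) (hM1 ω)) (hY0 ω) (hY1 ω))
      simp_rw [mul_sub, ← pow_succ]
      rw [integral_sub i1 i2, h n, sub_self, mul_zero]
  have hcont : ∀ f : BoundedContinuousFunction ℝ ℝ, ∫ ω, f (M ω) * (M ω - Y ω) ∂P = 0 := by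
    intro f
    have hfi : Integrable (fun ω => f (M ω) * (M ω - Y ω)) P :=
      hDi.bdd_mul (c := ‖f‖) (f.continuous.measurable.comp hM).aestronglyMeasurable
        (Filter.Eventually.of_forall fun ω => f.norm_coe_le_norm _)
    refine abs_nonpos_iff.1 (le_of_forall_pos_le_add fun ε hε => ?_)
    obtain ⟨p, hp⟩ := exists_polynomial_near_of_continuousOn 0 1 f f.continuous.continuousOn ε hε
    rw [zero_add, ← sub_zero (∫ ω, f (M ω) * (M ω - Y ω) ∂P), ← hpoly p, ← integral_sub hfi (hpi p),
      ← Real.norm_eq_abs]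
    refine (norm_integral_le_of_norm_le_const (C := ε) (Filter.Eventually.of_forall fun ω => ?_)).trans ?_
    · rw [← sub_mul, norm_mul, norm_sub_rev]
      calc _ ≤ ε * 1 := mul_le_mul (hp _ ⟨hM0 ω, hM1 ω⟩).le (hD1 ω) (abs_nonneg _) hε.le
        _ = ε := mul_one _
    · simp
  have hfin : ∀ Z : Ω → ℝ, Integrable Z P → IsFiniteMeasure (P.withDensity fun ω => ENNReal.ofReal (Z ω)) :=
    fun Z hZ => isFiniteMeasure_withDensity_ofReal hZ.2
  have := hfin M hMi
  have := hfin Y hYi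
  have hint : ∀ (Z : Ω → ℝ) (_ : Measurable Z) (_ : ∀ ω, 0 ≤ Z ω) (f : BoundedContinuousFunction ℝ ℝ),
      ∫ x, f x ∂((P.withDensity fun ω => ENNReal.ofReal (Z ω)).map M) = ∫ ω, f (M ω) * Z ω ∂P := by
    intro Z hZ hZ0 f
    rw [integral_map hM.aemeasurable f.continuous.measurable.aestronglyMeasurable,
      integral_withDensity_eq_integral_toReal_smul (by fun_prop)
        (Filter.Eventually.of_forall fun _ => ENNReal.ofReal_lt_top)]
    refine integral_congr_ae (Filter.Eventually.of_forall fun ω => ?_)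
    simp [ENNReal.toReal_ofReal (hZ0 ω), mul_comm]
  have hE : (P.withDensity fun ω => ENNReal.ofReal (M ω)).map M
      = (P.withDensity fun ω => ENNReal.ofReal (Y ω)).map M := by
    refine ext_of_forall_integral_eq_of_IsFiniteMeasure fun f => ?_
    rw [hint M hM hM0, hint Y hY hY0, ← sub_eq_zero, ← integral_sub]
    · simp_rw [← mul_sub]; exact hcont f
    all_goals
      refine Integrable.bdd_mul (c := ‖f‖) ‹_› (f.continuous.measurable.comp hM).aestronglyMeasurable
        (Filter.Eventually.of_forall fun ω => f.norm_coe_le_norm _)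
  have hE' := congrArg (fun μ => (μ T).toReal) hE
  rw [Measure.map_apply hM hT, Measure.map_apply hM hT, withDensity_apply _ (hM hT),
    withDensity_apply _ (hM hT)] at hE'
  rw [integral_eq_lintegral_of_nonneg_ae (Filter.Eventually.of_forall hM0) hM.aestronglyMeasurable,
    integral_eq_lintegral_of_nonneg_ae (Filter.Eventually.of_forall hY0) hY.aestronglyMeasurable]
  exact hE'

/-- Let `Θ : (0,∞) × Ω → S` be a jointly measurable `0`-self-similar
process with values in a measurable space `S`.  For measurable `B ⊆ S` let
`μ_Θ(B) := ∫₀¹ 1_B(Θ_t) dt`.  Then for every measurable `B`, almost surely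
`P(Θ_1 ∈ B | σ(μ_Θ(B))) = μ_Θ(B)`. -/
theorem statement1
    {Ω S : Type*} [MeasurableSpace Ω] [MeasurableSpace S]
    (P : Measure Ω) [IsProbabilityMeasure P]
    (Θ : ℝ → Ω → S)
    (hΘ : Measurable fun p : ℝ × Ω => Θ p.1 p.2)
    (hss : ∀ c : ℝ, 0 < c → ∀ (n : ℕ) (t : Fin n → ℝ), (∀ i, 0 < t i) →
      Measure.map (fun ω (i : Fin n) => Θ (c * t i) ω) P
        = Measure.map (fun ω (i : Fin n) => Θ (t i) ω) P)
    (μB : Set S → Ω → ℝ)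
    (hμB : ∀ (B : Set S) (ω : Ω),
      μB B ω = ∫ t in (0:ℝ)..1, Set.indicator B (fun _ => (1:ℝ)) (Θ t ω)) :
    ∀ B : Set S, MeasurableSet B →
      P[Set.indicator {ω | Θ 1 ω ∈ B} (fun _ => (1:ℝ))
          | MeasurableSpace.comap (μB B) inferInstance]
        =ᵐ[P] μB B := by
  intro B hB
  set g : S → ℝ := Set.indicator B (fun _ => (1:ℝ)) with hgdef
  have hg : Measurable g := measurable_const.indicator hB
  have h0 : ∀ x, 0 ≤ g x := fun x => Set.indicator_nonneg (fun _ _ => zero_le_one) x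
  have h1 : ∀ x, g x ≤ 1 := fun x => Set.indicator_le_self' (fun _ _ => zero_le_one) x
  have hX : Measurable fun p : Ω × ℝ => g (Θ p.2 p.1) := hg.comp (hΘ.comp measurable_swap)
  have hMeq : μB B = fun ω => ∫ s in (0:ℝ)..1, g (Θ s ω) := funext fun ω => hμB B ω
  have hM : Measurable (μB B) := by
    rw [hMeq]
    simp_rw [intervalIntegral.integral_of_le zero_le_one]
    exact hX.stronglyMeasurable.integral_prod_right.measurable
  have hMb : ∀ ω, 0 ≤ μB B ω ∧ μB B ω ≤ 1 := by
    intro ω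
    rw [hMeq]
    simp only
    rw [intervalIntegral.integral_of_le zero_le_one]
    refine ⟨integral_nonneg fun _ => h0 _, ?_⟩
    have hm : Measurable fun s => g (Θ s ω) :=
      hX.comp (f := fun s => (ω, s)) (by fun_prop)
    refine (integral_mono (bdd_integrable _ _ hm (fun _ => h0 _) (fun _ => h1 _))
      (integrable_const 1) (fun _ => h1 _)).trans ?_
    simp
  have hYeq : Set.indicator {ω | Θ 1 ω ∈ B} (fun _ => (1:ℝ)) = fun ω => g (Θ 1 ω) := by
    funext ω
    simp [hgdef, Set.indicator]
  have hY : Measurable fun ω => g (Θ 1 ω) := hX.comp (f := fun ω => (ω, (1:ℝ))) (by fun_prop)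
  rw [hYeq]
  symm
  refine ae_eq_condExp_of_forall_setIntegral_eq hM.comap_le
    (bdd_integrable P _ hY (fun _ => h0 _) (fun _ => h1 _))
    (fun s _ _ => (bdd_integrable P _ hM (fun ω => (hMb ω).1) (fun ω => (hMb ω).2)).integrableOn)
    ?_ (comap_measurable (μB B)).stronglyMeasurable.aestronglyMeasurable
  rintro s ⟨T, hT, rfl⟩ -
  refine set_eq P (μB B) _ hM hY (fun ω => (hMb ω).1) (fun ω => (hMb ω).2) (fun _ => h0 _)
    (fun _ => h1 _) (fun n => ?_) T hT
  rw [hMeq]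
  exact moment_eq P Θ hΘ hss g hg h0 h1 n
end

section
/- Let Y : [0,∞) × Ω → ℝ^d be a jointly measurable β-self-similar process for some β ∈ ℝ, and let C ⊆ ℝ^d be a Borel set which is a cone, i.e. for every λ > 0 and x ∈ ℝ^d one has x ∈ C if and only if λx ∈ C. Set X_t := 1_{Y_t ∈ C} and X̄_t := t⁻¹ ∫₀ᵗ X_s ds. Then for every t > 0 the pair (X_t, X̄_t) has the same joint distribution as (X_1, X̄_1), and consequently P(Y_1 ∈ C | σ(X̄_1)) = X̄_1 almost surely. -/
open MeasureTheory ProbabilityTheory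

theorem aux_char {Ω : Type*} [MeasurableSpace Ω] (μ ν : Measure Ω)
    [IsFiniteMeasure μ] [IsFiniteMeasure ν] (Z W : Ω → ℝ) (hZ : Measurable Z) (hW : Measurable W)
    (M : ℝ) (hZM : ∀ ω, |Z ω| ≤ M) (hWM : ∀ ω, |W ω| ≤ M)
    (h : ∀ k : ℕ, ∫ ω, Z ω ^ k ∂μ = ∫ ω, W ω ^ k ∂ν) :
    ∫ ω, Complex.exp (Z ω * Complex.I) ∂μ = ∫ ω, Complex.exp (W ω * Complex.I) ∂ν := by
  have key : ∀ (μ : Measure Ω) [IsFiniteMeasure μ] (Z : Ω → ℝ), Measurable Z →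
      (∀ ω, |Z ω| ≤ M) → HasSum (fun k : ℕ => (Complex.I ^ k / (k.factorial : ℂ)) *
        ((∫ ω, Z ω ^ k ∂μ : ℝ) : ℂ)) (∫ ω, Complex.exp (Z ω * Complex.I) ∂μ) := by
    intro μ _ Z hZ hZM
    have hn : ∀ (k : ℕ) ω, ‖(Complex.I ^ k / (k.factorial : ℂ)) * ((Z ω ^ k : ℝ) : ℂ)‖
        ≤ M ^ k / k.factorial := by
      intro k ω
      rw [norm_mul, norm_div, norm_pow, Complex.norm_I, one_pow, Complex.norm_natCast,
        Complex.norm_real, norm_pow, Real.norm_eq_abs, one_div, inv_mul_eq_div]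
      gcongr
      exact hZM ω
    have hint : ∀ k : ℕ, Integrable (fun ω => (Complex.I ^ k / (k.factorial : ℂ)) *
        ((Z ω ^ k : ℝ) : ℂ)) μ := by
      intro k
      refine Integrable.of_bound (Measurable.aestronglyMeasurable (by fun_prop)) _
        (Filter.Eventually.of_forall (hn k))
    have := hasSum_integral_of_summable_integral_norm hint (by
      refine Summable.of_nonneg_of_le (fun k => integral_nonneg fun _ => norm_nonneg _)
        (fun k => ?_) ((Real.summable_pow_div_factorial M).mul_left (μ.real Set.univ))
      calc _ ≤ ∫ _, M ^ k / k.factorial ∂μ :=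
            integral_mono (hint k).norm (integrable_const _) (hn k)
        _ = _ := by simp)
    have e1 : (fun k : ℕ => (Complex.I ^ k / (k.factorial : ℂ)) * ((∫ ω, Z ω ^ k ∂μ : ℝ) : ℂ))
        = fun k : ℕ => ∫ ω, (Complex.I ^ k / (k.factorial : ℂ)) * ((Z ω ^ k : ℝ) : ℂ) ∂μ := by
      ext k
      rw [integral_const_mul, integral_complex_ofReal]
    have e2 : ∀ ω, Complex.exp (Z ω * Complex.I)
        = ∑' k : ℕ, (Complex.I ^ k / (k.factorial : ℂ)) * ((Z ω ^ k : ℝ) : ℂ) := by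
      intro ω
      rw [Complex.exp_eq_exp_ℂ, NormedSpace.exp_eq_tsum_div]
      refine tsum_congr fun k => ?_
      push_cast
      ring
    rw [e1]
    simp_rw [e2]
    exact this
  refine (key μ Z hZ hZM).unique ?_
  simp_rw [h]
  exact key ν W hW hWM

theorem aux_map {Ω : Type*} [MeasurableSpace Ω] (μ ν : Measure Ω)
    [IsFiniteMeasure μ] [IsFiniteMeasure ν] (Z W : Ω → ℝ) (hZ : Measurable Z) (hW : Measurable W)
    (M : ℝ) (hZM : ∀ ω, |Z ω| ≤ M) (hWM : ∀ ω, |W ω| ≤ M)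
    (h : ∀ k : ℕ, ∫ ω, Z ω ^ k ∂μ = ∫ ω, W ω ^ k ∂ν) :
    μ.map Z = ν.map W := by
  apply Measure.ext_of_charFun
  ext t
  rw [charFun_apply_real, charFun_apply_real, integral_map hZ.aemeasurable
    (Measurable.aestronglyMeasurable (by fun_prop)), integral_map hW.aemeasurable
    (Measurable.aestronglyMeasurable (by fun_prop))]
  have := aux_char μ ν (fun ω => t * Z ω) (fun ω => t * W ω) (by fun_prop) (by fun_prop)
    (|t| * M) (fun ω => by rw [abs_mul]; gcongr; exact hZM ω)
    (fun ω => by rw [abs_mul]; gcongr; exact hWM ω)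
    (fun k => by simp_rw [mul_pow, integral_const_mul, h])
  simpa using this

theorem aux_path_s2 (f : ℝ → ℝ) (hf : Measurable f) (hb : ∀ x, |f x| ≤ 1) (k : ℕ) :
    ((k : ℝ) + 1) * ∫ t in (0:ℝ)..1, f t * (∫ s in (0:ℝ)..t, f s) ^ k
      = (∫ s in (0:ℝ)..1, f s) ^ (k + 1) := by
  have hint : ∀ a b, IntervalIntegrable f volume a b := fun a b =>
    (intervalIntegrable_const (c := (1:ℝ))).mono_fun hf.aestronglyMeasurable
      (Filter.Eventually.of_forall fun x => by simpa using hb x)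
  have hac := (hint 0 1).absolutelyContinuousOnInterval_intervalIntegral (c := 0) (by simp)
  have hpow : ∀ n : ℕ, AbsolutelyContinuousOnInterval
      (fun t => (∫ s in (0:ℝ)..t, f s) ^ (n+1)) 0 1 := by
    intro n
    induction n with
    | zero => simpa using hac
    | succ n ih => simpa [pow_succ _ (n+1)] using ih.fun_mul hac
  have h := (hpow k).integral_deriv_eq_sub
  simp only [intervalIntegral.integral_same, ne_eq, Nat.add_eq_zero_iff, one_ne_zero, and_false,
    not_false_eq_true, zero_pow, sub_zero] at h
  rw [← h, ← intervalIntegral.integral_const_mul]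
  apply intervalIntegral.integral_congr_ae
  filter_upwards [(hint 0 1).ae_hasDerivAt_integral] with x hx hx'
  have := (hx (Set.uIoc_subset_uIcc hx') 0 (by simp)).pow (k+1)
  have h2 := this.deriv
  simp only [Pi.pow_def] at h2
  rw [h2]
  push_cast
  ring_nf

theorem aux_moment
    {Ω : Type*} [MeasurableSpace Ω] (P : Measure Ω) [IsProbabilityMeasure P]
    {d : ℕ} (Y : ℝ → Ω → (Fin d → ℝ))
    (hY : Measurable fun p : ℝ × Ω => Y p.1 p.2)
    (β : ℝ)
    (hss : ∀ c : ℝ, 0 < c → ∀ (n : ℕ) (t : Fin n → ℝ), (∀ i, 0 ≤ t i) →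
      Measure.map (fun ω (i : Fin n) => Y (c * t i) ω) P
        = Measure.map (fun ω (i : Fin n) => (c ^ β) • Y (t i) ω) P)
    (C : Set (Fin d → ℝ)) (hC : MeasurableSet C)
    (hcone : ∀ (l : ℝ), 0 < l → ∀ x : Fin d → ℝ, x ∈ C ↔ l • x ∈ C)
    (X : ℝ → Ω → ℝ)
    (hXdef : ∀ t ω, X t ω = Set.indicator C (fun _ => (1:ℝ)) (Y t ω))
    (hXm : Measurable fun p : ℝ × Ω => X p.1 p.2)
    (hXb : ∀ t ω, |X t ω| ≤ 1)
    (t : ℝ) (ht : 0 < t) (a b : ℝ) (k : ℕ) :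
    ∫ ω, (a * X t ω + b * ∫ u in Set.Ioc (0:ℝ) 1, X (t * |u|) ω) ^ k ∂P
     = ∫ ω, (a * X 1 ω + b * ∫ u in Set.Ioc (0:ℝ) 1, X |u| ω) ^ k ∂P := by
  have hYt : ∀ t, Measurable (Y t) := fun t => hY.comp (measurable_const.prodMk measurable_id)
  have hsec : ∀ (t : ℝ) ω, Measurable fun u : ℝ => X (t * |u|) ω := fun t ω =>
    hXm.comp (f := fun u : ℝ => (t * |u|, ω)) (by fun_prop)
  have hjm : ∀ t : ℝ, Measurable fun p : ℝ × Ω => X (t * |p.1|) p.2 := fun t =>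
    hXm.comp (f := fun p : ℝ × Ω => (t * |p.1|, p.2)) (by fun_prop)
  have hXt : ∀ t : ℝ, Measurable (X t) := fun t => hXm.comp (measurable_const.prodMk measurable_id)
  have hone : ∀ t : ℝ, ∫ ω, (a * X t ω + b * ∫ u in Set.Ioc (0:ℝ) 1, X (t * |u|) ω) ^ k ∂P
      = ∫ u, ∫ ω, ∏ i : Fin k, (a * X t ω + b * X (t * |u i|) ω) ∂P
        ∂(Measure.pi fun _ : Fin k => (volume.restrict (Set.Ioc (0:ℝ) 1))) := by
    intro t
    rw [integral_integral_swap]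
    · congr 1
      ext ω
      have := integral_fintype_prod_eq_pow (ι := Fin k) (μ := volume.restrict (Set.Ioc (0:ℝ) 1))
        (fun u : ℝ => a * X t ω + b * X (t * |u|) ω)
      rw [this, integral_add (integrable_const _)]
      · rw [integral_const_mul b]; simp
      · refine Integrable.const_mul ?_ _
        exact Integrable.of_bound (hsec t ω).aestronglyMeasurable 1
          (Filter.Eventually.of_forall fun u => hXb _ _)
    · refine Integrable.of_bound (C := (|a| + |b|) ^ k) (Measurable.aestronglyMeasurable ?_)
        (Filter.Eventually.of_forall fun p => ?_)
      · refine Finset.measurable_prod _ fun i _ => ?_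
        have h1 : Measurable fun p : (Fin k → ℝ) × Ω => X t p.2 := (hXt t).comp measurable_snd
        have h2 : Measurable fun p : (Fin k → ℝ) × Ω => X (t * |p.1 i|) p.2 :=
          (hjm t).comp (f := fun p : (Fin k → ℝ) × Ω => (p.1 i, p.2)) (by fun_prop)
        exact (h1.const_mul a).add (h2.const_mul b)
      · simp only [Function.uncurry, Real.norm_eq_abs]
        rw [Finset.abs_prod]
        calc _ ≤ ∏ i : Fin k, (|a| + |b|) := by
              refine Finset.prod_le_prod (fun _ _ => abs_nonneg _) fun i _ => ?_
              refine (abs_add_le _ _).trans ?_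
              rw [abs_mul, abs_mul]
              have := hXb t p.2
              have := hXb (t * |p.1 i|) p.2
              gcongr
              · exact mul_le_of_le_one_right (abs_nonneg _) (hXb _ _)
              · exact mul_le_of_le_one_right (abs_nonneg _) (hXb _ _)
          _ = _ := by simp
  have h1 := hone 1
  simp only [one_mul] at h1
  rw [hone t, h1]
  congr 1
  ext u
  let T : Fin (k+1) → ℝ := Fin.cons 1 (fun i => |u i|)
  let ψ : (Fin d → ℝ) → ℝ := Set.indicator C (fun _ => (1:ℝ))
  have hψ : Measurable ψ := measurable_const.indicator hC
  let φ : (Fin (k+1) → Fin d → ℝ) → ℝ := fun y => ∏ i : Fin k, (a * ψ (y 0) + b * ψ (y i.succ))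
  have hφ : Measurable φ := by
    refine Finset.measurable_prod _ fun i _ => ?_
    fun_prop
  have hT : ∀ i, 0 ≤ T i := by
    intro i
    refine Fin.cases ?_ (fun i => ?_) i
    · simp [T]
    · simp [T]
  have hs := hss t ht (k+1) T hT
  have hs' := congrArg (fun μ => ∫ y, φ y ∂μ) hs
  beta_reduce at hs'
  rw [integral_map, integral_map] at hs'
  · have hψs : ∀ x, ψ ((t ^ β) • x) = ψ x := by
      intro x
      have := hcone (t ^ β) (Real.rpow_pos_of_pos ht β) x
      by_cases hx : x ∈ C
      · simp only [ψ, Set.indicator_of_mem hx, Set.indicator_of_mem (this.1 hx)]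
      · simp only [ψ, Set.indicator_of_notMem hx, Set.indicator_of_notMem (fun h => hx (this.2 h))]
    simp only [φ, hψs, T, Fin.cons_zero, Fin.cons_succ, mul_one] at hs'
    simp only [hXdef]
    exact hs'
  · exact (measurable_pi_lambda _ fun i => (hYt _).const_smul (t ^ β)).aemeasurable
  · exact hφ.aestronglyMeasurable
  · exact (measurable_pi_lambda _ fun i => hYt _).aemeasurable
  · exact hφ.aestronglyMeasurable



/-- Let `Y` be a jointly measurable `β`-self-similar process with values
in `ℝ^d` and let `C` be a Borel cone.  With `X_t := 1_{Y_t ∈ C}` and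
`X̄_t := t⁻¹ ∫₀ᵗ X_s ds`, for every `t > 0` the pair `(X_t, X̄_t)` has the same law as
`(X_1, X̄_1)`, and consequently `P(Y_1 ∈ C | σ(X̄_1)) = X̄_1` a.s. -/
theorem statement2
    {Ω : Type*} [MeasurableSpace Ω] (P : Measure Ω) [IsProbabilityMeasure P]
    {d : ℕ} (Y : ℝ → Ω → (Fin d → ℝ))
    (hY : Measurable fun p : ℝ × Ω => Y p.1 p.2)
    (β : ℝ)
    (hss : ∀ c : ℝ, 0 < c → ∀ (n : ℕ) (t : Fin n → ℝ), (∀ i, 0 ≤ t i) →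
      Measure.map (fun ω (i : Fin n) => Y (c * t i) ω) P
        = Measure.map (fun ω (i : Fin n) => (c ^ β) • Y (t i) ω) P)
    (C : Set (Fin d → ℝ)) (hC : MeasurableSet C)
    (hcone : ∀ (l : ℝ), 0 < l → ∀ x : Fin d → ℝ, x ∈ C ↔ l • x ∈ C)
    (X : ℝ → Ω → ℝ)
    (hXdef : ∀ t ω, X t ω = Set.indicator C (fun _ => (1:ℝ)) (Y t ω))
    (Xbar : ℝ → Ω → ℝ)
    (hXbar : ∀ t ω, Xbar t ω = t⁻¹ * ∫ s in (0:ℝ)..t, X s ω) :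
    (∀ t : ℝ, 0 < t →
        Measure.map (fun ω => (X t ω, Xbar t ω)) P
          = Measure.map (fun ω => (X 1 ω, Xbar 1 ω)) P) ∧
      P[Set.indicator {ω | Y 1 ω ∈ C} (fun _ => (1:ℝ))
          | MeasurableSpace.comap (Xbar 1) inferInstance]
        =ᵐ[P] Xbar 1 := by
  have hψ : Measurable (Set.indicator C (fun _ : Fin d → ℝ => (1:ℝ))) :=
    measurable_const.indicator hC
  have hXm : Measurable fun p : ℝ × Ω => X p.1 p.2 := by
    simp only [hXdef]
    exact hψ.comp hY
  have hX0 : ∀ t ω, 0 ≤ X t ω := fun t ω => by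
    rw [hXdef]; exact Set.indicator_nonneg (fun _ _ => zero_le_one) _
  have hX1 : ∀ t ω, X t ω ≤ 1 := fun t ω => by
    rw [hXdef]; exact Set.indicator_le_self' (fun _ _ => zero_le_one) _
  have hXb : ∀ t ω, |X t ω| ≤ 1 := fun t ω => by
    rw [abs_of_nonneg (hX0 t ω)]; exact hX1 t ω
  have hXt : ∀ t : ℝ, Measurable (X t) := fun t => hXm.comp (measurable_const.prodMk measurable_id)
  let B : ℝ → Ω → ℝ := fun t ω => ∫ u in Set.Ioc (0:ℝ) 1, X (t * |u|) ω
  have hBm : Measurable fun p : ℝ × Ω => B p.1 p.2 := by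
    have : Measurable fun q : (ℝ × Ω) × ℝ => X (q.1.1 * |q.2|) q.1.2 :=
      hXm.comp (f := fun q : (ℝ × Ω) × ℝ => (q.1.1 * |q.2|, q.1.2)) (by fun_prop)
    exact (this.stronglyMeasurable.integral_prod_right
      (ν := volume.restrict (Set.Ioc (0:ℝ) 1))).measurable
  have hBt : ∀ t : ℝ, Measurable (B t) := fun t => hBm.comp (measurable_const.prodMk measurable_id)
  have hB0 : ∀ t ω, 0 ≤ B t ω := fun t ω => integral_nonneg fun _ => hX0 _ _
  have hBb : ∀ t ω, |B t ω| ≤ 1 := fun t ω => by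
    have := norm_setIntegral_le_of_norm_le_const (μ := volume) (s := Set.Ioc (0:ℝ) 1)
      (f := fun u => X (t * |u|) ω) (C := 1) (by simp) (fun u _ => hXb _ _)
    simpa using this
  have hAB : ∀ t ω, 0 < t → ∫ s in (0:ℝ)..t, X s ω = t * B t ω := by
    intro t ω ht
    have h1 : B t ω = ∫ u in (0:ℝ)..1, X (t * u) ω := by
      rw [intervalIntegral.integral_of_le zero_le_one]
      refine setIntegral_congr_fun measurableSet_Ioc fun u hu => ?_
      simp only [abs_of_pos hu.1]
    rw [h1, intervalIntegral.integral_comp_mul_left (fun s => X s ω) ht.ne']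
    simp [ht.ne']
  have hXB : ∀ t, 0 < t → Xbar t = B t := by
    intro t ht
    ext ω
    rw [hXbar, hAB t ω ht, inv_mul_cancel_left₀ ht.ne']
  have part1 : ∀ t : ℝ, 0 < t → Measure.map (fun ω => (X t ω, B t ω)) P
          = Measure.map (fun ω => (X 1 ω, B 1 ω)) P := by
    intro t ht
    have hm : ∀ t, Measurable fun ω => (X t ω, B t ω) := fun t => (hXt t).prodMk (hBt t)
    have := hm t
    have := hm 1
    apply Measure.ext_of_charFunDual
    ext L
    rw [charFunDual_apply, charFunDual_apply,
      integral_map (hm t).aemeasurable (Measurable.aestronglyMeasurable (by fun_prop)),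
      integral_map (hm 1).aemeasurable (Measurable.aestronglyMeasurable (by fun_prop))]
    obtain ⟨a, b, hL⟩ : ∃ a b : ℝ, ∀ x y : ℝ, L (x, y) = a * x + b * y := by
      refine ⟨L (1, 0), L (0, 1), fun x y => ?_⟩
      have : (x, y) = x • ((1:ℝ), (0:ℝ)) + y • ((0:ℝ), (1:ℝ)) := by simp
      rw [this, map_add, map_smul, map_smul, smul_eq_mul, smul_eq_mul]
      ring
    simp only [hL]
    have hbd : ∀ t ω, |a * X t ω + b * B t ω| ≤ |a| + |b| := by
      intro t ω
      refine (abs_add_le _ _).trans ?_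
      rw [abs_mul, abs_mul]
      gcongr
      · exact mul_le_of_le_one_right (abs_nonneg _) (hXb _ _)
      · exact mul_le_of_le_one_right (abs_nonneg _) (hBb _ _)
    refine aux_char P P (fun ω => a * X t ω + b * B t ω) (fun ω => a * X 1 ω + b * B 1 ω)
      (((hXt t).const_mul a).add ((hBt t).const_mul b))
      (((hXt 1).const_mul a).add ((hBt 1).const_mul b)) (|a| + |b|) (hbd t) (hbd 1) fun k => ?_
    have := aux_moment P Y hY β hss C hC hcone X hXdef hXm hXb t ht a b k
    simp only [B, one_mul]
    exact this
  refine ⟨fun t ht => by rw [hXB t ht, hXB 1 one_pos]; exact part1 t ht, ?_⟩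
  rw [hXB 1 one_pos]
  have hmom : ∀ t, 0 < t → ∀ k : ℕ, ∫ ω, X t ω * B t ω ^ k ∂P = ∫ ω, X 1 ω * B 1 ω ^ k ∂P := by
    intro t ht k
    have h := congrArg (fun μ => ∫ y : ℝ × ℝ, y.1 * y.2 ^ k ∂μ) (part1 t ht)
    beta_reduce at h
    rwa [integral_map ((hXt t).prodMk (hBt t)).aemeasurable
        (Measurable.aestronglyMeasurable (by fun_prop)),
      integral_map ((hXt 1).prodMk (hBt 1)).aemeasurable
        (Measurable.aestronglyMeasurable (by fun_prop))] at h
  have hkey : ∀ k : ℕ, ∫ ω, X 1 ω * B 1 ω ^ k ∂P = ∫ ω, B 1 ω * B 1 ω ^ k ∂P := by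
    intro k
    have hp : ∀ ω, B 1 ω * B 1 ω ^ k
        = ((k:ℝ) + 1) * ∫ t in Set.Ioc (0:ℝ) 1, X t ω * (t * B t ω) ^ k := by
      intro ω
      have h := aux_path_s2 (fun t => X t ω) (hXm.comp (f := fun t : ℝ => (t, ω)) (by fun_prop))
        (fun t => hXb t ω) k
      rw [hAB 1 ω one_pos, one_mul] at h
      rw [← pow_succ', ← h, intervalIntegral.integral_of_le zero_le_one]
      congr 1
      refine setIntegral_congr_fun measurableSet_Ioc fun u hu => ?_
      simp only [hAB u ω hu.1]
    simp_rw [hp]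
    rw [integral_const_mul, integral_integral_swap]
    · have : ∀ t ∈ Set.Ioc (0:ℝ) 1, ∫ ω, X t ω * (t * B t ω) ^ k ∂P
          = t ^ k * ∫ ω, X 1 ω * B 1 ω ^ k ∂P := by
        intro t ht
        rw [← hmom t ht.1 k, ← integral_const_mul]
        congr 1
        ext ω
        ring
      rw [setIntegral_congr_fun measurableSet_Ioc this, integral_mul_const,
        ← intervalIntegral.integral_of_le zero_le_one, integral_pow]
      have : (k:ℝ) + 1 ≠ 0 := by positivity
      field_simp
      simp
    · refine Integrable.mono' (g := fun q : Ω × ℝ => |q.2| ^ k) ?_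
        (Measurable.aestronglyMeasurable ?_) (Filter.Eventually.of_forall fun q => ?_)
      · refine Integrable.comp_snd (μ := P) (f := fun x : ℝ => |x| ^ k)
          (ν := volume.restrict (Set.Ioc (0:ℝ) 1)) ?_
        exact ((by fun_prop : Continuous fun x : ℝ => |x| ^ k).integrableOn_Ioc)
      · have h1 : Measurable fun q : Ω × ℝ => X q.2 q.1 := hXm.comp measurable_swap
        have h2 : Measurable fun q : Ω × ℝ => B q.2 q.1 := hBm.comp measurable_swap
        exact h1.mul ((measurable_snd.mul h2).pow_const k)
      · simp only [Function.uncurry, Real.norm_eq_abs]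
        rw [abs_mul, abs_pow, abs_mul, mul_pow]
        calc _ ≤ 1 * (|q.2| ^ k * 1) := by
              gcongr
              · exact hXb _ _
              · exact pow_le_one₀ (abs_nonneg _) (hBb _ _)
          _ = _ := by ring
  have hfin : ∀ Z : Ω → ℝ, (∀ ω, |Z ω| ≤ 1) →
      IsFiniteMeasure (P.withDensity fun ω => ENNReal.ofReal (Z ω)) := by
    intro Z hZ
    refine isFiniteMeasure_withDensity ?_
    refine ne_of_lt (lt_of_le_of_lt (lintegral_mono (g := fun _ => 1) fun ω => ?_) (by simp))
    exact ENNReal.ofReal_le_one.2 ((le_abs_self _).trans (hZ ω))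
  have := hfin (X 1) (hXb 1)
  have := hfin (B 1) (hBb 1)
  have hmap := aux_map (P.withDensity fun ω => ENNReal.ofReal (X 1 ω))
    (P.withDensity fun ω => ENNReal.ofReal (B 1 ω)) (B 1) (B 1) (hBt 1) (hBt 1) 1 (hBb 1) (hBb 1)
    (fun k => by
      rw [integral_withDensity_eq_integral_toReal_smul (hXt 1).ennreal_ofReal (by simp),
        integral_withDensity_eq_integral_toReal_smul (hBt 1).ennreal_ofReal (by simp)]
      simp only [ENNReal.toReal_ofReal (hX0 _ _), ENNReal.toReal_ofReal (hB0 _ _), smul_eq_mul]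
      exact hkey k)
  have hXint : Integrable (X 1) P := Integrable.of_bound (hXt 1).aestronglyMeasurable 1
    (Filter.Eventually.of_forall (hXb 1))
  have hBint : Integrable (B 1) P := Integrable.of_bound (hBt 1).aestronglyMeasurable 1
    (Filter.Eventually.of_forall (hBb 1))
  have hXeq : Set.indicator {ω | Y 1 ω ∈ C} (fun _ => (1:ℝ)) = X 1 := by
    ext ω
    rw [hXdef]
    rfl
  rw [hXeq]
  symm
  refine ae_eq_condExp_of_forall_setIntegral_eq (hBt 1).comap_le hXint
    (fun s _ _ => hBint.integrableOn) ?_ ?_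
  · rintro s ⟨D, hD, rfl⟩ -
    have h := congrArg (fun μ => μ D) hmap
    beta_reduce at h
    rw [Measure.map_apply (hBt 1) hD, Measure.map_apply (hBt 1) hD,
      withDensity_apply _ (hBt 1 hD), withDensity_apply _ (hBt 1 hD)] at h
    rw [integral_eq_lintegral_of_nonneg_ae (Filter.Eventually.of_forall (hB0 1))
        (hBt 1).aestronglyMeasurable,
      integral_eq_lintegral_of_nonneg_ae (Filter.Eventually.of_forall (hX0 1))
        (hXt 1).aestronglyMeasurable, h]
  · exact (comap_measurable (B 1)).aestronglyMeasurable
end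

section
/- Let Y : [0,∞) × Ω → ℝ^d be a jointly measurable β-self-similar process, let C ⊆ ℝ^d be a Borel cone, and set V_t := ∫₀ᵗ 1_{Y_s ∈ C} ds. Then for every t > 0 and every bounded measurable function g : ℝ → ℝ, E[g(V_t) · 1_{Y_t ∈ C}] = t⁻¹ · E[V_t · g(V_t)]. (Equivalently, by Bayes' rule, the conditional law of V_t given the event {Y_t ∈ C} has density v/(t·P(Y_t ∈ C)) with respect to the unconditional law of V_t, whenever P(Y_t ∈ C) > 0.) -/
open MeasureTheory ProbabilityTheory

lemma aux_moments {Ω : Type*} [MeasurableSpace Ω] (P : Measure Ω) [IsProbabilityMeasure P]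
    (V W₁ W₂ : Ω → ℝ) (hV : Measurable V) (h1 : Measurable W₁) (h2 : Measurable W₂)
    (t : ℝ) (hVt : ∀ ω, V ω ∈ Set.Icc 0 t)
    (hW₁ : ∀ ω, W₁ ω ∈ Set.Icc (0:ℝ) 1) (hW₂ : ∀ ω, W₂ ω ∈ Set.Icc (0:ℝ) 1)
    (hmom : ∀ n : ℕ, ∫ ω, V ω ^ n * W₁ ω ∂P = ∫ ω, V ω ^ n * W₂ ω ∂P)
    (g : ℝ → ℝ) (hg : Measurable g) :
    ∫ ω, g (V ω) * W₁ ω ∂P = ∫ ω, g (V ω) * W₂ ω ∂P := by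
  -- integrability
  have hint : ∀ (W : Ω → ℝ), Measurable W → (∀ ω, W ω ∈ Set.Icc (0:ℝ) 1) →
      ∀ f : ℝ → ℝ, Continuous f → Integrable (fun ω => f (V ω) * W ω) P := by
    intro W hW hW1 f hf
    obtain ⟨M, hM⟩ := (isCompact_Icc (a := (0:ℝ)) (b := t)).exists_bound_of_continuousOn
      hf.continuousOn
    refine Integrable.of_bound (C := M)
      ((hf.measurable.comp hV).mul hW).aestronglyMeasurable (ae_of_all _ fun ω => ?_)
    have a := hM _ (hVt ω)
    have b := hW1 ω
    rw [norm_mul]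
    have : ‖W ω‖ ≤ 1 := by rw [Real.norm_eq_abs, abs_le]; constructor <;> linarith [b.1, b.2]
    nlinarith [norm_nonneg (W ω), norm_nonneg (f (V ω))]
  -- polynomials
  have hpoly : ∀ p : Polynomial ℝ, ∫ ω, p.eval (V ω) * W₁ ω ∂P = ∫ ω, p.eval (V ω) * W₂ ω ∂P := by
    intro p
    induction p using Polynomial.induction_on' with
    | add p q hp hq =>
      simp only [Polynomial.eval_add, add_mul]
      rw [integral_add (hint _ h1 hW₁ _ p.continuous) (hint _ h1 hW₁ _ q.continuous),
        integral_add (hint _ h2 hW₂ _ p.continuous) (hint _ h2 hW₂ _ q.continuous), hp, hq]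
    | monomial n a =>
      simp only [Polynomial.eval_monomial, mul_assoc]
      rw [integral_const_mul, integral_const_mul, hmom]
  -- continuous functions
  have hcont : ∀ f : ℝ → ℝ, Continuous f →
      ∫ ω, f (V ω) * W₁ ω ∂P = ∫ ω, f (V ω) * W₂ ω ∂P := by
    intro f hf
    have key : ∀ ε > 0, |∫ ω, f (V ω) * W₁ ω ∂P - ∫ ω, f (V ω) * W₂ ω ∂P| ≤ ε := by
      intro ε hε
      obtain ⟨p, hp⟩ := exists_polynomial_near_of_continuousOn 0 t f hf.continuousOn (ε/2)
        (by positivity)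
      have hb : ∀ (W : Ω → ℝ), Measurable W → (∀ ω, W ω ∈ Set.Icc (0:ℝ) 1) →
          |∫ ω, p.eval (V ω) * W ω ∂P - ∫ ω, f (V ω) * W ω ∂P| ≤ ε / 2 := by
        intro W hW hW1
        rw [← integral_sub (hint _ hW hW1 _ p.continuous) (hint _ hW hW1 _ hf)]
        have := norm_integral_le_of_norm_le_const (μ := P) (C := ε/2)
          (f := fun ω => p.eval (V ω) * W ω - f (V ω) * W ω) (ae_of_all _ fun ω => by
            rw [← sub_mul, norm_mul]
            have a := (hp _ (hVt ω)).le
            have b := hW1 ω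
            have : ‖W ω‖ ≤ 1 := by
              rw [Real.norm_eq_abs, abs_le]; constructor <;> linarith [b.1, b.2]
            rw [← Real.norm_eq_abs] at a
            nlinarith [norm_nonneg (W ω), norm_nonneg (p.eval (V ω) - f (V ω))])
        simpa using this
      have b1 := abs_le.1 (hb _ h1 hW₁)
      have b2 := abs_le.1 (hb _ h2 hW₂)
      have := hpoly p
      rw [abs_le]
      constructor <;> linarith [b1.1, b1.2, b2.1, b2.2]
    have := le_of_forall_pos_le_add (a := |∫ ω, f (V ω) * W₁ ω ∂P - ∫ ω, f (V ω) * W₂ ω ∂P|)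
      (b := 0) (by simpa using key)
    exact sub_eq_zero.1 (abs_nonpos_iff.1 this)
  -- measures
  have hrep : ∀ (W : Ω → ℝ), Measurable W → (∀ ω, W ω ∈ Set.Icc (0:ℝ) 1) →
      ∀ f : ℝ → ℝ, Measurable f → ∫ x, f x ∂((P.withDensity fun ω => ((W ω).toNNReal : ENNReal)).map V)
        = ∫ ω, f (V ω) * W ω ∂P := by
    intro W hW hW1 f hf
    rw [integral_map hV.aemeasurable hf.aestronglyMeasurable,
      integral_withDensity_eq_integral_smul hW.real_toNNReal]
    congr 1; ext ω
    simp [NNReal.smul_def, Real.coe_toNNReal _ (hW1 ω).1, mul_comm, (hW1 ω).1]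
  have hfin : ∀ (W : Ω → ℝ), (∀ ω, W ω ∈ Set.Icc (0:ℝ) 1) →
      IsFiniteMeasure (P.withDensity fun ω => ((W ω).toNNReal : ENNReal)) := by
    intro W hW1
    refine isFiniteMeasure_withDensity (ne_of_lt ?_)
    calc ∫⁻ ω, ((W ω).toNNReal : ENNReal) ∂P ≤ ∫⁻ ω, 1 ∂P := by
          refine lintegral_mono fun ω => ?_
          simpa using (hW1 ω).2
      _ < ⊤ := by simp
  have := hfin _ hW₁
  have := hfin _ hW₂
  have hm : (P.withDensity fun ω => ((W₁ ω).toNNReal : ENNReal)).map V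
      = (P.withDensity fun ω => ((W₂ ω).toNNReal : ENNReal)).map V := by
    apply ext_of_forall_integral_eq_of_IsFiniteMeasure
    intro f
    rw [hrep _ h1 hW₁ f f.continuous.measurable, hrep _ h2 hW₂ f f.continuous.measurable]
    exact hcont f f.continuous
  rw [← hrep _ h1 hW₁ g hg, ← hrep _ h2 hW₂ g hg, hm]

lemma aux_pow (f : ℝ → ℝ) (t : ℝ) (hf : IntervalIntegrable f volume 0 t) (n : ℕ) :
    (∫ s in (0:ℝ)..t, f s) ^ (n+1)
      = (n+1) * ∫ s in (0:ℝ)..t, (∫ u in (0:ℝ)..s, f u) ^ n * f s := by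
  set F : ℝ → ℝ := fun s => ∫ u in (0:ℝ)..s, f u with hF
  have hac : AbsolutelyContinuousOnInterval F 0 t :=
    hf.absolutelyContinuousOnInterval_intervalIntegral (by simp)
  have hacn : ∀ m : ℕ, AbsolutelyContinuousOnInterval (fun s => F s ^ (m+1)) 0 t := by
    intro m
    induction m with
    | zero => simpa using hac
    | succ k ih => simpa [pow_succ] using ih.fun_mul hac
  have h := (hacn n).integral_deriv_eq_sub
  have h0 : F 0 = 0 := by simp [hF]
  simp only [h0] at h
  have h' : F t ^ (n+1) = ∫ s in (0:ℝ)..t, deriv (fun s => F s ^ (n+1)) s := by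
    rw [h]; simp
  change F t ^ (n+1) = _
  rw [h', ← intervalIntegral.integral_const_mul]
  apply intervalIntegral.integral_congr_ae
  filter_upwards [hf.ae_hasDerivAt_integral] with x hx hx'
  have := (hx (Set.uIoc_subset_uIcc hx') 0 (by simp)).pow (n+1)
  have h2 := this.deriv
  change deriv (fun s => F s ^ (n+1)) x = _ at h2
  rw [h2]; push_cast; ring

lemma aux_core {Ω : Type*} [MeasurableSpace Ω] (P : Measure Ω) [IsProbabilityMeasure P]
    (X : ℝ → Ω → ℝ) (hX : Measurable fun p : ℝ × Ω => X p.1 p.2)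
    (hX1 : ∀ s ω, X s ω ∈ Set.Icc (0:ℝ) 1)
    (hss : ∀ c : ℝ, 0 < c → ∀ (n : ℕ) (t : Fin n → ℝ), (∀ i, 0 ≤ t i) →
      ∫ ω, ∏ i, X (c * t i) ω ∂P = ∫ ω, ∏ i, X (t i) ω ∂P)
    (V : ℝ → Ω → ℝ) (hV : ∀ t ω, V t ω = ∫ s in (0:ℝ)..t, X s ω)
    (t : ℝ) (ht : 0 < t) (g : ℝ → ℝ) (hg : Measurable g) :
    ∫ ω, g (V t ω) * X t ω ∂P = t⁻¹ * ∫ ω, V t ω * g (V t ω) ∂P := by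
  have hXn : ∀ s ω, ‖X s ω‖ ≤ 1 := fun s ω => by
    have b := hX1 s ω
    rw [Real.norm_eq_abs, abs_le]; constructor <;> linarith [b.1, b.2]
  have hXs : ∀ s, Measurable (X s) := fun s => hX.comp (measurable_const.prodMk measurable_id)
  have hXω : ∀ ω, Measurable (fun s => X s ω) :=
    fun ω => hX.comp (measurable_id.prodMk measurable_const)
  have hii : ∀ ω a b, IntervalIntegrable (fun s => X s ω) volume a b := fun ω a b =>
    (intervalIntegrable_const (c := (1:ℝ))).mono_fun (hXω ω).aestronglyMeasurable
      (ae_of_all _ fun s => by simpa using hXn s ω)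
  -- scaling representation
  have hVs : ∀ s ω, V s ω = s * ∫ u in Set.Ioc (0:ℝ) 1, X (s * u) ω := by
    intro s ω
    rw [hV, ← intervalIntegral.integral_of_le zero_le_one,
      intervalIntegral.mul_integral_comp_mul_left (f := fun s => X s ω)]
    simp
  have hVm : Measurable fun p : ℝ × Ω => V p.1 p.2 := by
    simp only [hVs]
    refine measurable_fst.mul ?_
    refine (StronglyMeasurable.integral_prod_right' (ν := volume.restrict (Set.Ioc (0:ℝ) 1))
      (f := fun q : (ℝ × Ω) × ℝ => X (q.1.1 * q.2) q.1.2) ?_).measurable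
    apply Measurable.stronglyMeasurable
    exact hX.comp ((measurable_fst.fst.mul measurable_snd).prodMk measurable_fst.snd)
  have hVsm : ∀ s, Measurable (V s) := fun s => hVm.comp (measurable_const.prodMk measurable_id)
  have hVb : ∀ s, 0 ≤ s → ∀ ω, V s ω ∈ Set.Icc 0 s := by
    intro s hs ω
    rw [hV]
    constructor
    · exact intervalIntegral.integral_nonneg hs fun u _ => (hX1 u ω).1
    · have := intervalIntegral.integral_mono_on hs (hii ω 0 s) intervalIntegrable_const
        (g := fun _ => (1:ℝ)) fun u _ => (hX1 u ω).2
      simpa using this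
  -- self-similar moments
  have hA : ∀ n : ℕ, ∀ s, 0 < s →
      ∫ ω, V s ω ^ n * X s ω ∂P = s ^ n * ∫ ω, V 1 ω ^ n * X 1 ω ∂P := by
    intro n
    set κ : Measure (Fin n → ℝ) := Measure.pi (fun _ => volume.restrict (Set.Ioc (0:ℝ) 1)) with hκ
    have hB : ∀ s, 0 < s → ∫ ω, V s ω ^ n * X s ω ∂P
        = s ^ n * ∫ u, ∫ ω, ∏ i, X (s * (Fin.cons 1 u : Fin (n+1) → ℝ) i) ω ∂P ∂κ := by
      intro s hs
      rw [integral_integral_swap]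
      · rw [← integral_const_mul]
        congr 1; ext ω
        rw [hVs, mul_pow, mul_assoc]
        congr 1
        have := integral_fintype_prod_eq_pow (ι := Fin n) (fun u => X (s * u) ω)
          (μ := volume.restrict (Set.Ioc (0:ℝ) 1))
        rw [Fintype.card_fin] at this
        rw [← this, mul_comm, ← integral_const_mul]
        congr 1; ext u
        simp [Fin.prod_univ_succ]
      · refine Integrable.of_bound (C := 1) ?_ (ae_of_all _ fun q => ?_)
        · apply Measurable.aestronglyMeasurable
          simp only [Function.uncurry_def]
          refine Finset.measurable_prod _ fun i _ => ?_
          refine hX.comp (Measurable.prodMk ?_ measurable_snd)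
          refine Measurable.const_mul ?_ _
          refine Fin.cases ?_ (fun j => ?_) i
          · simp
          · simp only [Fin.cons_succ]; fun_prop
        · simp only [Function.uncurry_def, norm_prod]
          exact Finset.prod_le_one (fun _ _ => norm_nonneg _) fun _ _ => hXn _ _
    intro s hs
    rw [hB s hs, hB 1 one_pos, one_pow, one_mul]
    congr 1
    apply integral_congr_ae
    have hmem : ∀ᵐ u ∂κ, ∀ i, u i ∈ Set.Ioc (0:ℝ) 1 := by
      rw [ae_all_iff]
      intro i
      exact (Measure.quasiMeasurePreserving_eval _ i).ae (ae_restrict_mem measurableSet_Ioc)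
    filter_upwards [hmem] with u hu
    simp only [one_mul]
    refine hss s hs (n+1) _ fun i => ?_
    refine Fin.cases (by simp) (fun j => ?_) i
    simpa using (hu j).1.le
  have hmom : ∀ n : ℕ, ∫ ω, V t ω ^ n * X t ω ∂P = ∫ ω, V t ω ^ n * (t⁻¹ * V t ω) ∂P := by
    intro n
    have e1 : ∀ ω, V t ω ^ (n+1) = (n+1) * ∫ s in (0:ℝ)..t, V s ω ^ n * X s ω := by
      intro ω
      have := aux_pow (fun s => X s ω) t (hii ω 0 t) n
      simpa only [← hV] using this
    have e2 : ∫ ω, V t ω ^ n * (t⁻¹ * V t ω) ∂P = t⁻¹ * ∫ ω, V t ω ^ (n+1) ∂P := by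
      rw [← integral_const_mul]; congr 1; ext ω; ring
    rw [e2]
    simp only [e1]
    rw [integral_const_mul, ← intervalIntegral_integral_swap]
    · have : ∫ s in (0:ℝ)..t, ∫ ω, V s ω ^ n * X s ω ∂P
          = ∫ s in (0:ℝ)..t, s ^ n * ∫ ω, V 1 ω ^ n * X 1 ω ∂P := by
        apply intervalIntegral.integral_congr_ae
        refine ae_of_all _ fun s hs => ?_
        rw [Set.uIoc_of_le ht.le] at hs
        exact hA n s hs.1
      rw [this, intervalIntegral.integral_mul_const, integral_pow, hA n t ht]
      have : (n:ℝ) + 1 ≠ 0 := by positivity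
      field_simp
      simp
      ring
    · have : IsFiniteMeasure (volume.restrict (Set.uIoc 0 t)) := by
        rw [Set.uIoc_of_le ht.le]; infer_instance
      refine Integrable.of_bound (C := t ^ n) ?_ ?_
      · exact ((hVm.pow_const n).mul hX).aestronglyMeasurable
      · have hm : ∀ᵐ q ∂((volume.restrict (Set.uIoc 0 t)).prod P), q.1 ∈ Set.uIoc 0 t :=
          Measure.quasiMeasurePreserving_fst.ae (ae_restrict_mem measurableSet_uIoc)
        filter_upwards [hm] with q hq
        rw [Set.uIoc_of_le ht.le] at hq
        have a := hVb q.1 hq.1.le q.2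
        simp only [Function.uncurry_def, norm_mul, norm_pow]
        have b : ‖V q.1 q.2‖ ≤ t := by
          rw [Real.norm_eq_abs, abs_of_nonneg a.1]; exact a.2.trans hq.2
        calc ‖V q.1 q.2‖ ^ n * ‖X q.1 q.2‖ ≤ t ^ n * 1 := by
              gcongr; exact hXn _ _
          _ = t ^ n := mul_one _
  have := aux_moments P (V t) (X t) (fun ω => t⁻¹ * V t ω) (hVsm t) (hXs t)
    ((hVsm t).const_mul _) t (hVb t ht.le) (hX1 t) (fun ω => by
      have a := hVb t ht.le ω
      refine ⟨mul_nonneg (by positivity) a.1, ?_⟩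
      rw [inv_mul_le_iff₀ ht]; simpa using a.2) hmom g hg
  rw [this, ← integral_const_mul]
  congr 1; ext ω; ring

/-- Let `Y` be a jointly measurable `β`-self-similar process with values
in `ℝ^d`, `C` a Borel cone, and `V_t := ∫₀ᵗ 1_{Y_s ∈ C} ds`.  Then for every `t > 0` and
every bounded measurable `g : ℝ → ℝ`,
`E[g(V_t)·1_{Y_t ∈ C}] = t⁻¹ · E[V_t · g(V_t)]`. -/
theorem statement3
    {Ω : Type*} [MeasurableSpace Ω] (P : Measure Ω) [IsProbabilityMeasure P]
    {d : ℕ} (Y : ℝ → Ω → (Fin d → ℝ))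
    (hY : Measurable fun p : ℝ × Ω => Y p.1 p.2)
    (β : ℝ)
    (hss : ∀ c : ℝ, 0 < c → ∀ (n : ℕ) (t : Fin n → ℝ), (∀ i, 0 ≤ t i) →
      Measure.map (fun ω (i : Fin n) => Y (c * t i) ω) P
        = Measure.map (fun ω (i : Fin n) => (c ^ β) • Y (t i) ω) P)
    (C : Set (Fin d → ℝ)) (hC : MeasurableSet C)
    (hcone : ∀ (l : ℝ), 0 < l → ∀ x : Fin d → ℝ, x ∈ C ↔ l • x ∈ C)
    (V : ℝ → Ω → ℝ)
    (hV : ∀ t ω, V t ω = ∫ s in (0:ℝ)..t, Set.indicator C (fun _ => (1:ℝ)) (Y s ω)) :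
    ∀ t : ℝ, 0 < t → ∀ g : ℝ → ℝ, Measurable g → (∃ M : ℝ, ∀ x, |g x| ≤ M) →
      (∫ ω, g (V t ω) * Set.indicator C (fun _ => (1:ℝ)) (Y t ω) ∂P)
        = t⁻¹ * ∫ ω, V t ω * g (V t ω) ∂P := by
  intro t ht g hg _
  have hI : Measurable (Set.indicator C (fun _ => (1:ℝ))) := measurable_const.indicator hC
  have hYs : ∀ s, Measurable (Y s) := fun s => hY.comp (measurable_const.prodMk measurable_id)
  refine aux_core P (fun s ω => Set.indicator C (fun _ => (1:ℝ)) (Y s ω)) (hI.comp hY) ?_ ?_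
    V hV t ht g hg
  · intro s ω
    by_cases h : Y s ω ∈ C <;> simp [h]
  · intro c hc n u hu
    have h := hss c hc n u hu
    have hG : Measurable fun y : Fin n → Fin d → ℝ =>
        ∏ i, Set.indicator C (fun _ => (1:ℝ)) (y i) :=
      Finset.measurable_prod _ fun i _ => hI.comp (measurable_pi_apply i)
    have h1 := integral_map (μ := P) (φ := fun ω (i : Fin n) => Y (c * u i) ω)
      (measurable_pi_lambda _ fun i => hYs _).aemeasurable hG.aestronglyMeasurable
    have h2 := integral_map (μ := P) (φ := fun ω (i : Fin n) => (c ^ β) • Y (u i) ω)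
      (measurable_pi_lambda _ fun i => (hYs (u i)).const_smul (c ^ β) :
        Measurable (fun ω (i : Fin n) => (c ^ β) • Y (u i) ω)).aemeasurable hG.aestronglyMeasurable
    rw [h] at h1
    rw [← h1, h2]
    congr 1; ext ω
    refine Finset.prod_congr rfl fun i _ => ?_
    have hh := hcone (c ^ β) (Real.rpow_pos_of_pos hc β) (Y (u i) ω)
    by_cases hc' : Y (u i) ω ∈ C
    · simp [hc', hh.1 hc']
    · simp [hc', mt hh.2 hc']
end

section
/- Let (Y_t : t ∈ ℝ) be a jointly measurable stationary real-valued process with E|Y_0| < ∞, and fix λ > 0. Define Ȳ_λ := ∫₀^∞ λ e^{−λt} Y_t dt. Then E(Y_0 | σ(Ȳ_λ)) = Ȳ_λ almost surely. -/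
open MeasureTheory ProbabilityTheory

theorem ac_comp {f Φ : ℝ → ℝ} {K : NNReal} {a b : ℝ} (hΦ : LipschitzWith K Φ)
    (hf : AbsolutelyContinuousOnInterval f a b) :
    AbsolutelyContinuousOnInterval (fun x => Φ (f x)) a b := by
  unfold AbsolutelyContinuousOnInterval at *
  apply squeeze_zero (fun t ↦ ?_) (fun t ↦ ?_) (by simpa using hf.const_mul (K : ℝ))
  · exact Finset.sum_nonneg (fun i hi ↦ by positivity)
  · rw [Finset.mul_sum]
    gcongr
    exact hΦ.dist_le_mul _ _

theorem expint (l : ℝ) (y : ℝ → ℝ) (s : ℝ) (hs : 0 ≤ s)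
    (hg : IntegrableOn (fun t => l * Real.exp (-(l * t)) * y t) (Set.Ioi 0)) :
    ∫ t in Set.Ioi (0:ℝ), l * Real.exp (-(l * t)) * y (t + s)
    = Real.exp (l * s) * ((∫ t in Set.Ioi (0:ℝ), l * Real.exp (-(l * t)) * y t)
        - ∫ t in (0:ℝ)..s, l * Real.exp (-(l * t)) * y t) := by
  have h1 : ∫ t in Set.Ioi (0:ℝ), l * Real.exp (-(l * t)) * y (t + s)
     = ∫ t in Set.Ioi (0:ℝ), Real.exp (l * s) * (l * Real.exp (-(l * (t+s))) * y (t + s)) := by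
    congr 1; ext t
    rw [show l * Real.exp (-(l * t)) * y (t + s) = l * Real.exp (l * s + -(l * (t+s))) * y (t + s) by ring_nf, Real.exp_add]
    ring
  have h2 := (measurePreserving_add_right (volume : Measure ℝ) s).setIntegral_preimage_emb
    (measurableEmbedding_addRight s) (fun t => l * Real.exp (-(l * t)) * y t) (Set.Ioi s)
  have h3 : (fun x : ℝ => x + s) ⁻¹' Set.Ioi s = Set.Ioi 0 := by ext x; simp
  rw [h3] at h2
  rw [h1, integral_const_mul, h2]
  rw [intervalIntegral.integral_Ioi_sub_Ioi hg hs |>.symm]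
  ring

theorem calc_lemma (l : ℝ) (y : ℝ → ℝ)
    (hg : IntegrableOn (fun t => l * Real.exp (-(l * t)) * y t) (Set.Ioi 0))
    (Z : ℝ → ℝ) (hZ : ∀ s, Z s = ∫ t in Set.Ioi (0:ℝ), l * Real.exp (-(l * t)) * y (t + s))
    (φ : ℝ → ℝ) (hφ : Continuous φ) (Φ : ℝ → ℝ) (K : NNReal) (hΦ : ∀ x, HasDerivAt Φ (φ x) x)
    (hL : LipschitzWith K Φ) :
    Φ (Z 1) - Φ (Z 0) = ∫ u in (0:ℝ)..1, φ (Z u) * (l * (Z u - y u)) := by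
  set g := fun t => l * Real.exp (-(l * t)) * y t with hgdef
  have hgi : IntervalIntegrable g volume 0 1 := by
    rw [intervalIntegrable_iff_integrableOn_Ioc_of_le zero_le_one]
    exact hg.mono_set Set.Ioc_subset_Ioi_self
  set I := ∫ t in Set.Ioi (0:ℝ), g t with hI
  set F : ℝ → ℝ := fun s => Real.exp (l * s) * (I - ∫ t in (0:ℝ)..s, g t) with hF
  have hZF : ∀ s, 0 ≤ s → Z s = F s := fun s hs => by
    rw [hZ, expint l y s hs hg]
  have hAC : AbsolutelyContinuousOnInterval F 0 1 := by
    apply AbsolutelyContinuousOnInterval.mul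
    · apply ContDiffOn.absolutelyContinuousOnInterval
      exact ContDiff.contDiffOn (by fun_prop)
    · apply AbsolutelyContinuousOnInterval.sub (f := fun _ => I)
      · exact ContDiffOn.absolutelyContinuousOnInterval contDiffOn_const
      · exact hgi.absolutelyContinuousOnInterval_intervalIntegral (by simp)
  have h1 := (ac_comp hL hAC).integral_deriv_eq_sub
  rw [hZF 1 zero_le_one, hZF 0 le_rfl, ← h1]
  apply intervalIntegral.integral_congr_ae
  have h2 := hgi.ae_hasDerivAt_integral
  filter_upwards [h2] with u hu huI
  rw [Set.uIoc_of_le zero_le_one] at huI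
  have hu' := hu (by rw [Set.uIcc_of_le zero_le_one]; exact ⟨huI.1.le, huI.2⟩) 0 (by simp)
  have hexp : HasDerivAt (fun s => Real.exp (l * s)) (Real.exp (l * u) * (l * 1)) u :=
    ((hasDerivAt_id u).const_mul l).exp
  have hFd : HasDerivAt F (l * (F u - y u)) u := by
    have := hexp.mul (hu'.const_sub I)
    refine this.congr_deriv ?_
    have : Real.exp (l * u) * Real.exp (-(l * u)) = 1 := by rw [← Real.exp_add]; simp
    have e1 : F u = Real.exp (l * u) * (I - ∫ t in (0:ℝ)..u, g t) := rfl
    have e2 : g u = l * Real.exp (-(l * u)) * y u := rfl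
    rw [e1, e2]
    linear_combination (-(l * y u)) * this
  rw [hZF u huI.1.le]
  exact ((hΦ (F u)).comp u hFd).deriv

theorem stat_ident {Ω : Type*} [MeasurableSpace Ω] (P : Measure Ω) 
    (Y : ℝ → Ω → ℝ)
    (hY : Measurable fun p : ℝ × Ω => Y p.1 p.2)
    (hstat : ∀ h : ℝ, ∀ (n : ℕ) (t : Fin n → ℝ),
      Measure.map (fun ω (i : Fin n) => Y (t i + h) ω) P
        = Measure.map (fun ω (i : Fin n) => Y (t i) ω) P) (s : ℝ) (n : ℕ) (τ : ℕ → ℝ) :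
    IdentDistrib (fun ω => ((∑ i ∈ Finset.range n, Y (τ i + s) ω) / n, Y s ω)) 
       (fun ω => ((∑ i ∈ Finset.range n, Y (τ i) ω) / n, Y 0 ω)) P P := by
  have hm : ∀ t, Measurable (Y t) := fun t => hY.comp (measurable_const.prodMk measurable_id)
  have h0 := hstat s (n+1) (Fin.cons 0 (fun i => τ i))
  have h1 : IdentDistrib (fun ω (i : Fin (n+1)) => Y ((Fin.cons 0 (fun i => τ i) : Fin (n+1) → ℝ) i + s) ω)
    (fun ω (i : Fin (n+1)) => Y ((Fin.cons 0 (fun i => τ i) : Fin (n+1) → ℝ) i) ω) P P :=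
    ⟨(measurable_pi_lambda _ fun i => hm _).aemeasurable, (measurable_pi_lambda _ fun i => hm _).aemeasurable, h0⟩
  have h2 := h1.comp (u := fun x : Fin (n+1) → ℝ => ((∑ i : Fin n, x i.succ) / (n:ℝ), x 0)) (by fun_prop)
  simpa [Function.comp_def, Finset.sum_range] using h2

theorem int_prod {Ω : Type*} [MeasurableSpace Ω] (P : Measure Ω) [IsProbabilityMeasure P]
    (Y : ℝ → Ω → ℝ)
    (hY : Measurable fun p : ℝ × Ω => Y p.1 p.2)
    (hid : ∀ t, IdentDistrib (Y t) (Y 0) P P)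
    (hint : Integrable (Y 0) P) (ν : Measure ℝ) [IsFiniteMeasure ν] (s : ℝ) :
    Integrable (fun p : ℝ × Ω => Y (p.1 + s) p.2) (ν.prod P) := by
  have hm : Measurable (fun p : ℝ × Ω => Y (p.1 + s) p.2) := 
    hY.comp (f := fun p : ℝ × Ω => (p.1 + s, p.2)) (by fun_prop)
  rw [integrable_prod_iff hm.aestronglyMeasurable]
  constructor
  · exact ae_of_all _ fun t => (hid (t + s)).integrable_iff.2 hint
  · have : ∀ t, ∫ ω, ‖Y (t + s) ω‖ ∂P = ∫ ω, ‖Y 0 ω‖ ∂P := fun t => 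
      ((hid (t+s)).comp measurable_norm).integral_eq
    simp only [this]
    exact integrable_const _

theorem slln_good {Ω : Type*} [MeasurableSpace Ω] (P : Measure Ω) [IsProbabilityMeasure P]
    (Y : ℝ → Ω → ℝ)
    (hY : Measurable fun p : ℝ × Ω => Y p.1 p.2)
    (hid : ∀ t, IdentDistrib (Y t) (Y 0) P P)
    (hint : Integrable (Y 0) P) (ν : Measure ℝ) [IsProbabilityMeasure ν] (s : ℝ) :
    ∀ᵐ τ ∂(Measure.infinitePi (fun _ : ℕ => ν)), ∀ᵐ ω ∂P,
      Filter.Tendsto (fun n : ℕ => (∑ i ∈ Finset.range n, Y (τ i + s) ω) / n) Filter.atTop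
        (nhds (∫ t, Y (t + s) ω ∂ν)) := by
  have hm : Measurable (fun p : ℝ × Ω => Y (p.1 + s) p.2) := 
    hY.comp (f := fun p : ℝ × Ω => (p.1 + s, p.2)) (by fun_prop)
  have hms : ∀ ω, Measurable (fun t => Y (t + s) ω) := fun ω => 
    hm.comp (measurable_id.prodMk measurable_const)
  have hI := (int_prod P Y hY hid hint ν s).prod_left_ae
  have hZ : Measurable (fun ω => ∫ t, Y (t + s) ω ∂ν) := by
    have : StronglyMeasurable (fun p : Ω × ℝ => Y (p.2 + s) p.1) := 
      (hm.comp measurable_swap).stronglyMeasurable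
    exact this.integral_prod_right.measurable
  have key : ∀ᵐ ω ∂P, ∀ᵐ τ ∂(Measure.infinitePi (fun _ : ℕ => ν)), 
      Filter.Tendsto (fun n : ℕ => (∑ i ∈ Finset.range n, Y (τ i + s) ω) / n) Filter.atTop
        (nhds (∫ t, Y (t + s) ω ∂ν)) := by
    filter_upwards [hI] with ω hω
    have mp := fun i => measurePreserving_eval_infinitePi (fun _ : ℕ => ν) i
    have := strong_law_ae_real (μ := Measure.infinitePi (fun _ : ℕ => ν)) 
      (fun i τ => Y (τ i + s) ω) ((mp 0).integrable_comp_of_integrable hω) 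
      (fun i j hij => (iIndepFun_infinitePi (P := fun _ : ℕ => ν) (X := fun _ t => Y (t + s) ω) (fun _ => hms ω)).indepFun hij)
      (fun i => ?_)
    · convert this using 4
      exact ((mp 0).hasLaw.integral_comp (f := fun t => Y (t + s) ω) (hms ω).aestronglyMeasurable).symm
    · have : IdentDistrib (Function.eval i) (Function.eval 0) (Measure.infinitePi (fun _ : ℕ => ν)) (Measure.infinitePi (fun _ : ℕ => ν)) :=
        ⟨(mp i).aemeasurable, (mp 0).aemeasurable, by rw [(mp i).map_eq, (mp 0).map_eq]⟩
      exact this.comp (hms ω)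
  rw [Measure.ae_ae_comm] at key
  · exact key
  · have h1 : ∀ n : ℕ, Measurable fun p : Ω × (ℕ → ℝ) => (∑ i ∈ Finset.range n, Y (p.2 i + s) p.1) / (n:ℝ) := by
      intro n
      refine Measurable.div_const (Finset.measurable_sum _ fun i _ => ?_) _
      exact hm.comp (f := fun p : Ω × (ℕ → ℝ) => (p.2 i, p.1)) (by fun_prop)
    have h2 : Measurable fun p : Ω × (ℕ → ℝ) => ∫ t, Y (t + s) p.1 ∂ν := hZ.comp measurable_fst
    have h3 := measurableSet_tendsto (nhds (0:ℝ)) (l := Filter.atTop) (fun n => (h1 n).sub h2)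
    convert h3 using 3
    exact tendsto_sub_nhds_zero_iff.symm

theorem pair_law {Ω : Type*} [MeasurableSpace Ω] (P : Measure Ω) [IsProbabilityMeasure P]
    (Y : ℝ → Ω → ℝ)
    (hY : Measurable fun p : ℝ × Ω => Y p.1 p.2)
    (hstat : ∀ h : ℝ, ∀ (n : ℕ) (t : Fin n → ℝ),
      Measure.map (fun ω (i : Fin n) => Y (t i + h) ω) P
        = Measure.map (fun ω (i : Fin n) => Y (t i) ω) P) 
    (hid : ∀ t, IdentDistrib (Y t) (Y 0) P P)
    (hint : Integrable (Y 0) P) (ν : Measure ℝ) [IsProbabilityMeasure ν] 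
    (Z : ℝ → Ω → ℝ) (hZ : ∀ s ω, Z s ω = ∫ t, Y (t + s) ω ∂ν)
    (hZm : ∀ s, Measurable (Z s)) (s : ℝ) :
    IdentDistrib (fun ω => (Z s ω, Y s ω)) (fun ω => (Z 0 ω, Y 0 ω)) P P := by
  have hm : ∀ t, Measurable (Y t) := fun t => hY.comp (measurable_const.prodMk measurable_id)
  obtain ⟨τ, h1, h2⟩ := ((slln_good P Y hY hid hint ν s).and (slln_good P Y hY hid hint ν 0)).exists
  simp only [← hZ] at h1 h2
  have m1 : Measurable (fun ω => (Z s ω, Y s ω)) := (hZm s).prodMk (hm s)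
  have m2 : Measurable (fun ω => (Z 0 ω, Y 0 ω)) := (hZm 0).prodMk (hm 0)
  refine ⟨m1.aemeasurable, m2.aemeasurable, ?_⟩
  have := Measure.isProbabilityMeasure_map (μ := P) m1.aemeasurable
  have := Measure.isProbabilityMeasure_map (μ := P) m2.aemeasurable
  apply ext_of_forall_integral_eq_of_IsFiniteMeasure
  intro f
  rw [integral_map m1.aemeasurable f.continuous.aestronglyMeasurable,
    integral_map m2.aemeasurable f.continuous.aestronglyMeasurable]
  have lim : ∀ (r : ℝ), (∀ᵐ ω ∂P,
      Filter.Tendsto (fun n : ℕ => (∑ i ∈ Finset.range n, Y (τ i + r) ω) / n) Filter.atTop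
        (nhds (Z r ω))) → Filter.Tendsto (fun n : ℕ => ∫ ω, f ((∑ i ∈ Finset.range n, Y (τ i + r) ω) / n, Y r ω) ∂P)
         Filter.atTop (nhds (∫ ω, f (Z r ω, Y r ω) ∂P)) := by
    intro r hr
    apply tendsto_integral_of_dominated_convergence (fun _ => ‖f‖)
    · intro n
      apply f.continuous.comp_aestronglyMeasurable
      apply Measurable.aestronglyMeasurable
      exact ((Finset.measurable_sum _ fun i _ => hm _).div_const _).prodMk (hm r)
    · exact integrable_const _
    · intro n
      exact ae_of_all _ fun ω => f.norm_coe_le_norm _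
    · filter_upwards [hr] with ω hω
      exact (f.continuous.tendsto _).comp (hω.prodMk_nhds tendsto_const_nhds)
  have l1 := lim s h1
  have l2 := lim 0 (by simpa only [add_zero] using h2)
  simp only [add_zero] at l2
  refine tendsto_nhds_unique l1 ?_
  convert l2 using 2 with n
  exact ((stat_ident P Y hY hstat s n τ).comp f.continuous.measurable).integral_eq

theorem main_orth {Ω : Type*} [MeasurableSpace Ω] (P : Measure Ω) [IsProbabilityMeasure P]
    (Y : ℝ → Ω → ℝ)
    (hY : Measurable fun p : ℝ × Ω => Y p.1 p.2)
    (hidY : ∀ t, IdentDistrib (Y t) (Y 0) P P)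
    (hint : Integrable (Y 0) P)
    (l : ℝ) (hl : 0 < l)
    (Z : ℝ → Ω → ℝ) (hZm : Measurable fun p : ℝ × Ω => Z p.1 p.2)
    (hZ : ∀ s ω, Z s ω = ∫ t in Set.Ioi (0:ℝ), l * Real.exp (-(l * t)) * Y (t + s) ω)
    (hpair : ∀ s, IdentDistrib (fun ω => (Z s ω, Y s ω)) (fun ω => (Z 0 ω, Y 0 ω)) P P)
    (hae : ∀ᵐ ω ∂P, IntegrableOn (fun t => l * Real.exp (-(l * t)) * Y t ω) (Set.Ioi 0))
    (hZint : Integrable (Z 0) P)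
    (φ : ℝ → ℝ) (hφ : Continuous φ) (C : NNReal) (hC : ∀ x, ‖φ x‖ ≤ C) :
    ∫ ω, φ (Z 0 ω) * (Z 0 ω - Y 0 ω) ∂P = 0 := by
  have hidZ : ∀ s, IdentDistrib (Z s) (Z 0) P P := fun s => (hpair s).comp measurable_fst
  let Φ : ℝ → ℝ := fun x => ∫ t in (0:ℝ)..x, φ t
  have hΦ : ∀ x, HasDerivAt Φ (φ x) x := fun x => (hφ.integral_hasStrictDerivAt 0 x).hasDerivAt
  have hL : LipschitzWith C Φ := by
    apply lipschitzWith_of_nnnorm_deriv_le (fun x => (hΦ x).differentiableAt)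
    intro x
    rw [(hΦ x).deriv]
    exact hC x
  have hΦZ : ∀ s, Integrable (fun ω => Φ (Z s ω)) P := by
    intro s
    have hs : Integrable (Z s) P := (hidZ s).integrable_iff.2 hZint
    refine (hs.norm.const_mul (C:ℝ)).mono' (hL.continuous.comp_aestronglyMeasurable hs.1) ?_
    refine ae_of_all _ fun ω => ?_
    have := hL.dist_le_mul (Z s ω) 0
    simpa [Φ] using this
  have h0 : ∫ ω, (Φ (Z 1 ω) - Φ (Z 0 ω)) ∂P = 0 := by
    rw [integral_sub (hΦZ 1) (hΦZ 0), sub_eq_zero]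
    exact ((hidZ 1).comp hL.continuous.measurable).integral_eq
  have h1 : ∫ ω, (Φ (Z 1 ω) - Φ (Z 0 ω)) ∂P
      = ∫ ω, (∫ u in Set.Ioc (0:ℝ) 1, φ (Z u ω) * (l * (Z u ω - Y u ω))) ∂P := by
    apply integral_congr_ae
    filter_upwards [hae] with ω hω
    rw [calc_lemma l (fun t => Y t ω) hω (fun s => Z s ω) (fun s => hZ s ω) φ hφ Φ C hΦ hL,
      intervalIntegral.integral_of_le zero_le_one]
  have hI : Integrable (fun p : ℝ × Ω => φ (Z p.1 p.2) * (l * (Z p.1 p.2 - Y p.1 p.2)))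
      ((volume.restrict (Set.Ioc (0:ℝ) 1)).prod P) := by
    have i1 := int_prod P Y hY hidY hint (volume.restrict (Set.Ioc (0:ℝ) 1)) 0
    have i2 := int_prod P Z hZm hidZ hZint (volume.restrict (Set.Ioc (0:ℝ) 1)) 0
    simp only [add_zero] at i1 i2
    exact ((i2.sub i1).const_mul l).bdd_mul (c := (C:ℝ))
      (hφ.measurable.comp hZm).aestronglyMeasurable (ae_of_all _ fun p => hC _)
  have h2 : ∀ u, ∫ ω, φ (Z u ω) * (l * (Z u ω - Y u ω)) ∂P
      = ∫ ω, φ (Z 0 ω) * (l * (Z 0 ω - Y 0 ω)) ∂P := fun u =>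
    ((hpair u).comp (u := fun p : ℝ × ℝ => φ p.1 * (l * (p.1 - p.2)))
      (by have := hφ.measurable; fun_prop)).integral_eq
  rw [h1, ← integral_integral_swap (f := fun u ω => φ (Z u ω) * (l * (Z u ω - Y u ω))) hI] at h0
  simp only [h2] at h0
  have h3 : ∫ ω, φ (Z 0 ω) * (l * (Z 0 ω - Y 0 ω)) ∂P
      = l * ∫ ω, φ (Z 0 ω) * (Z 0 ω - Y 0 ω) ∂P := by
    rw [← integral_const_mul]
    congr 1; ext ω; ring
  rw [h3] at h0
  simpa [hl.ne'] using h0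

theorem condExp_of_orth {Ω : Type*} [MeasurableSpace Ω] (P : Measure Ω) [IsProbabilityMeasure P]
    (Y Z : Ω → ℝ) (hYi : Integrable Y P) (hZi : Integrable Z P) (hZm : Measurable Z)
    (h : ∀ (φ : ℝ → ℝ), Continuous φ → ∀ C : NNReal, (∀ x, ‖φ x‖ ≤ C) →
      ∫ ω, φ (Z ω) * (Z ω - Y ω) ∂P = 0) :
    P[Y | MeasurableSpace.comap Z inferInstance] =ᵐ[P] Z := by
  have hle : MeasurableSpace.comap Z inferInstance ≤ (inferInstance : MeasurableSpace Ω) := hZm.comap_le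
  obtain ⟨k, hk, hkE⟩ := (stronglyMeasurable_condExp (μ := P) (f := Y)
    (m := MeasurableSpace.comap Z inferInstance)).exists_eq_measurable_comp
  have hkint : Integrable (fun ω => k (Z ω)) P := by
    have : Integrable (k ∘ Z) P := hkE ▸ integrable_condExp
    exact this
  have hfint : Integrable (fun x => x - k x) (P.map Z) := by
    rw [integrable_map_measure (by have := hk.measurable; fun_prop) hZm.aemeasurable]
    exact hZi.sub hkint
  have := Measure.isProbabilityMeasure_map (μ := P) hZm.aemeasurable
  have hz : ∀ᵐ x ∂(P.map Z), x - k x = 0 := by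
    apply ae_eq_zero_of_integral_contDiff_smul_eq_zero hfint.locallyIntegrable
    intro g hg hgs
    obtain ⟨C, hC⟩ := hgs.exists_bound_of_continuous hg.continuous
    have hC' : ∀ x, ‖g x‖ ≤ (C.toNNReal : ℝ) := fun x => (hC x).trans (Real.le_coe_toNNReal C)
    rw [integral_map hZm.aemeasurable (f := fun x => g x • (x - k x))
      (hg.continuous.aestronglyMeasurable.smul hfint.1)]
    have e := h g hg.continuous C.toNNReal hC'
    have gm : AEStronglyMeasurable (fun ω => g (Z ω)) P :=
      (hg.continuous.measurable.comp hZm).aestronglyMeasurable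
    have iZ : Integrable (fun ω => g (Z ω) * Z ω) P := hZi.bdd_mul gm (ae_of_all _ fun ω => hC' _)
    have iY : Integrable (fun ω => g (Z ω) * Y ω) P := hYi.bdd_mul gm (ae_of_all _ fun ω => hC' _)
    have ik : Integrable (fun ω => g (Z ω) * k (Z ω)) P :=
      hkint.bdd_mul gm (ae_of_all _ fun ω => hC' _)
    have hp := condExp_mul_of_stronglyMeasurable_left (μ := P)
      (m := MeasurableSpace.comap Z inferInstance) (f := fun ω => g (Z ω)) (g := Y)
      (hg.continuous.measurable.comp (comap_measurable Z)).stronglyMeasurable iY hYi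
    have e2 : ∫ ω, g (Z ω) * Y ω ∂P = ∫ ω, g (Z ω) * k (Z ω) ∂P := by
      rw [← integral_condExp hle]
      rw [hkE] at hp
      exact integral_congr_ae hp
    simp only [smul_eq_mul, mul_sub] at e ⊢
    rw [integral_sub iZ iY] at e
    rw [integral_sub iZ ik, ← e2, e]
  rw [hkE]
  filter_upwards [ae_of_ae_map hZm.aemeasurable hz] with ω hω
  simp only [Function.comp]
  linarith

/-- Let `(Y_t : t ∈ ℝ)` be a jointly measurable stationary real-valued
process with `E|Y_0| < ∞`, and fix `λ > 0`.  With `Ȳ_λ := ∫₀^∞ λ e^{−λt} Y_t dt`,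
one has `E(Y_0 | σ(Ȳ_λ)) = Ȳ_λ` a.s. -/
theorem statement8
    {Ω : Type*} [MeasurableSpace Ω] (P : Measure Ω) [IsProbabilityMeasure P]
    (Y : ℝ → Ω → ℝ)
    (hY : Measurable fun p : ℝ × Ω => Y p.1 p.2)
    (hstat : ∀ h : ℝ, ∀ (n : ℕ) (t : Fin n → ℝ),
      Measure.map (fun ω (i : Fin n) => Y (t i + h) ω) P
        = Measure.map (fun ω (i : Fin n) => Y (t i) ω) P)
    (hint : Integrable (Y 0) P)
    (l : ℝ) (hl : 0 < l)
    (Ybar : Ω → ℝ)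
    (hYbar : ∀ ω, Ybar ω = ∫ t in Set.Ioi (0:ℝ), l * Real.exp (-(l * t)) * Y t ω) :
    P[Y 0 | MeasurableSpace.comap Ybar inferInstance] =ᵐ[P] Ybar := by
  have hm : ∀ t, Measurable (Y t) := fun t => hY.comp (measurable_const.prodMk measurable_id)
  have hid : ∀ t, IdentDistrib (Y t) (Y 0) P P := fun t => by
    have := stat_ident P Y hY hstat t 0 (fun _ => 0)
    exact this.comp measurable_snd
  let d : ℝ → ENNReal := fun t => ENNReal.ofReal (l * Real.exp (-(l * t)))
  have hdm : Measurable d := by fun_prop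
  have hd0 : ∀ t, 0 ≤ l * Real.exp (-(l * t)) := fun t => by positivity
  have hdr : ∀ t, (d t).toReal = l * Real.exp (-(l * t)) := fun t => ENNReal.toReal_ofReal (hd0 t)
  have hdlt : ∀ᵐ t ∂(volume.restrict (Set.Ioi (0:ℝ))), d t < ⊤ := ae_of_all _ fun t => ENNReal.ofReal_lt_top
  let ν : Measure ℝ := (volume.restrict (Set.Ioi (0:ℝ))).withDensity d
  have hνp : IsProbabilityMeasure ν := by
    constructor
    have hi : IntegrableOn (fun t : ℝ => l * Real.exp (-(l * t))) (Set.Ioi 0) := by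
      have := (integrableOn_exp_mul_Ioi (a := -l) (by linarith) 0).const_mul l
      simpa only [neg_mul, IntegrableOn] using this
    have hv : ∫ t in Set.Ioi (0:ℝ), l * Real.exp (-(l * t)) = 1 := by
      have := integral_exp_mul_Ioi (a := -l) (by linarith) 0
      rw [integral_const_mul]
      simp only [neg_mul] at this
      rw [this]
      simp [hl.ne']
    rw [withDensity_apply _ MeasurableSet.univ, Measure.restrict_univ,
      ← ofReal_integral_eq_lintegral_ofReal hi (ae_of_all _ hd0), hv, ENNReal.ofReal_one]
  let Z : ℝ → Ω → ℝ := fun s ω => ∫ t, Y (t + s) ω ∂ν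
  have hZ : ∀ s ω, Z s ω = ∫ t in Set.Ioi (0:ℝ), l * Real.exp (-(l * t)) * Y (t + s) ω := by
    intro s ω
    simp only [Z, ν]
    rw [integral_withDensity_eq_integral_toReal_smul hdm hdlt]
    simp only [hdr, smul_eq_mul]
  have hZm : Measurable fun p : ℝ × Ω => Z p.1 p.2 := by
    have : StronglyMeasurable (fun q : (ℝ × Ω) × ℝ => Y (q.2 + q.1.1) q.1.2) :=
      (hY.comp (f := fun q : (ℝ × Ω) × ℝ => (q.2 + q.1.1, q.1.2)) (by fun_prop)).stronglyMeasurable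
    exact this.integral_prod_right.measurable
  have hZm' : ∀ s, Measurable (Z s) := fun s => hZm.comp (measurable_const.prodMk measurable_id)
  have hpair := pair_law P Y hY hstat hid hint ν Z (fun _ _ => rfl) hZm'
  have hprod := int_prod P Y hY hid hint ν 0
  have hZi : Integrable (Z 0) P := hprod.integral_prod_right
  have hae : ∀ᵐ ω ∂P, IntegrableOn (fun t => l * Real.exp (-(l * t)) * Y t ω) (Set.Ioi 0) := by
    filter_upwards [hprod.prod_left_ae] with ω hω
    simp only [add_zero, ν] at hω
    rw [integrable_withDensity_iff_integrable_smul' hdm hdlt] at hω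
    simpa only [hdr, smul_eq_mul, IntegrableOn] using hω
  have hYZ : Ybar = Z 0 := by
    funext ω
    rw [hYbar, hZ]
    simp only [add_zero]
  rw [hYZ]
  exact condExp_of_orth P (Y 0) (Z 0) hint hZi (hZm' 0) fun φ hφ C hC =>
    main_orth P Y hY hid hint l hl Z hZm hZ hpair hae hZi φ hφ C hC
end

section
/- Let F be a probability distribution on [0, ∞) admitting a density with respect to Lebesgue measure. Then the following are equivalent: (i) for every probability space and every jointly measurable stationary real-valued process (Y_t : t ∈ ℝ) with E|Y_0| < ∞, setting Ȳ_F := ∫₀^∞ Y_t dF(t), one has E(Y_0 | σ(Ȳ_F)) = Ȳ_F almost surely; (ii) F is the exponential distribution with density λ e^{−λt} on (0, ∞) for some λ ∈ (0, ∞). -/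
open MeasureTheory ProbabilityTheory

def S9Cond (F : Measure ℝ) : Prop :=
  ∀ (Ω : Type) (_ : MeasurableSpace Ω) (P : Measure Ω), IsProbabilityMeasure P →
        ∀ Y : ℝ → Ω → ℝ, (Measurable fun p : ℝ × Ω => Y p.1 p.2) →
        (∀ h : ℝ, ∀ (n : ℕ) (t : Fin n → ℝ),
          Measure.map (fun ω (i : Fin n) => Y (t i + h) ω) P
            = Measure.map (fun ω (i : Fin n) => Y (t i) ω) P) →
        Integrable (Y 0) P →
        ∀ YbarF : Ω → ℝ, (∀ ω, YbarF ω = ∫ t, Y t ω ∂F) →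
          P[Y 0 | MeasurableSpace.comap YbarF inferInstance] =ᵐ[P] YbarF

abbrev S9T : Type := UnitAddCircle × UnitAddCircle

instance s9_inst0 : IsProbabilityMeasure (volume : Measure UnitAddCircle) :=
  ⟨UnitAddCircle.measure_univ⟩

instance s9_inst1 : IsProbabilityMeasure (volume : Measure S9T) :=
  inferInstanceAs (IsProbabilityMeasure
    ((volume : Measure UnitAddCircle).prod (volume : Measure UnitAddCircle)))

instance s9_inst2 : (volume : Measure S9T).IsAddRightInvariant :=
  inferInstanceAs (Measure.IsAddRightInvariant
    ((volume : Measure UnitAddCircle).prod (volume : Measure UnitAddCircle)))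

lemma s9_int (g : S9T → ℝ) (hg : Continuous g) : Integrable g := by
  exact hg.integrable_of_hasCompactSupport (HasCompactSupport.of_compactSpace g)

lemma s9_contA (F : Measure ℝ) [IsProbabilityMeasure F] (v : ℝ → S9T) (hv : Continuous v)
    (p : S9T → ℝ) (hp : Continuous p) : Continuous (fun x => ∫ t, p (x + v t) ∂F) := by
  obtain ⟨C, hC⟩ := (isCompact_range hp).isBounded.exists_norm_le
  refine continuous_of_dominated (bound := fun _ => C) ?_ ?_ (integrable_const _) ?_
  · intro x
    exact (Continuous.aestronglyMeasurable (by fun_prop))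
  · intro x
    exact Filter.Eventually.of_forall fun t => hC _ ⟨_, rfl⟩
  · exact Filter.Eventually.of_forall fun t => by fun_prop

lemma s9_intF (F : Measure ℝ) [IsProbabilityMeasure F] (v : ℝ → S9T) (hv : Continuous v)
    (p : S9T → ℝ) (hp : Continuous p) (x : S9T) : Integrable (fun t => p (x + v t)) F := by
  obtain ⟨C, hC⟩ := (isCompact_range hp).isBounded.exists_norm_le
  refine Integrable.of_bound (Continuous.aestronglyMeasurable (by fun_prop)) C ?_
  exact Filter.Eventually.of_forall fun t => hC _ ⟨_, rfl⟩

lemma s9_cubic (F : Measure ℝ) [IsProbabilityMeasure F] (hi : S9Cond F) (v : ℝ → S9T)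
    (hv : Continuous v) (hadd : ∀ t h, v (t + h) = v t + v h) (p : S9T → ℝ) (hp : Continuous p) :
    ∫ x, (∫ t, p (x + v t) ∂F) ^ 2 * (p x - ∫ t, p (x + v t) ∂F) = 0 := by
  have hc := s9_contA F v hv p hp
  have hv0 : v 0 = 0 := by simpa using hadd 0 0
  set A : S9T → ℝ := fun x => ∫ t, p (x + v t) ∂F with hA
  have key := hi S9T inferInstance volume inferInstance (fun t x => p (x + v t))
    (by 
      apply Continuous.measurable
      fun_prop) ?_ (s9_int _ (by fun_prop)) A (fun _ => rfl)
  · have hle : MeasurableSpace.comap A inferInstance ≤ (inferInstance : MeasurableSpace S9T) :=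
      hc.measurable.comap_le
    have hAm : StronglyMeasurable[MeasurableSpace.comap A inferInstance] (fun x => A x ^ 2) := by
      apply Measurable.stronglyMeasurable
      exact (Measurable.pow_const (comap_measurable A) 2)
    simp only [hv0, add_zero] at key
    have h1 := condExp_mul_of_stronglyMeasurable_left (μ := (volume : Measure S9T)) (g := p) hAm
      (s9_int _ (by fun_prop)) (s9_int _ (by fun_prop))
    have h2 : ∫ x, A x ^ 2 * p x = ∫ x, A x ^ 2 * A x := by
      rw [← integral_condExp hle]
      apply integral_congr_ae
      filter_upwards [h1, key] with x hx hx2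
      have : (fun x => A x ^ 2 * p x) = (fun x => A x ^ 2) * p := rfl
      rw [this, hx, Pi.mul_apply, hx2]
    have : ∀ x, A x ^ 2 * (p x - A x) = A x ^ 2 * p x - A x ^ 2 * A x := fun x => by ring
    change ∫ x, A x ^ 2 * (p x - A x) = 0
    simp only [this]
    rw [integral_sub (s9_int _ (by fun_prop)) (s9_int _ (by fun_prop)), h2, sub_self]
  · intro h n t
    have hm : Measurable (fun (x : S9T) (i : Fin n) => p (x + v (t i))) := by
      apply Continuous.measurable; fun_prop
    have : (fun (x : S9T) (i : Fin n) => p (x + v (t i + h)))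
        = (fun (x : S9T) (i : Fin n) => p (x + v (t i))) ∘ (fun x => x + v h) := by
      funext x i
      simp only [Function.comp, hadd]
      congr 1; abel
    rw [this, ← Measure.map_map hm (by fun_prop)]
    congr 1
    exact (measurePreserving_add_right (volume : Measure S9T) (v h)).map_eq

lemma s9_tri (F : Measure ℝ) [IsProbabilityMeasure F] (hi : S9Cond F) (v : ℝ → S9T)
    (hv : Continuous v) (hadd : ∀ t h, v (t + h) = v t + v h) (p q r : S9T → ℝ)
    (hp : Continuous p) (hq : Continuous q) (hr : Continuous r) (A : (S9T → ℝ) → S9T → ℝ)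
    (hA : A = fun p x => ∫ t, p (x + v t) ∂F) :
    ∫ x, (A p x * A q x * r x + A p x * A r x * q x + A q x * A r x * p x
      - 3 * (A p x * A q x * A r x)) = 0 := by
  have K : ∀ p, Continuous p → ∫ x, (A p x)^2 * (p x - A p x) = 0 := by
    intro p hp; rw [hA]; exact s9_cubic F hi v hv hadd p hp
  have C : ∀ p, Continuous p → Continuous (A p) := by
    intro p hp; rw [hA]; exact s9_contA F v hv p hp
  have L : ∀ p q, Continuous p → Continuous q → ∀ x, A (fun x => p x + q x) x = A p x + A q x := by
    intro p q hp hq x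
    rw [hA]
    exact integral_add (s9_intF F v hv p hp x) (s9_intF F v hv q hq x)
  have I : ∀ p, Continuous p → Integrable (fun x => (A p x)^2 * (p x - A p x)) := by
    intro p hp
    have := C p hp
    exact s9_int _ (by fun_prop)
  have hpq : Continuous (fun x => p x + q x) := by fun_prop
  have hpr : Continuous (fun x => p x + r x) := by fun_prop
  have hqr : Continuous (fun x => q x + r x) := by fun_prop
  have hpqr : Continuous (fun x => (fun x => p x + q x) x + r x) := by fun_prop
  have e : ∀ x, (A p x * A q x * r x + A p x * A r x * q x + A q x * A r x * p x
      - 3 * (A p x * A q x * A r x)) = (1/2) * (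
      (A (fun x => (fun x => p x + q x) x + r x) x)^2 * ((fun x => (fun x => p x + q x) x + r x) x -  A (fun x => (fun x => p x + q x) x + r x) x)
      - (A (fun x => p x + q x) x)^2 * ((fun x => p x + q x) x - A (fun x => p x + q x) x)
      - (A (fun x => p x + r x) x)^2 * ((fun x => p x + r x) x - A (fun x => p x + r x) x)
      - (A (fun x => q x + r x) x)^2 * ((fun x => q x + r x) x - A (fun x => q x + r x) x)
      + (A p x)^2 * (p x - A p x) + (A q x)^2 * (q x - A q x) + (A r x)^2 * (r x - A r x)) := by
    intro x
    rw [L (fun x => p x + q x) r hpq hr, L p q hp hq, L p r hp hr, L q r hq hr]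
    ring
  simp_rw [e]
  rw [integral_const_mul, integral_add, integral_add, integral_add, integral_sub, integral_sub, integral_sub,
    K _ hpqr, K _ hpq, K _ hpr, K _ hqr, K _ hp, K _ hq, K _ hr]
  · simp
  all_goals
    have c1 := C _ hp
    have c2 := C _ hq
    have c3 := C _ hr
    have c4 := C _ hpq
    have c5 := C _ hpr
    have c6 := C _ hqr
    have c7 := C _ hpqr
    exact s9_int _ (by fun_prop)

lemma s9_triC (F : Measure ℝ) [IsProbabilityMeasure F] (hi : S9Cond F) (v : ℝ → S9T)
    (hv : Continuous v) (hadd : ∀ t h, v (t + h) = v t + v h) (p q r : S9T → ℂ)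
    (hp : Continuous p) (hq : Continuous q) (hr : Continuous r) (a b c : ℂ)
    (hpA : ∀ x, ∫ t, p (x + v t) ∂F = a * p x) (hqA : ∀ x, ∫ t, q (x + v t) ∂F = b * q x)
    (hrA : ∀ x, ∫ t, r (x + v t) ∂F = c * r x) (h1 : ∀ x, p x * q x * r x = 1) :
    a * b + a * c + b * c = 3 * (a * b * c) := by
  obtain ⟨A, hA⟩ : ∃ A : (S9T → ℝ) → S9T → ℝ, A = fun p x => ∫ t, p (x + v t) ∂F := ⟨_, rfl⟩
  have T := fun p q r hp hq hr => s9_tri F hi v hv hadd p q r hp hq hr A hA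
  have C : ∀ p, Continuous p → Continuous (A p) := by
    intro p hp; rw [hA]; exact s9_contA F v hv p hp
  have R : ∀ (p : S9T → ℂ) (a : ℂ), Continuous p → (∀ x, ∫ t, p (x + v t) ∂F = a * p x) → 
      ∀ x, a * p x = (A (fun x => (p x).re) x : ℂ) + Complex.I * (A (fun x => (p x).im) x : ℂ) := by
    intro p a hp h x
    have hint : Integrable (fun t => p (x + v t)) F := by
      obtain ⟨C, hC⟩ := (isCompact_range hp).isBounded.exists_norm_le
      refine Integrable.of_bound (Continuous.aestronglyMeasurable (by fun_prop)) C ?_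
      exact Filter.Eventually.of_forall fun t => hC _ ⟨_, rfl⟩
    rw [← h, hA]
    have := integral_re_add_im hint
    simp only [RCLike.re_to_complex, RCLike.im_to_complex] at this
    rw [← this, mul_comm Complex.I]
    rfl
  have D : ∀ p q r : S9T → ℝ, Continuous p → Continuous q → Continuous r → ∀ z : ℂ, 
      ∫ x, z * ((A p x * A q x * r x + A p x * A r x * q x + A q x * A r x * p x
      - 3 * (A p x * A q x * A r x) : ℝ) : ℂ) = 0 := by
    intro p q r hp hq hr z
    rw [integral_const_mul, integral_complex_ofReal, T p q r hp hq hr]; simp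
  have hp1 : Continuous (fun x => (p x).re) := by fun_prop
  have hp2 : Continuous (fun x => (p x).im) := by fun_prop
  have hq1 : Continuous (fun x => (q x).re) := by fun_prop
  have hq2 : Continuous (fun x => (q x).im) := by fun_prop
  have hr1 : Continuous (fun x => (r x).re) := by fun_prop
  have hr2 : Continuous (fun x => (r x).im) := by fun_prop
  have J : ∀ p q r : S9T → ℝ, Continuous p → Continuous q → Continuous r → ∀ z : ℂ, 
      Integrable (fun x => z * ((A p x * A q x * r x + A p x * A r x * q x + A q x * A r x * p x
      - 3 * (A p x * A q x * A r x) : ℝ) : ℂ)) := by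
    intro p q r hp hq hr z
    refine Integrable.const_mul (Integrable.ofReal ?_) _
    have c1 := C _ hp
    have c2 := C _ hq
    have c3 := C _ hr
    refine s9_int (fun x => A p x * A q x * r x + A p x * A r x * q x + A q x * A r x * p x
      - 3 * (A p x * A q x * A r x)) (by fun_prop)
  have e : ∀ x, (a * b + a * c + b * c - 3 * (a * b * c)) = 
      ∑ i : Fin 2, ∑ j : Fin 2, ∑ k : Fin 2, (Complex.I ^ (i:ℕ) * Complex.I ^ (j:ℕ) * Complex.I ^ (k:ℕ)) * 
      ((A (![fun x => (p x).re, fun x => (p x).im] i) x * A (![fun x => (q x).re, fun x => (q x).im] j) x * (![fun x => (r x).re, fun x => (r x).im] k) x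
      + A (![fun x => (p x).re, fun x => (p x).im] i) x * A (![fun x => (r x).re, fun x => (r x).im] k) x * (![fun x => (q x).re, fun x => (q x).im] j) x 
      + A (![fun x => (q x).re, fun x => (q x).im] j) x * A (![fun x => (r x).re, fun x => (r x).im] k) x * (![fun x => (p x).re, fun x => (p x).im] i) x
      - 3 * (A (![fun x => (p x).re, fun x => (p x).im] i) x * A (![fun x => (q x).re, fun x => (q x).im] j) x * A (![fun x => (r x).re, fun x => (r x).im] k) x) : ℝ) : ℂ) := by
    intro x
    have e1 := R p a hp hpA x
    have e2 := R q b hq hqA x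
    have e3 := R r c hr hrA x
    have f1 := Complex.re_add_im (p x)
    have f2 := Complex.re_add_im (q x)
    have f3 := Complex.re_add_im (r x)
    have : (a * b + a * c + b * c - 3 * (a * b * c)) = (a * p x) * (b * q x) * r x
      + (a * p x) * (c * r x) * q x + (b * q x) * (c * r x) * p x - 3 * ((a * p x) * (b * q x) * (c * r x)) := by
      linear_combination (-(a * b + a * c + b * c - 3 * (a * b * c))) * h1 x
    rw [this, e1, e2, e3]
    simp only [Fin.sum_univ_two, Matrix.cons_val_zero, Matrix.cons_val_one, Fin.val_zero, Fin.val_one]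
    generalize A (fun x => (p x).re) = A1
    generalize A (fun x => (p x).im) = A2
    generalize A (fun x => (q x).re) = A3
    generalize A (fun x => (q x).im) = A4
    generalize A (fun x => (r x).re) = A5
    generalize A (fun x => (r x).im) = A6
    push_cast
    linear_combination (-(A1 x + Complex.I * A2 x) * (A3 x + Complex.I * A4 x)) * f3
      + (-(A1 x + Complex.I * A2 x) * (A5 x + Complex.I * A6 x)) * f2
      + (-(A3 x + Complex.I * A4 x) * (A5 x + Complex.I * A6 x)) * f1
  have hP : ∀ i, Continuous (![fun x => (p x).re, fun x => (p x).im] i) := by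
    intro i; fin_cases i <;> assumption
  have hQ : ∀ i, Continuous (![fun x => (q x).re, fun x => (q x).im] i) := by
    intro i; fin_cases i <;> assumption
  have hR : ∀ i, Continuous (![fun x => (r x).re, fun x => (r x).im] i) := by
    intro i; fin_cases i <;> assumption
  have : ∫ x : S9T, (a * b + a * c + b * c - 3 * (a * b * c)) = 0 := by
    rw [integral_congr_ae (Filter.Eventually.of_forall e)]
    rw [integral_finsetSum]
    · refine Finset.sum_eq_zero fun i _ => ?_
      rw [integral_finsetSum]
      · refine Finset.sum_eq_zero fun j _ => ?_
        rw [integral_finsetSum]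
        · refine Finset.sum_eq_zero fun k _ => ?_
          exact D _ _ _ (hP i) (hQ j) (hR k) _
        · intro k _
          exact J _ _ _ (hP i) (hQ j) (hR k) _
      · intro j _
        refine integrable_finsetSum _ fun k _ => ?_
        exact J _ _ _ (hP i) (hQ j) (hR k) _
    · intro i _
      refine integrable_finsetSum _ fun j _ => integrable_finsetSum _ fun k _ => ?_
      exact J _ _ _ (hP i) (hQ j) (hR k) _
  rw [integral_const] at this
  simpa [sub_eq_zero] using this

lemma s9_charFun (F : Measure ℝ) [IsProbabilityMeasure F] (hi : S9Cond F) (a b : ℝ) :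
    charFun F a * charFun F b + charFun F a * charFun F (-(a+b)) + charFun F b * charFun F (-(a+b))
     = 3 * (charFun F a * charFun F b * charFun F (-(a+b))) := by
  have hc : ∀ a : ℝ, Continuous fun t : ℝ => ((a * t / (2 * Real.pi) : ℝ) : UnitAddCircle) := by
    intro a
    exact (AddCircle.continuous_mk' 1).comp (by fun_prop)
  have hT := AddCircle.continuous_toCircle (T := 1)
  have hT' : ∀ (x : UnitAddCircle) (a t : ℝ), ((AddCircle.toCircle (x + ((a * t / (2 * Real.pi) : ℝ) : UnitAddCircle)) : Circle) : ℂ)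
     = (AddCircle.toCircle x : ℂ) * Complex.exp (t * a * Complex.I) := by
    intro x a t
    rw [AddCircle.toCircle_add, AddCircle.toCircle_apply_mk]
    simp only [Circle.coe_mul, Circle.coe_exp]
    congr 3
    have := Real.pi_ne_zero
    push_cast
    field_simp
  refine s9_triC F hi (fun t => ((a * t / (2 * Real.pi) : ℝ), (b * t / (2 * Real.pi) : ℝ))) 
    ((hc a).prodMk (hc b)) ?_ (fun x => (AddCircle.toCircle x.1 : ℂ)) (fun x => (AddCircle.toCircle x.2 : ℂ))
    (fun x => (starRingEnd ℂ) (AddCircle.toCircle x.1 * AddCircle.toCircle x.2 : ℂ)) ?_ ?_ ?_ _ _ _ ?_ ?_ ?_ ?_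
  · intro t h
    ext
    · simp only [Prod.fst_add, ← AddCircle.coe_add]; congr 1; ring
    · simp only [Prod.snd_add, ← AddCircle.coe_add]; congr 1; ring
  · fun_prop
  · fun_prop
  · exact Complex.continuous_conj.comp (by fun_prop)
  · intro x
    simp only [Prod.fst_add, hT', integral_const_mul]
    rw [charFun_apply_real, mul_comm]
    simp_rw [mul_comm (a:ℂ)]
  · intro x
    simp only [Prod.snd_add, hT', integral_const_mul]
    rw [charFun_apply_real, mul_comm]
    simp_rw [mul_comm (b:ℂ)]
  · intro x
    have : ∀ t : ℝ, (starRingEnd ℂ) ((AddCircle.toCircle x.1 : ℂ) * Complex.exp (t * a * Complex.I) * ((AddCircle.toCircle x.2 : ℂ) * Complex.exp (t * b * Complex.I)))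
      = (starRingEnd ℂ) (AddCircle.toCircle x.1 * AddCircle.toCircle x.2 : ℂ) * Complex.exp ((-(a+b) : ℝ) * t * Complex.I) := by
      intro t
      simp only [map_mul, ← Complex.exp_conj, Complex.conj_ofReal, Complex.conj_I]
      rw [mul_mul_mul_comm, ← Complex.exp_add]
      congr 2
      push_cast
      ring
    simp only [Prod.snd_add, Prod.fst_add, hT', this, integral_const_mul]
    rw [charFun_apply_real, mul_comm]
  · intro x
    rw [Complex.mul_conj, Complex.normSq_eq_norm_sq, norm_mul, Circle.norm_coe, Circle.norm_coe]
    simp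

noncomputable def S9Exp (l : ℝ) : Measure ℝ :=
  MeasureTheory.volume.withDensity
            (Set.indicator (Set.Ioi (0:ℝ)) fun t => ENNReal.ofReal (l * Real.exp (-(l * t))))

lemma s9_exp_eq (l : ℝ) : S9Exp l = (volume.restrict (Set.Ioi (0:ℝ))).withDensity
    (fun t => ENNReal.ofReal (l * Real.exp (-(l * t)))) :=
  withDensity_indicator measurableSet_Ioi _

lemma s9_exp_integral {E : Type*} [NormedAddCommGroup E] [NormedSpace ℝ E] {l : ℝ} (hl : 0 < l)
    (g : ℝ → E) :
    ∫ t, g t ∂(S9Exp l) = ∫ t in Set.Ioi 0, (l * Real.exp (-(l * t))) • g t := by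
  rw [s9_exp_eq, integral_withDensity_eq_integral_toReal_smul (by fun_prop) (by simp)]
  refine integral_congr_ae (Filter.Eventually.of_forall fun t => ?_)
  simp only
  rw [ENNReal.toReal_ofReal (by positivity)]

lemma s9_exp_prob {l : ℝ} (hl : 0 < l) : IsProbabilityMeasure (S9Exp l) := by
  constructor
  rw [s9_exp_eq, withDensity_apply _ MeasurableSet.univ, Measure.restrict_univ,
    ← ofReal_integral_eq_lintegral_ofReal]
  · have := integral_exp_mul_Ioi (a := -l) (by linarith) 0
    rw [integral_const_mul]
    simp only [neg_mul] at this
    rw [this]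
    simp [hl.ne']
  · have := (integrableOn_exp_mul_Ioi (a := -l) (by linarith) 0)
    simp only [neg_mul] at this
    exact this.const_mul l
  · exact Filter.Eventually.of_forall fun t => by positivity

lemma s9_exp_charFun {l : ℝ} (hl : 0 < l) (x : ℝ) :
    charFun (S9Exp l) x = l / (l - Complex.I * x) := by
  rw [charFun_apply_real, s9_exp_integral hl]
  have h : (-(l:ℂ) + x * Complex.I).re < 0 := by simp [hl]
  have := integral_exp_mul_complex_Ioi h 0
  have e : ∀ t : ℝ, (l * Real.exp (-(l * t))) • Complex.exp (x * t * Complex.I)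
      = l * Complex.exp ((-(l:ℂ) + x * Complex.I) * t) := by
    intro t
    rw [Complex.real_smul]
    push_cast
    rw [mul_assoc, ← Complex.exp_add]
    congr 2
    ring
  simp_rw [e]
  rw [integral_const_mul, this]
  have h1 : (-(l:ℂ) + x * Complex.I) ≠ 0 := by
    intro h0; rw [h0] at h; simp at h
  have h2 : (l:ℂ) - Complex.I * x ≠ 0 := by
    intro h0; apply h1; linear_combination -h0
  simp only [Complex.ofReal_zero, mul_zero, Complex.exp_zero]
  rw [mul_div_assoc', div_eq_div_iff h1 h2]
  ring

lemma s9_forward (F : Measure ℝ) [IsProbabilityMeasure F] (hi : S9Cond F)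
    (hac : F ≪ volume) (hneg : F (Set.Iio 0) = 0) : ∃ l : ℝ, 0 < l ∧ F = S9Exp l := by
  have hrel := s9_charFun F hi
  have hcont : Continuous (charFun F) := continuous_charFun
  have h0 : charFun F 0 = 1 := by simp
  have hne : ∀ x, charFun F x ≠ 0 := by
    intro x hx
    have step : ∀ y, charFun F y = 0 → charFun F (y/2) = 0 := by
      intro y hy
      have h := hrel (-(y/2)) (-(y/2))
      have e : -(-(y/2) + -(y/2)) = y := by ring
      rw [e, hy] at h
      have : charFun F (-(y/2)) = 0 := by simpa using h
      rw [charFun_neg] at this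
      simpa using this
    have all : ∀ n : ℕ, charFun F (x / 2^n) = 0 := by
      intro n
      induction n with
      | zero => simpa using hx
      | succ n ih => 
        have := step _ ih
        rwa [div_div, ← pow_succ] at this
    have lim : Filter.Tendsto (fun n : ℕ => x / 2^n) Filter.atTop (nhds 0) := by
      have := (tendsto_pow_atTop_nhds_zero_of_lt_one (r := (1/2:ℝ)) (by norm_num) (by norm_num)).const_mul x
      simpa [div_eq_mul_inv] using this
    have := (hcont.tendsto 0).comp lim
    simp only [Function.comp_def, all, h0] at this
    exact zero_ne_one (tendsto_nhds_unique tendsto_const_nhds this)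
  have hG : ∀ a b, (charFun F a)⁻¹ + (charFun F b)⁻¹ + (charFun F (-(a+b)))⁻¹ = 3 := by
    intro a b
    have h := hrel a b
    have h1 := hne a
    have h2 := hne b
    have h3 := hne (-(a+b))
    field_simp
    linear_combination h
  have hGn : ∀ a, (charFun F (-a))⁻¹ = (starRingEnd ℂ) ((charFun F a)⁻¹) := by
    intro a
    rw [charFun_neg, map_inv₀]
  have hre : ∀ a, ((charFun F a)⁻¹).re = 1 := by
    intro a
    have h := hG a (-a)
    rw [hGn] at h
    have := congrArg Complex.re h
    simp only [add_neg_cancel, neg_zero, h0, Complex.add_re, Complex.conj_re, inv_one,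
      Complex.one_re] at this
    have h3 : (3:ℂ).re = 3 := rfl
    linarith
  let g : ℝ →+ ℝ := AddMonoidHom.mk' (fun a => ((charFun F a)⁻¹).im) (by
    intro a b
    have h := hG a b
    rw [hGn] at h
    have := congrArg Complex.im h
    simp only [Complex.add_im, Complex.conj_im] at this
    have h3 : (3:ℂ).im = 0 := rfl
    rw [h3] at this
    linarith)
  have hgc : Continuous g := Complex.continuous_im.comp (hcont.inv₀ hne)
  obtain ⟨k, hk⟩ : ∃ k : ℝ, ∀ x, ((charFun F x)⁻¹).im = k * x := by
    refine ⟨g 1, fun x => ?_⟩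
    have := (g.toRealLinearMap hgc).map_smul x 1
    simp only [smul_eq_mul, mul_one, AddMonoidHom.coe_toRealLinearMap] at this
    change g x = _
    rw [this, mul_comm]
  have hform : ∀ x, charFun F x = (1 + k * x * Complex.I)⁻¹ := by
    intro x
    rw [← inv_inv (charFun F x), ← Complex.re_add_im ((charFun F x)⁻¹), hre, hk]
    push_cast; rfl
  rcases lt_trichotomy k 0 with hk0 | hk0 | hk0
  · refine ⟨-1/k, by rw [neg_div, neg_pos]; exact one_div_neg.mpr hk0, ?_⟩
    have hl : 0 < -1/k := by rw [neg_div, neg_pos]; exact one_div_neg.mpr hk0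
    have := s9_exp_prob hl
    refine Measure.ext_of_charFun (funext fun x => ?_)
    rw [hform, s9_exp_charFun hl]
    have : (k:ℂ) ≠ 0 := by exact_mod_cast hk0.ne
    push_cast
    have e : (-1 / (k:ℂ) - Complex.I * x) = (-1/k) * (1 + k * x * Complex.I) := by
      field_simp; ring
    rw [e, ← div_div, div_self (by simp [this]), one_div]
  · exfalso
    have : F = Measure.dirac 0 := by
      refine Measure.ext_of_charFun (funext fun x => ?_)
      rw [hform, hk0]; simp
    have h2 : F {0} = 0 := hac (by simp)
    rw [this] at h2
    simp at h2
  · exfalso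
    have hl : 0 < 1/k := by positivity
    have := s9_exp_prob hl
    have : IsProbabilityMeasure (F.map (fun x => -x)) := Measure.isProbabilityMeasure_map (by fun_prop)
    have hE : F.map (fun x => -x) = S9Exp (1/k) := by
      refine Measure.ext_of_charFun (funext fun x => ?_)
      have e1 : charFun (F.map (fun x => -x)) x = charFun F (-x) := by
        rw [charFun_apply_real, charFun_apply_real, integral_map (by fun_prop) (by fun_prop)]
        push_cast
        simp
      rw [e1, hform, s9_exp_charFun hl]
      have : (k:ℂ) ≠ 0 := by exact_mod_cast hk0.ne'
      push_cast
      have e : (1 / (k:ℂ) - Complex.I * x) = (1/k) * (1 + k * (-x) * Complex.I) := by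
        field_simp; ring
      rw [e, ← div_div, div_self (by simp [this]), one_div]
    have h1 : S9Exp (1/k) (Set.Ioi 0) = 0 := by
      rw [← hE, Measure.map_apply (by fun_prop) measurableSet_Ioi]
      have : (fun x : ℝ => -x) ⁻¹' Set.Ioi 0 = Set.Iio 0 := by ext; simp
      rw [this, hneg]
    have h2 : S9Exp (1/k) (Set.Ioi 0)ᶜ = 0 := by
      rw [s9_exp_eq]
      apply withDensity_absolutelyContinuous
      rw [Measure.restrict_apply measurableSet_Ioi.compl, Set.compl_inter_self, measure_empty]
    have h3 : S9Exp (1/k) Set.univ = 0 := by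
      rw [← Set.union_compl_self (Set.Ioi (0:ℝ))]
      exact measure_union_null h1 h2
    rw [measure_univ] at h3
    exact one_ne_zero h3

noncomputable def S9X {Ω : Type} (F : Measure ℝ) (Y : ℝ → Ω → ℝ) (t : ℝ) (ω : Ω) : ℝ :=
  ∫ s, Y (t + s) ω ∂F

def S9Stat {Ω : Type} [MeasurableSpace Ω] (P : Measure Ω) (Y : ℝ → Ω → ℝ) : Prop :=
  ∀ h : ℝ, ∀ (n : ℕ) (t : Fin n → ℝ),
          Measure.map (fun ω (i : Fin n) => Y (t i + h) ω) P
            = Measure.map (fun ω (i : Fin n) => Y (t i) ω) P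

section
variable {Ω : Type} [MeasurableSpace Ω] {P : Measure Ω} [IsProbabilityMeasure P]
  {Y : ℝ → Ω → ℝ} {F : Measure ℝ} [IsProbabilityMeasure F]

lemma s9_measY (hY : Measurable fun p : ℝ × Ω => Y p.1 p.2) (t : ℝ) : Measurable (Y t) :=
  hY.comp (measurable_const.prodMk measurable_id)

lemma s9_id (hY : Measurable fun p : ℝ × Ω => Y p.1 p.2) (hst : S9Stat P Y) (t : ℝ) :
    IdentDistrib (Y t) (Y 0) P P := by
  refine ⟨(s9_measY hY t).aemeasurable, (s9_measY hY 0).aemeasurable, ?_⟩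
  have h := hst t 1 (fun _ => 0)
  have m : ∀ t, Measurable (fun ω (i : Fin 1) => Y t ω) := fun t =>
    measurable_pi_lambda _ fun _ => s9_measY hY t
  have h2 := congrArg (Measure.map (fun f : Fin 1 → ℝ => f 0)) h
  simp only [zero_add] at h2
  rw [Measure.map_map (by fun_prop) (m t), Measure.map_map (by fun_prop) (m 0)] at h2
  exact h2

lemma s9_intY (hY : Measurable fun p : ℝ × Ω => Y p.1 p.2) (hst : S9Stat P Y)
    (hint : Integrable (Y 0) P) (t : ℝ) : Integrable (Y t) P :=
  (s9_id hY hst t).symm.integrable_snd hint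

lemma s9_normY (hY : Measurable fun p : ℝ × Ω => Y p.1 p.2) (hst : S9Stat P Y) (t : ℝ) :
    ∫ ω, ‖Y t ω‖ ∂P = ∫ ω, ‖Y 0 ω‖ ∂P :=
  (s9_id hY hst t).norm.integral_eq

lemma s9_measS (hY : Measurable fun p : ℝ × Ω => Y p.1 p.2) (t : ℝ) :
    Measurable (fun p : ℝ × Ω => Y (t + p.1) p.2) :=
  hY.comp (by fun_prop : Measurable (fun p : ℝ × Ω => (t + p.1, p.2)))

lemma s9_prodint (hY : Measurable fun p : ℝ × Ω => Y p.1 p.2) (hst : S9Stat P Y)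
    (hint : Integrable (Y 0) P) (t : ℝ) :
    Integrable (fun p : ℝ × Ω => Y (t + p.1) p.2) (F.prod P) := by
  rw [integrable_prod_iff (s9_measS hY t).aestronglyMeasurable]
  refine ⟨Filter.Eventually.of_forall fun s => s9_intY hY hst hint (t + s), ?_⟩
  simp only [s9_normY hY hst]
  exact integrable_const _

lemma s9_measX (hY : Measurable fun p : ℝ × Ω => Y p.1 p.2) (t : ℝ) :
    Measurable (S9X F Y t) := by
  have := (s9_measS hY t).stronglyMeasurable.integral_prod_left' (μ := F)
  exact this.measurable

lemma s9_aeint (hY : Measurable fun p : ℝ × Ω => Y p.1 p.2) (hst : S9Stat P Y)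
    (hint : Integrable (Y 0) P) (t : ℝ) :
    ∀ᵐ ω ∂P, Integrable (fun s => Y (t + s) ω) F :=
  (s9_prodint (F := F) hY hst hint t).prod_left_ae

lemma s9_intX (hY : Measurable fun p : ℝ × Ω => Y p.1 p.2) (hst : S9Stat P Y)
    (hint : Integrable (Y 0) P) (t : ℝ) : Integrable (S9X F Y t) P :=
  (s9_prodint (F := F) hY hst hint t).integral_prod_right

lemma s9_slln (hY : Measurable fun p : ℝ × Ω => Y p.1 p.2) (hst : S9Stat P Y)
    (hint : Integrable (Y 0) P) (t : ℝ) :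
    ∀ᵐ s ∂(Measure.infinitePi (fun _ : ℕ => F)), ∀ᵐ ω ∂P, Filter.Tendsto
      (fun n : ℕ => (n:ℝ)⁻¹ • ∑ i ∈ Finset.range n, Y (t + s i) ω) Filter.atTop
      (nhds (S9X F Y t ω)) := by
  have hm : Measurable (S9X F Y t) := s9_measX hY t
  have hmeas : MeasurableSet {p : (ℕ → ℝ) × Ω | Filter.Tendsto
      (fun n : ℕ => (n:ℝ)⁻¹ • ∑ i ∈ Finset.range n, Y (t + p.1 i) p.2) Filter.atTop
      (nhds (S9X F Y t p.2))} := by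
    refine measurableSet_tendsto_fun (fun n => ?_) (hm.comp measurable_snd)
    refine Measurable.const_smul (M := ℝ) (Finset.measurable_fun_sum _ fun i _ => ?_) _
    exact hY.comp (by fun_prop : Measurable (fun p : (ℕ → ℝ) × Ω => (t + p.1 i, p.2)))
  rw [Measure.ae_ae_comm hmeas]
  filter_upwards [s9_aeint (F := F) hY hst hint t] with ω hω
  have mω : Measurable (fun s => Y (t + s) ω) :=
    hY.comp (by fun_prop : Measurable (fun s : ℝ => (t + s, ω)))
  have hev : ∀ i : ℕ, MeasurePreserving (fun s : ℕ → ℝ => s i) (Measure.infinitePi (fun _ : ℕ => F)) F :=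
    fun i => measurePreserving_eval_infinitePi (fun _ : ℕ => F) i
  have h := strong_law_ae (μ := Measure.infinitePi (fun _ : ℕ => F))
    (fun (i : ℕ) (s : ℕ → ℝ) => Y (t + s i) ω) ((hev 0).integrable_comp_of_integrable hω) ?_ ?_
  · have e : ∫ s, Y (t + s 0) ω ∂(Measure.infinitePi (fun _ : ℕ => F)) = S9X F Y t ω := by
      have := integral_map (hev 0).measurable.aemeasurable
        (mω.aestronglyMeasurable (μ := Measure.map (fun s : ℕ → ℝ => s 0) (Measure.infinitePi (fun _ : ℕ => F))))
      rw [← this, (hev 0).map_eq]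
      rfl
    rw [e] at h
    exact h
  · intro i j hij
    exact (iIndepFun_infinitePi (P := fun _ : ℕ => F) (X := fun (_ : ℕ) s => Y (t + s) ω)
      (fun _ => mω)).indepFun hij
  · intro i
    refine ⟨(mω.comp (measurable_pi_apply i)).aemeasurable,
      (mω.comp (measurable_pi_apply 0)).aemeasurable, ?_⟩
    have : ∀ i : ℕ, Measure.map (fun s : ℕ → ℝ => Y (t + s i) ω) (Measure.infinitePi (fun _ : ℕ => F))
        = F.map (fun s => Y (t + s) ω) := by
      intro i
      rw [← (hev i).map_eq, Measure.map_map mω (by fun_prop), (hev i).map_eq]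
      rfl
    rw [this, this]

lemma s9_joint (hY : Measurable fun p : ℝ × Ω => Y p.1 p.2) (hst : S9Stat P Y)
    (hint : Integrable (Y 0) P) (h u : ℝ) :
    IdentDistrib (fun ω => (S9X F Y h ω, Y (u + h) ω)) (fun ω => (S9X F Y 0 ω, Y u ω)) P P := by
  have hm : ∀ t, Measurable (S9X F Y t) := fun t => s9_measX hY t
  have hmY := s9_measY hY
  have hm1 : ∀ t u, Measurable (fun ω => (S9X F Y t ω, Y u ω)) := fun t u => (hm t).prodMk (hmY u)
  refine ⟨(hm1 _ _).aemeasurable, (hm1 _ _).aemeasurable, ?_⟩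
  obtain ⟨s, hs1, hs2⟩ := ((s9_slln (F := F) hY hst hint h).and (s9_slln (F := F) hY hst hint 0)).exists
  have : IsProbabilityMeasure (P.map (fun ω => (S9X F Y h ω, Y (u + h) ω))) :=
    Measure.isProbabilityMeasure_map (hm1 _ _).aemeasurable
  have : IsProbabilityMeasure (P.map (fun ω => (S9X F Y 0 ω, Y u ω))) :=
    Measure.isProbabilityMeasure_map (hm1 _ _).aemeasurable
  refine ext_of_forall_integral_eq_of_IsFiniteMeasure fun g => ?_
  rw [integral_map (hm1 _ _).aemeasurable g.continuous.aestronglyMeasurable,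
    integral_map (hm1 _ _).aemeasurable g.continuous.aestronglyMeasurable]
  have lim : ∀ h, (∀ᵐ ω ∂P, Filter.Tendsto
      (fun n : ℕ => (n:ℝ)⁻¹ • ∑ i ∈ Finset.range n, Y (h + s i) ω) Filter.atTop
      (nhds (S9X F Y h ω))) → Filter.Tendsto (fun n : ℕ => 
        ∫ ω, g ((n:ℝ)⁻¹ • ∑ i ∈ Finset.range n, Y (h + s i) ω, Y (u + h) ω) ∂P) Filter.atTop
        (nhds (∫ ω, g (S9X F Y h ω, Y (u + h) ω) ∂P)) := by
    intro h hh
    refine tendsto_integral_of_dominated_convergence (fun _ => ‖g‖) (fun n => ?_)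
      (integrable_const _) (fun n => Filter.Eventually.of_forall fun ω => g.norm_coe_le_norm _) ?_
    · refine (g.continuous.measurable.comp ?_).aestronglyMeasurable
      exact (Measurable.const_smul (M := ℝ) (Finset.measurable_fun_sum _ fun i _ => hmY _) _).prodMk (hmY _)
    · filter_upwards [hh] with ω hω
      exact (g.continuous.tendsto _).comp (hω.prodMk_nhds tendsto_const_nhds)
  have l1 := lim h hs1
  have l2 := lim 0 hs2
  rw [add_zero] at l2
  refine tendsto_nhds_unique l1 ?_
  refine l2.congr fun n => ?_
  let t : Fin (n+1) → ℝ := Fin.cons u (fun i => s i)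
  have ht := hst h (n+1) t
  let G : (Fin (n+1) → ℝ) → ℝ := fun x => g ((n:ℝ)⁻¹ • ∑ i : Fin n, x i.succ, x 0)
  have hG : Continuous G := by
    apply g.continuous.comp; fun_prop
  have e := congrArg (fun μ => ∫ x, G x ∂μ) ht
  rw [integral_map (measurable_pi_lambda _ fun _ => hmY _).aemeasurable hG.aestronglyMeasurable,
    integral_map (measurable_pi_lambda _ fun _ => hmY _).aemeasurable hG.aestronglyMeasurable] at e
  simp only [G, t, Fin.cons_succ, Fin.cons_zero] at e
  simp only [Finset.sum_range, zero_add]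
  rw [← e]
  simp only [add_comm h]

lemma s9_conv (hY : Measurable fun p : ℝ × Ω => Y p.1 p.2) (hst : S9Stat P Y)
    (hint : Integrable (Y 0) P) (φ Φ : ℝ → ℝ) (hφ : Continuous φ) (hΦ : Continuous Φ)
    (hφ1 : ∀ x, ‖φ x‖ ≤ 1) (hΦ1 : ∀ x, ‖Φ x‖ ≤ ‖x‖)
    (hc : ∀ x y, φ x * (y - x) ≤ Φ y - Φ x) (t : ℝ) :
    ∫ ω, φ (S9X F Y 0 ω) * S9X F Y t ω ∂P ≤ ∫ ω, φ (S9X F Y 0 ω) * S9X F Y 0 ω ∂P := by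
  have hm : ∀ t, Measurable (S9X F Y t) := fun t => s9_measX hY t
  have hi : ∀ t, Integrable (S9X F Y t) P := fun t => s9_intX hY hst hint t
  have i1 : ∀ t, Integrable (fun ω => φ (S9X F Y 0 ω) * S9X F Y t ω) P := by
    intro t
    refine (hi t).bdd_mul (hφ.measurable.comp (hm 0)).aestronglyMeasurable (c := 1) ?_
    exact Filter.Eventually.of_forall fun _ => hφ1 _
  have i2 : ∀ t, Integrable (fun ω => Φ (S9X F Y t ω)) P := by
    intro t
    refine (hi t).mono (hΦ.measurable.comp (hm t)).aestronglyMeasurable ?_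
    exact Filter.Eventually.of_forall fun _ => hΦ1 _
  have e : ∫ ω, Φ (S9X F Y t ω) ∂P = ∫ ω, Φ (S9X F Y 0 ω) ∂P := by
    have := ((s9_joint (F := F) hY hst hint t 0).comp (u := fun p : ℝ × ℝ => Φ p.1) (by fun_prop)).integral_eq
    exact this
  have := integral_mono ((i1 t).sub (i1 0)) ((i2 t).sub (i2 0))
    (fun ω => by
      have := hc (S9X F Y 0 ω) (S9X F Y t ω)
      simp only [Pi.sub_apply]
      linarith)
  rw [integral_sub' (i1 t) (i1 0), integral_sub' (i2 t) (i2 0), e] at this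
  linarith

end

lemma s9_det {l : ℝ} (hl : 0 < l) (y : ℝ → ℝ) (hy : Integrable (fun s => y (-1 + s)) (S9Exp l)) :
    IntegrableOn (fun u => Real.exp (-(l * u)) * y u) (Set.Ioi (-1)) ∧
    ∀ t > -1, ∫ s, y (t + s) ∂(S9Exp l) = l * Real.exp (l * t) *
      ((∫ u in Set.Ioi (-1), Real.exp (-(l * u)) * y u) - ∫ u in (-1)..t, Real.exp (-(l * u)) * y u) := by
  have hw : IntegrableOn (fun u => Real.exp (-(l * u)) * y u) (Set.Ioi (-1)) := by
    rw [s9_exp_eq, integrable_withDensity_iff_integrable_smul' (by fun_prop) (by simp)] at hy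
    have h2 : IntegrableOn (fun s => (l * Real.exp l)⁻¹ * (Real.exp (-(l * (-1+s))) * y (-1+s)) * (l * (Real.exp l) )) (Set.Ioi 0) := by
      have h3 := hy.const_mul ((l * Real.exp (-l))⁻¹)
      refine h3.congr (Filter.Eventually.of_forall fun s => ?_)
      simp only [smul_eq_mul]
      rw [ENNReal.toReal_ofReal (by positivity)]
      have : Real.exp (-(l * (-1+s))) = Real.exp (l) * Real.exp (-(l * s)) := by
        rw [← Real.exp_add]; congr 1; ring
      rw [this, Real.exp_neg l]
      have := Real.exp_pos l
      field_simp
    have h4 : IntegrableOn (fun s => (Real.exp (-(l * (-1+s))) * y (-1+s))) (Set.Ioi 0) := by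
      refine h2.congr (Filter.Eventually.of_forall fun s => ?_)
      have := Real.exp_pos l
      simp only
      field_simp
    have := (measurePreserving_add_left volume (-1:ℝ)).integrableOn_comp_preimage
      (measurableEmbedding_addLeft (-1:ℝ)) (f := fun u => Real.exp (-(l * u)) * y u) (s := Set.Ioi (-1))
    rw [← this]
    have hs : (fun x : ℝ => -1 + x) ⁻¹' Set.Ioi (-1) = Set.Ioi 0 := by ext; simp
    rw [hs]
    exact h4
  refine ⟨hw, fun t ht => ?_⟩
  rw [s9_exp_integral hl]
  have e1 : ∫ s in Set.Ioi 0, (l * Real.exp (-(l * s))) • y (t + s) =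
      l * Real.exp (l * t) * ∫ u in Set.Ioi t, Real.exp (-(l * u)) * y u := by
    have := (measurePreserving_add_left volume t).setIntegral_preimage_emb
      (measurableEmbedding_addLeft t) (fun u => Real.exp (-(l * u)) * y u) (Set.Ioi t)
    rw [← this, ← integral_const_mul]
    have hs : (fun x => t + x) ⁻¹' Set.Ioi t = Set.Ioi 0 := by ext; simp
    rw [hs]
    refine integral_congr_ae (Filter.Eventually.of_forall fun s => ?_)
    simp only [smul_eq_mul]
    have : Real.exp (-(l * (t+s))) = Real.exp (-(l * t)) * Real.exp (-(l * s)) := by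
      rw [← Real.exp_add]; congr 1; ring
    rw [this, Real.exp_neg (l * t)]
    have := Real.exp_pos (l * t)
    field_simp
  rw [e1]
  congr 1
  rw [eq_sub_iff_add_eq, intervalIntegral.integral_of_le ht.le, add_comm,
    ← setIntegral_union (by
      rw [Set.disjoint_left]; intro x hx hx2; exact absurd hx.2 (not_le.mpr hx2)) measurableSet_Ioi
      (hw.mono_set Set.Ioc_subset_Ioi_self) (hw.mono_set (Set.Ioi_subset_Ioi ht.le)),
    Set.Ioc_union_Ioi_eq_Ioi ht.le]

lemma s9_det_cont {l : ℝ} (hl : 0 < l) (y : ℝ → ℝ)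
    (hy : Integrable (fun s => y (-1 + s)) (S9Exp l)) :
    ContinuousAt (fun t => ∫ s, y (t + s) ∂(S9Exp l)) 0 := by
  obtain ⟨hw, h⟩ := s9_det hl y hy
  have hev : (fun t => ∫ s, y (t + s) ∂(S9Exp l)) =ᶠ[nhds 0] _ :=
    (Filter.eventually_of_mem (Ioi_mem_nhds (by norm_num : (-1:ℝ) < 0)) h)
  refine ContinuousAt.congr ?_ hev.symm
  have : ContinuousAt (fun t => ∫ u in (-1)..t, Real.exp (-(l * u)) * y u) 0 := by
    have := intervalIntegral.continuousOn_primitive_interval (μ := volume) (a := (-1:ℝ)) (b := 1) 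
      (f := fun u => Real.exp (-(l * u)) * y u) (by
        rw [Set.uIcc_of_le (by norm_num), integrableOn_Icc_iff_integrableOn_Ioc]
        exact hw.mono_set Set.Ioc_subset_Ioi_self)
    refine this.continuousAt ?_
    rw [Set.uIcc_of_le (by norm_num)]
    exact Icc_mem_nhds (by norm_num) (by norm_num)
  fun_prop

lemma s9_det_deriv {l : ℝ} (hl : 0 < l) (y : ℝ → ℝ) (hm : Measurable y)
    (hy : Integrable (fun s => y (-1 + s)) (S9Exp l)) (hc : ContinuousAt y 0) :
    HasDerivAt (fun t => ∫ s, y (t + s) ∂(S9Exp l)) 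
      (l * ((∫ s, y (0 + s) ∂(S9Exp l)) - y 0)) 0 := by
  obtain ⟨hw, h⟩ := s9_det hl y hy
  have hev : (fun t => ∫ s, y (t + s) ∂(S9Exp l)) =ᶠ[nhds 0] _ :=
    (Filter.eventually_of_mem (Ioi_mem_nhds (by norm_num : (-1:ℝ) < 0)) h)
  rw [h 0 (by norm_num)]
  refine HasDerivAt.congr_of_eventuallyEq ?_ hev
  have d1 : HasDerivAt (fun t => ∫ u in (-1)..t, Real.exp (-(l * u)) * y u)
      (Real.exp (-(l * 0)) * y 0) 0 := by
    refine intervalIntegral.integral_hasDerivAt_right ?_ ?_ ?_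
    · rw [intervalIntegrable_iff_integrableOn_Ioc_of_le (by norm_num)]
      exact hw.mono_set Set.Ioc_subset_Ioi_self
    · exact StronglyMeasurable.stronglyMeasurableAtFilter (Measurable.stronglyMeasurable (by fun_prop))
    · fun_prop
  have d2 : HasDerivAt (fun t => l * Real.exp (l * t)) (l * (Real.exp (l * 0) * (l * 1))) 0 :=
    (((hasDerivAt_id (0:ℝ)).const_mul l).exp).const_mul l
  have := d2.mul (d1.const_sub (∫ u in Set.Ioi (-1), Real.exp (-(l * u)) * y u))
  refine HasDerivAt.congr_deriv this ?_
  simp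
  ring

lemma s9_phi {Ω : Type} [MeasurableSpace Ω] {P : Measure Ω} [IsProbabilityMeasure P]
    {Y : ℝ → Ω → ℝ} {l : ℝ} (hl : 0 < l)
    (hY : Measurable fun p : ℝ × Ω => Y p.1 p.2) (hst : S9Stat P Y)
    (hint : Integrable (Y 0) P) (φ Φ : ℝ → ℝ) (hφ : Continuous φ) (hΦ : Continuous Φ)
    (hφ1 : ∀ x, ‖φ x‖ ≤ 1) (hΦ1 : ∀ x, ‖Φ x‖ ≤ ‖x‖)
    (hc : ∀ x y, φ x * (y - x) ≤ Φ y - Φ x) :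
    ∫ ω, φ (S9X (S9Exp l) Y 0 ω) * S9X (S9Exp l) Y 0 ω ∂P
      = ∫ ω, φ (S9X (S9Exp l) Y 0 ω) * Y 0 ω ∂P := by
  have := s9_exp_prob hl
  set F := S9Exp l with hF
  have hm : ∀ t, Measurable (S9X F Y t) := fun t => s9_measX hY t
  have hmφ : ∀ t, Measurable (fun ω => φ (S9X F Y t ω)) := fun t => hφ.measurable.comp (hm t)
  have hmax := s9_conv (F := F) hY hst hint φ Φ hφ hΦ hφ1 hΦ1 hc
  let ψ : ℝ → ℝ := fun u => ∫ ω, φ (S9X F Y 0 ω) * Y u ω ∂P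
  have hψm : Measurable ψ := by
    have : Measurable (fun p : ℝ × Ω => φ (S9X F Y 0 p.2) * Y p.1 p.2) :=
      ((hmφ 0).comp measurable_snd).mul hY
    exact (this.stronglyMeasurable.integral_prod_right' (ν := P)).measurable
  have hψb : ∀ u, ‖ψ u‖ ≤ ∫ ω, ‖Y 0 ω‖ ∂P := by
    intro u
    rw [← s9_normY hY hst u]
    refine norm_integral_le_of_norm_le (s9_intY hY hst hint u).norm
      (Filter.Eventually.of_forall fun ω => ?_)
    rw [norm_mul]
    exact mul_le_of_le_one_left (norm_nonneg _) (hφ1 _)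
  have hψc : ContinuousAt ψ 0 := by
    have e : ψ = fun u => ∫ ω, φ (S9X F Y (-u) ω) * Y 0 ω ∂P := by
      funext u
      have := ((s9_joint (F := F) hY hst hint (-u) u).comp (u := fun p : ℝ × ℝ => φ p.1 * p.2)
        (by fun_prop)).integral_eq
      simp only [Function.comp_def, add_neg_cancel] at this
      exact this.symm
    rw [e]
    refine continuousAt_of_dominated (bound := fun ω => ‖Y 0 ω‖) ?_ ?_ hint.norm ?_
    · exact Filter.Eventually.of_forall fun u =>
        ((hmφ _).mul (s9_measY hY 0)).aestronglyMeasurable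
    · refine Filter.Eventually.of_forall fun u => Filter.Eventually.of_forall fun ω => ?_
      rw [norm_mul]
      exact mul_le_of_le_one_left (norm_nonneg _) (hφ1 _)
    · filter_upwards [s9_aeint (F := F) hY hst hint (-1)] with ω hω
      have h1 := s9_det_cont hl (fun s => Y s ω) hω
      have h2 : ContinuousAt (fun u => S9X F Y (-u) ω) 0 := by
        refine ContinuousAt.comp (f := fun u : ℝ => -u) (g := fun t => S9X F Y t ω) ?_ (by fun_prop)
        rw [neg_zero]
        exact h1
      exact (hφ.continuousAt.comp h2).mul continuousAt_const
  have hψi : Integrable (fun s => ψ (-1 + s)) F :=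
    Integrable.of_bound (hψm.comp (by fun_prop)).aestronglyMeasurable _
      (Filter.Eventually.of_forall fun s => hψb _)
  have hd := s9_det_deriv hl ψ hψm hψi hψc
  have hswap : ∀ t, ∫ s, ψ (t + s) ∂F = ∫ ω, φ (S9X F Y 0 ω) * S9X F Y t ω ∂P := by
    intro t
    have hint2 : Integrable (fun p : ℝ × Ω => φ (S9X F Y 0 p.2) * Y (t + p.1) p.2) (F.prod P) := by
      refine (s9_prodint (F := F) hY hst hint t).bdd_mul
        ((hmφ 0).comp measurable_snd).aestronglyMeasurable (c := 1) ?_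
      exact Filter.Eventually.of_forall fun _ => hφ1 _
    have := integral_integral_swap (f := fun s ω => φ (S9X F Y 0 ω) * Y (t + s) ω) hint2
    refine this.trans ?_
    refine integral_congr_ae (Filter.Eventually.of_forall fun ω => ?_)
    exact integral_const_mul _ _
  have hloc : IsLocalMax (fun t => ∫ s, ψ (t + s) ∂F) 0 := by
    refine Filter.Eventually.of_forall fun t => ?_
    simp only [hswap]
    exact hmax t
  have hz := hloc.hasDerivAt_eq_zero hd
  rw [← hF, hswap 0] at hz
  rcases mul_eq_zero.mp hz with h | h
  · exact absurd h hl.ne'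
  · exact sub_eq_zero.mp h

lemma s9_mono {Ω : Type} [MeasurableSpace Ω] {P : Measure Ω} [IsProbabilityMeasure P]
    {Y : ℝ → Ω → ℝ} {l : ℝ} (hl : 0 < l)
    (hY : Measurable fun p : ℝ × Ω => Y p.1 p.2) (hst : S9Stat P Y)
    (hint : Integrable (Y 0) P) (φ : ℝ → ℝ) (hφ : Continuous φ) (hmo : Monotone φ)
    (hφ1 : ∀ x, ‖φ x‖ ≤ 1) :
    ∫ ω, φ (S9X (S9Exp l) Y 0 ω) * (S9X (S9Exp l) Y 0 ω - Y 0 ω) ∂P = 0 := by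
  have := s9_exp_prob hl
  have hii : ∀ a b, IntervalIntegrable φ volume a b := fun a b => hφ.intervalIntegrable a b
  have h := s9_phi hl hY hst hint φ (fun x => ∫ u in (0:ℝ)..x, φ u) hφ
    (intervalIntegral.continuous_primitive hii 0) hφ1 (by
      intro x
      have := intervalIntegral.norm_integral_le_of_norm_le_const (a := 0) (b := x) (f := φ) (C := 1)
        (fun u _ => hφ1 u)
      simpa using this) (by
      intro x y
      rw [intervalIntegral.integral_interval_sub_left (hii _ _) (hii _ _)]
      have hcst : φ x * (y - x) = ∫ u in x..y, φ x := by simp [mul_comm]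
      rw [hcst]
      rcases le_total x y with hxy | hxy
      · exact intervalIntegral.integral_mono_on hxy (by simp) (hii _ _) (fun u hu => hmo hu.1)
      · rw [intervalIntegral.integral_symm y x, intervalIntegral.integral_symm y x]
        apply neg_le_neg
        exact intervalIntegral.integral_mono_on hxy (hii _ _) (by simp) (fun u hu => hmo hu.2))
  have hm : Measurable (S9X (S9Exp l) Y 0) := s9_measX hY 0
  have hb : ∀ Z : Ω → ℝ, Integrable Z P → Integrable (fun ω => φ (S9X (S9Exp l) Y 0 ω) * Z ω) P := by
    intro Z hZ
    refine hZ.bdd_mul (hφ.measurable.comp hm).aestronglyMeasurable (c := 1) ?_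
    exact Filter.Eventually.of_forall fun _ => hφ1 _
  simp only [mul_sub]
  rw [integral_sub (hb _ (s9_intX hY hst hint 0)) (hb _ hint), h, sub_self]

lemma s9_sets {Ω : Type} [MeasurableSpace Ω] {P : Measure Ω} [IsProbabilityMeasure P]
    {Y : ℝ → Ω → ℝ} {l : ℝ} (hl : 0 < l)
    (hY : Measurable fun p : ℝ × Ω => Y p.1 p.2) (hst : S9Stat P Y)
    (hint : Integrable (Y 0) P) (B : Set ℝ) (hB : MeasurableSet B) :
    ∫ ω in S9X (S9Exp l) Y 0 ⁻¹' B, (S9X (S9Exp l) Y 0 ω - Y 0 ω) ∂P = 0 := by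
  have := s9_exp_prob hl
  have hm : Measurable (S9X (S9Exp l) Y 0) := s9_measX hY 0
  have hi : Integrable (fun ω => S9X (S9Exp l) Y 0 ω - Y 0 ω) P :=
    (s9_intX hY hst hint 0).sub hint
  have htot : ∫ ω, (S9X (S9Exp l) Y 0 ω - Y 0 ω) ∂P = 0 := by
    have := s9_mono hl hY hst hint (fun _ => 1) continuous_const monotone_const (by simp)
    simpa using this
  induction B, hB using MeasurableSpace.induction_on_inter
    (BorelSpace.measurable_eq.trans (borel_eq_generateFrom_Ioi ℝ)) isPiSystem_Ioi with
  | empty => simp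
  | basic t ht =>
    obtain ⟨a, rfl⟩ := ht
    let φ : ℕ → ℝ → ℝ := fun n x => max 0 (min 1 (n * (x - a)))
    have hφ0 : ∀ n x, 0 ≤ φ n x := fun n x => le_max_left _ _
    have hφ1 : ∀ n x, φ n x ≤ 1 := fun n x => max_le zero_le_one (min_le_left _ _)
    have hφn : ∀ n x, ‖φ n x‖ ≤ 1 := fun n x => by
      rw [Real.norm_of_nonneg (hφ0 n x)]; exact hφ1 n x
    have hφc : ∀ n, Continuous (φ n) := fun n => by fun_prop
    have hφm : ∀ n, Monotone (φ n) := fun n x y hxy => by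
      simp only [φ]
      gcongr
    have hz := fun n => s9_mono hl hY hst hint (φ n) (hφc n) (hφm n) (hφn n)
    have hlim : Filter.Tendsto (fun n => ∫ ω, φ n (S9X (S9Exp l) Y 0 ω) *
        (S9X (S9Exp l) Y 0 ω - Y 0 ω) ∂P) Filter.atTop (nhds (∫ ω,
        (S9X (S9Exp l) Y 0 ⁻¹' (Set.Ioi a)).indicator (fun ω => S9X (S9Exp l) Y 0 ω - Y 0 ω) ω ∂P)) := by
      refine tendsto_integral_of_dominated_convergence
        (fun ω => ‖S9X (S9Exp l) Y 0 ω - Y 0 ω‖) (fun n => ?_) hi.norm (fun n => ?_) ?_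
      · exact (((hφc n).measurable.comp hm).mul (hm.sub (s9_measY hY 0))).aestronglyMeasurable
      · refine Filter.Eventually.of_forall fun ω => ?_
        rw [norm_mul]
        exact mul_le_of_le_one_left (norm_nonneg _) (hφn n _)
      · refine Filter.Eventually.of_forall fun ω => ?_
        by_cases hω : a < S9X (S9Exp l) Y 0 ω
        · rw [Set.indicator_of_mem (show ω ∈ S9X (S9Exp l) Y 0 ⁻¹' (Set.Ioi a) from hω)]
          refine tendsto_const_nhds.congr' ?_
          obtain ⟨N, hN⟩ := exists_nat_ge (1 / (S9X (S9Exp l) Y 0 ω - a))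
          filter_upwards [Filter.eventually_ge_atTop N] with n hn
          have hpos : 0 < S9X (S9Exp l) Y 0 ω - a := sub_pos.mpr hω
          have h1 : 1 ≤ (n:ℝ) * (S9X (S9Exp l) Y 0 ω - a) := by
            rw [← div_le_iff₀ hpos]
            exact hN.trans (by exact_mod_cast hn)
          simp only [φ]
          rw [min_eq_left h1, max_eq_right zero_le_one, one_mul]
        · rw [Set.indicator_of_notMem (show ω ∉ S9X (S9Exp l) Y 0 ⁻¹' (Set.Ioi a) from hω)]
          refine tendsto_const_nhds.congr fun n => ?_
          have h1 : (n:ℝ) * (S9X (S9Exp l) Y 0 ω - a) ≤ 0 :=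
            mul_nonpos_of_nonneg_of_nonpos (by positivity) (by linarith [not_lt.mp hω])
          simp only [φ]
          rw [max_eq_left ((min_le_right _ _).trans h1), zero_mul]
    simp only [hz] at hlim
    rw [integral_indicator (hm measurableSet_Ioi)] at hlim
    exact (tendsto_nhds_unique tendsto_const_nhds hlim).symm
  | compl t ht ih =>
    have := integral_add_compl (hm ht) hi
    rw [ih, htot, zero_add] at this
    exact this
  | iUnion f hd hf ih =>
    rw [Set.preimage_iUnion, integral_iUnion (fun i => hm (hf i))
      (fun i j hij => (hd hij).preimage _) hi.integrableOn]
    simp [ih]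

lemma s9_backward {l : ℝ} (hl : 0 < l) : S9Cond (S9Exp l) := by
  intro Ω mΩ P hP Y hY hst hint Yb hYb
  have := s9_exp_prob hl
  have e : Yb = S9X (S9Exp l) Y 0 := by
    funext ω
    rw [hYb]
    simp [S9X]
  rw [e]
  have hm : Measurable (S9X (S9Exp l) Y 0) := s9_measX hY 0
  have hiX : Integrable (S9X (S9Exp l) Y 0) P := s9_intX hY hst hint 0
  symm
  refine ae_eq_condExp_of_forall_setIntegral_eq hm.comap_le hint
    (fun s _ _ => hiX.integrableOn) ?_ ?_
  · rintro s ⟨B, hB, rfl⟩ _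
    have := s9_sets hl hY hst hint B hB
    rw [integral_sub hiX.integrableOn hint.integrableOn] at this
    exact sub_eq_zero.mp this
  · exact (comap_measurable _).stronglyMeasurable.aestronglyMeasurable

/-- Let `F` be a probability distribution on `[0,∞)` with a density with
respect to Lebesgue measure.  Then the following are equivalent:
(i) for every probability space and every jointly measurable stationary real-valued
process `Y` with `E|Y_0| < ∞`, setting `Ȳ_F := ∫₀^∞ Y_t dF(t)`, one has
`E(Y_0 | σ(Ȳ_F)) = Ȳ_F` a.s.;
(ii) `F` is the exponential distribution with density `λ e^{−λt}` for some `λ ∈ (0,∞)`. -/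
theorem statement9
    (F : Measure ℝ) [IsProbabilityMeasure F]
    (f : ℝ → ℝ)
    (hdens : F = MeasureTheory.volume.withDensity
      fun x => ENNReal.ofReal (Set.indicator (Set.Ici (0:ℝ)) f x)) :
    (∀ (Ω : Type) (_ : MeasurableSpace Ω) (P : Measure Ω), IsProbabilityMeasure P →
        ∀ Y : ℝ → Ω → ℝ, (Measurable fun p : ℝ × Ω => Y p.1 p.2) →
        (∀ h : ℝ, ∀ (n : ℕ) (t : Fin n → ℝ),
          Measure.map (fun ω (i : Fin n) => Y (t i + h) ω) P
            = Measure.map (fun ω (i : Fin n) => Y (t i) ω) P) →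
        Integrable (Y 0) P →
        ∀ YbarF : Ω → ℝ, (∀ ω, YbarF ω = ∫ t, Y t ω ∂F) →
          P[Y 0 | MeasurableSpace.comap YbarF inferInstance] =ᵐ[P] YbarF)
      ↔ (∃ l : ℝ, 0 < l ∧
          F = MeasureTheory.volume.withDensity
            (Set.indicator (Set.Ioi (0:ℝ)) fun t => ENNReal.ofReal (l * Real.exp (-(l * t))))) := by
  have hac : F ≪ volume := by
    rw [hdens]; exact withDensity_absolutelyContinuous _ _
  have hneg : F (Set.Iio 0) = 0 := by
    rw [hdens, withDensity_apply _ measurableSet_Iio]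
    rw [setLIntegral_congr_fun (g := fun _ => 0) measurableSet_Iio]
    · simp
    · intro x hx
      have : x ∉ Set.Ici (0:ℝ) := fun h => absurd (Set.mem_Ici.mp h) (not_le.mpr hx)
      simp only [Set.indicator_of_notMem this, ENNReal.ofReal_zero]
  constructor
  · intro hi
    exact s9_forward F hi hac hneg
  · rintro ⟨l, hl, hF⟩
    have h : S9Cond (S9Exp l) := s9_backward hl
    change S9Cond F
    rw [hF]
    exact h
end

section
/- Fix d ≥ 1 and δ > 0. Let K denote the space of nonempty compact subsets of the closed unit ball of ℝ^d, equipped with the Hausdorff metric and its Borel σ-algebra. Then the map N_δ : K → ℕ ∪ {∞} which sends a compact set S to the number of connected components of S whose diameter is at least δ, is Borel measurable. -/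
open MeasureTheory TopologicalSpace

section Aux

variable {X : Type*} [MetricSpace X] [CompactSpace X]

/-- Number of components of diameter at least `δ`. -/
noncomputable def auxN (δ : ℝ) (S : Set X) : ℕ∞ :=
  Set.encard {C : Set X | (∃ x ∈ S, C = connectedComponentIn S x) ∧ δ ≤ Metric.diam C}

theorem aux_isClosed_preconnected :
    IsClosed {C : NonemptyCompacts X | IsPreconnected (C : Set X)} := by
  rw [← isOpen_compl_iff, isOpen_iff_forall_mem_open]
  intro C hC
  simp only [Set.mem_compl_iff, Set.mem_setOf_eq,
    isPreconnected_iff_subset_of_disjoint_closed] at hC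
  push Not at hC
  obtain ⟨u, v, hu, hv, hs, huv, hCu, hCv⟩ := hC
  have hd : Disjoint ((C : Set X) ∩ u) ((C : Set X) ∩ v) := by
    rw [Set.disjoint_iff_inter_eq_empty, ← Set.inter_inter_distrib_left, huv]
  obtain ⟨U, V, hU, hV, hKU, hLV, hUV⟩ :=
    SeparatedNhds.of_isCompact_isCompact (C.isCompact.inter_right hu)
      (C.isCompact.inter_right hv) hd
  refine ⟨{K | (K : Set X) ⊆ U ∪ V} ∩ ({K | ((K : Set X) ∩ U).Nonempty} ∩
    {K | ((K : Set X) ∩ V).Nonempty}), ?_,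
    (NonemptyCompacts.isOpen_subsets_of_isOpen (hU.union hV)).inter
    ((NonemptyCompacts.isOpen_inter_nonempty_of_isOpen hU).inter
      (NonemptyCompacts.isOpen_inter_nonempty_of_isOpen hV)), ?_, ?_, ?_⟩
  · rintro K ⟨h1, h2, h3⟩ hK
    obtain ⟨z, -, hz⟩ := hK U V hU hV h1 h2 h3
    exact Set.disjoint_left.1 hUV hz.1 hz.2
  · intro x hx
    rcases hs hx with h | h
    · exact Or.inl (hKU ⟨hx, h⟩)
    · exact Or.inr (hLV ⟨hx, h⟩)
  · obtain ⟨x, hx, hxv⟩ := Set.not_subset.1 hCv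
    exact ⟨x, hx, hKU ⟨hx, (hs hx).resolve_right hxv⟩⟩
  · obtain ⟨x, hx, hxv⟩ := Set.not_subset.1 hCu
    exact ⟨x, hx, hLV ⟨hx, (hs hx).resolve_left hxv⟩⟩

/-- Compact sets containing a continuum with two points at distance at least `δ`. -/
def auxG (X : Type*) [MetricSpace X] (δ : ℝ) : Set (NonemptyCompacts X) :=
  {A | ∃ C : NonemptyCompacts X, IsPreconnected (C : Set X) ∧
    (∃ x ∈ C, ∃ y ∈ C, δ ≤ dist x y) ∧ C ≤ A}

theorem aux_isClosed_G (δ : ℝ) : IsClosed (auxG X δ) := by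
  have h2 : IsClosed {C : NonemptyCompacts X | ∃ x ∈ C, ∃ y ∈ C, δ ≤ dist x y} := by
    have hF : IsClosed {p : X × X | δ ≤ dist p.1 p.2} :=
      isClosed_le continuous_const continuous_dist
    have := (NonemptyCompacts.isClosed_inter_nonempty_of_isClosed hF).preimage
      (NonemptyCompacts.continuous_prod.comp
        (continuous_id.prodMk continuous_id : Continuous fun C : NonemptyCompacts X => (C, C)))
    convert this using 1
    ext C
    constructor
    · rintro ⟨x, hx, y, hy, h⟩
      exact ⟨(x, y), ⟨hx, hy⟩, h⟩
    · rintro ⟨⟨x, y⟩, ⟨hx, hy⟩, h⟩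
      exact ⟨x, hx, y, hy, h⟩
  have h3 : IsClosed {p : NonemptyCompacts X × NonemptyCompacts X | p.1 ≤ p.2} := by
    have : IsClosed {p : NonemptyCompacts X × NonemptyCompacts X | p.1 ⊔ p.2 = p.2} :=
      isClosed_eq (continuous_fst.sup continuous_snd) continuous_snd
    simpa only [sup_eq_right] using this
  have h4 := ((((aux_isClosed_preconnected (X := X)).inter h2).preimage
    (continuous_fst (Y := NonemptyCompacts X))).inter h3).isCompact.image continuous_snd
  convert h4.isClosed using 1
  ext A
  constructor
  · rintro ⟨C, h, h', h''⟩
    exact ⟨(C, A), ⟨⟨h, h'⟩, h''⟩, rfl⟩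
  · rintro ⟨⟨C, A⟩, ⟨⟨h, h'⟩, h''⟩, rfl⟩
    exact ⟨C, h, h', h''⟩

/-- Admissible decompositions with gap `ε`. -/
def auxD (X : Type*) [MetricSpace X] (δ ε : ℝ) (n : ℕ) : Set (Fin n → NonemptyCompacts X) :=
  {f | (∀ i, f i ∈ auxG X δ) ∧ ∀ i j, i ≠ j → ∀ x ∈ f i, ∀ y ∈ f j, ε ≤ dist x y}

theorem aux_isClosed_D (δ ε : ℝ) (n : ℕ) : IsClosed (auxD X δ ε n) := by
  have hF : IsClosed {p : X × X | ε ≤ dist p.1 p.2} :=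
    isClosed_le continuous_const continuous_dist
  have h1 : IsClosed {p : NonemptyCompacts X × NonemptyCompacts X |
      ∀ x ∈ p.1, ∀ y ∈ p.2, ε ≤ dist x y} := by
    convert (NonemptyCompacts.isClosed_subsets_of_isClosed hF).preimage
      NonemptyCompacts.continuous_prod using 1
    ext ⟨A, B⟩
    constructor
    · rintro h ⟨x, y⟩ ⟨hx, hy⟩
      exact h x hx y hy
    · intro h x hx y hy
      exact h (show (x, y) ∈ _ from ⟨hx, hy⟩)
  have : auxD X δ ε n = (⋂ i, (fun f : Fin n → NonemptyCompacts X => f i) ⁻¹' auxG X δ) ∩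
      ⋂ i, ⋂ j, ⋂ (_ : i ≠ j), (fun f : Fin n → NonemptyCompacts X => (f i, f j)) ⁻¹'
        {p | ∀ x ∈ p.1, ∀ y ∈ p.2, ε ≤ dist x y} := by
    ext f
    simp [auxD]
  rw [this]
  refine (isClosed_iInter fun i => (aux_isClosed_G δ).preimage (continuous_apply i)).inter
    (isClosed_iInter fun i => isClosed_iInter fun j => isClosed_iInter fun _ => h1.preimage ?_)
  exact (continuous_apply i).prodMk (continuous_apply j)

theorem aux_isClosed_S (δ ε : ℝ) (n : ℕ) : IsClosed {S : NonemptyCompacts X |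
    ∃ f ∈ auxD X δ ε (n + 1), (S : Set X) = ⋃ i, (f i : Set X)} := by
  have hc : Continuous fun f : Fin (n + 1) → NonemptyCompacts X =>
      Finset.univ.sup' Finset.univ_nonempty f :=
    Continuous.finset_sup'_apply _ fun i _ => continuous_apply i
  convert ((aux_isClosed_D (X := X) δ ε (n + 1)).isCompact.image hc).isClosed using 1
  have key : ∀ f : Fin (n + 1) → NonemptyCompacts X,
      ((Finset.univ.sup' Finset.univ_nonempty f : NonemptyCompacts X) : Set X)
        = ⋃ i, (f i : Set X) := by
    intro f
    have := Finset.comp_sup'_eq_sup'_comp (Finset.univ_nonempty (α := Fin (n + 1))) (f := f)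
      (fun A : NonemptyCompacts X => (A : Set X)) (fun A B => NonemptyCompacts.coe_sup A B)
    rw [this, Finset.sup'_eq_sup, Finset.sup_univ_eq_iSup]
    rfl
  ext S
  constructor
  · rintro ⟨f, hf, h⟩
    exact ⟨f, hf, SetLike.coe_injective ((key f).trans h.symm)⟩
  · rintro ⟨f, hf, rfl⟩
    exact ⟨f, hf, key f⟩

theorem aux_le_of_D {δ ε : ℝ} (hε : 0 < ε) {n : ℕ} (S : NonemptyCompacts X)
    (f : Fin n → NonemptyCompacts X) (hf : f ∈ auxD X δ ε n)
    (hS : (S : Set X) = ⋃ i, (f i : Set X)) : (n : ℕ∞) ≤ auxN δ (S : Set X) := by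
  obtain ⟨hG, hD⟩ := hf
  choose C hC hx hle using hG
  choose x hx y hy hxy using hx
  have hfS : ∀ i, (f i : Set X) ⊆ S := fun i => hS ▸ Set.subset_iUnion (fun i => (f i : Set X)) i
  have hxf : ∀ i, x i ∈ (f i : Set X) := fun i => hle i (hx i)
  have hsub : ∀ i, connectedComponentIn (S : Set X) (x i) ⊆ f i := by
    intro i
    have hpre : IsPreconnected (connectedComponentIn (S : Set X) (x i)) :=
      isPreconnected_connectedComponentIn
    have hcl : IsClosed (⋃ j ∈ {j | j ≠ i}, (f j : Set X)) :=
      (Set.toFinite _).isClosed_biUnion fun j _ => (f j).isCompact.isClosed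
    have hdisj : ∀ z ∈ (f i : Set X), z ∉ ⋃ j ∈ {j | j ≠ i}, (f j : Set X) := by
      intro z hz hz'
      simp only [Set.mem_iUnion] at hz'
      obtain ⟨j, hj, hzj⟩ := hz'
      have := hD j i hj z hzj z hz
      rw [dist_self] at this
      linarith
    have hxm := mem_connectedComponentIn (hfS i (hxf i))
    have e1 : connectedComponentIn (S : Set X) (x i) ⊆
        (f i : Set X) ∪ ⋃ j ∈ {j | j ≠ i}, (f j : Set X) := by
      intro z hz
      have hz' := connectedComponentIn_subset _ _ hz
      rw [hS, Set.mem_iUnion] at hz'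
      obtain ⟨j, hj⟩ := hz'
      by_cases hji : j = i
      · exact Or.inl (hji ▸ hj)
      · exact Or.inr (Set.mem_biUnion (show j ∈ {j | j ≠ i} from hji) hj)
    have e2 : connectedComponentIn (S : Set X) (x i) ∩
        ((f i : Set X) ∩ ⋃ j ∈ {j | j ≠ i}, (f j : Set X)) = ∅ := by
      refine Set.eq_empty_of_forall_notMem ?_
      rintro z ⟨-, h1, h2⟩
      exact hdisj z h1 h2
    rcases isPreconnected_iff_subset_of_disjoint_closed.1 hpre (f i) _
      (f i).isCompact.isClosed hcl e1 e2 with h | h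
    · exact h
    · exact absurd (h hxm) (hdisj _ (hxf i))
  have hinj : Function.Injective fun i => connectedComponentIn (S : Set X) (x i) := by
    intro i j hij
    by_contra hne
    have h1 := hsub j ((show connectedComponentIn (S : Set X) (x i) =
      connectedComponentIn (S : Set X) (x j) from hij) ▸ mem_connectedComponentIn (hfS i (hxf i)))
    have := hD i j hne (x i) (hxf i) (x i) h1
    rw [dist_self] at this
    linarith
  calc (n : ℕ∞) = (Set.range fun i => connectedComponentIn (S : Set X) (x i)).encard := by
        rw [← Set.image_univ, hinj.encard_image]; simp
    _ ≤ _ := by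
      apply Set.encard_le_encard
      rintro _ ⟨i, rfl⟩
      refine ⟨⟨x i, hfS i (hxf i), rfl⟩, (hxy i).trans ?_⟩
      have hs := (hC i).subset_connectedComponentIn (hx i)
        ((show (C i : Set X) ⊆ f i from hle i).trans (hfS i))
      exact Metric.dist_le_diam_of_mem (Metric.isBounded_of_compactSpace) (hs (hx i)) (hs (hy i))

theorem aux_exists_D {δ : ℝ} (hδ : 0 < δ) {n : ℕ} (S : NonemptyCompacts X)
    (h : ((n + 1 : ℕ) : ℕ∞) ≤ auxN δ (S : Set X)) :
    ∃ m : ℕ, ∃ f ∈ auxD X δ (1 / ((m : ℝ) + 1)) (n + 1), (S : Set X) = ⋃ i, (f i : Set X) := by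
  obtain ⟨T, hT, hTn⟩ := Set.exists_subset_encard_eq h
  have hTfin : T.Finite := Set.finite_of_encard_eq_coe hTn
  have : Fintype T := hTfin.fintype
  have hcard : Fintype.card T = n + 1 := by
    rw [Set.encard_eq_coe_toFinset_card] at hTn
    rw [← Set.toFinset_card]
    exact_mod_cast hTn
  let e : Fin (n + 1) ≃ T := (Fintype.equivFinOfCardEq hcard).symm
  have hc : ∀ i, (∃ x ∈ (S : Set X), (e i : Set X) = connectedComponentIn (S : Set X) x) ∧
    δ ≤ Metric.diam (e i : Set X) := fun i => hT (e i).2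
  choose hc hdiam using hc
  choose x hxS hx using hc
  have : CompactSpace (S : Set X) := isCompact_iff_compactSpace.1 S.isCompact
  let p : Fin (n + 1) → ConnectedComponents (S : Set X) := fun i =>
    ConnectedComponents.mk ⟨x i, hxS i⟩
  have hp : Function.Injective p := by
    intro i j hij
    apply e.injective
    apply Subtype.ext
    have := ConnectedComponents.coe_eq_coe.1 hij
    rw [hx, hx, connectedComponentIn_eq_image (hxS i), connectedComponentIn_eq_image (hxS j), this]
  obtain ⟨C, hC1, hC2, -, hC4, hC5⟩ := exists_clopen_partition_of_clopen_cover
    (Z := fun i => {p i}) (D := fun _ => Set.univ) (fun i => isClosed_singleton)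
    (fun i => isClopen_univ) (fun i => Set.subset_univ _) (by
      intro i _ j _ hij
      simpa [Function.onFun] using fun h => hij (hp h))
  let A : Fin (n + 1) → Set X := fun i =>
    Subtype.val '' (ConnectedComponents.mk ⁻¹' (C i) : Set (S : Set X))
  have hAc : ∀ i, IsCompact (A i) := fun i =>
    (((hC1 i).isClosed.preimage ConnectedComponents.continuous_coe).isCompact).image
      continuous_subtype_val
  have hcomp : ∀ i, connectedComponentIn (S : Set X) (x i) ⊆ A i := by
    intro i
    rw [connectedComponentIn_eq_image (hxS i)]
    apply Set.image_mono
    intro z hz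
    have : ConnectedComponents.mk z = p i := ConnectedComponents.coe_eq_coe'.2 hz
    exact hC2 i (by simpa using this)
  have hxA : ∀ i, x i ∈ A i := fun i => hcomp i (mem_connectedComponentIn (hxS i))
  let f : Fin (n + 1) → NonemptyCompacts X := fun i => ⟨⟨A i, hAc i⟩, ⟨x i, hxA i⟩⟩
  have hAd : ∀ i j, i ≠ j → Disjoint (A i) (A j) := by
    intro i j hij
    refine Set.disjoint_image_of_injective Subtype.val_injective ?_
    exact Disjoint.preimage _ (hC5 (Set.mem_univ i) (Set.mem_univ j) hij)
  have hpair : ∀ i j, i ≠ j → ∃ r : ℝ, 0 < r ∧ ∀ a ∈ A i, ∀ b ∈ A j, r ≤ dist a b := by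
    intro i j hij
    obtain ⟨r, hr, h⟩ := Metric.exists_pos_forall_lt_edist (hAc i) (hAc j).isClosed (hAd i j hij)
    refine ⟨r, hr, fun a ha b hb => ?_⟩
    have := h a ha b hb
    rw [edist_nndist] at this
    exact_mod_cast this.le
  have hm : ∃ m : ℕ, ∀ i j, i ≠ j → ∀ a ∈ A i, ∀ b ∈ A j, 1 / ((m : ℝ) + 1) ≤ dist a b := by
    have hev : ∀ q : Fin (n + 1) × Fin (n + 1), ∀ᶠ m : ℕ in Filter.atTop, q.1 ≠ q.2 →
        ∀ a ∈ A q.1, ∀ b ∈ A q.2, 1 / ((m : ℝ) + 1) ≤ dist a b := by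
      intro q
      by_cases hq : q.1 = q.2
      · exact Filter.Eventually.of_forall fun m h => absurd hq h
      obtain ⟨r, hr, h⟩ := hpair _ _ hq
      filter_upwards [(tendsto_one_div_add_atTop_nhds_zero_nat (𝕜 := ℝ)).eventually
        (gt_mem_nhds hr)] with m hm _ a ha b hb
      exact hm.le.trans (h a ha b hb)
    obtain ⟨m, hm⟩ := (Filter.eventually_all.2 hev).exists
    exact ⟨m, fun i j => hm (i, j)⟩
  obtain ⟨m, hm⟩ := hm
  refine ⟨m, f, ⟨fun i => ?_, hm⟩, ?_⟩
  · have hcl : IsCompact (connectedComponentIn (S : Set X) (x i)) :=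
by
      rw [connectedComponentIn_eq_image (hxS i)]
      exact isClosed_connectedComponent.isCompact.image continuous_subtype_val
    have hne : (connectedComponentIn (S : Set X) (x i)).Nonempty :=
      ⟨_, mem_connectedComponentIn (hxS i)⟩
    refine ⟨⟨⟨_, hcl⟩, hne⟩, isPreconnected_connectedComponentIn, ?_, hcomp i⟩
    obtain ⟨⟨a, b⟩, ⟨ha, hb⟩, hab⟩ := (hcl.prod hcl).exists_isMaxOn (hne.prod hne)
      (continuous_dist.continuousOn)
    refine ⟨a, ha, b, hb, (hdiam i).trans ?_⟩
    rw [hx i]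
    exact Metric.diam_le_of_forall_dist_le dist_nonneg fun c hc d hd => hab (Set.mk_mem_prod hc hd)
  · apply Set.Subset.antisymm
    · intro z hz
      have := hC4 (Set.mem_iUnion.2 ⟨0, Set.mem_univ (ConnectedComponents.mk (⟨z, hz⟩ : (S : Set X)))⟩)
      obtain ⟨i, hi⟩ := Set.mem_iUnion.1 this
      exact Set.mem_iUnion.2 ⟨i, ⟨z, hz⟩, hi, rfl⟩
    · intro z hz
      obtain ⟨i, w, -, rfl⟩ := Set.mem_iUnion.1 hz
      exact w.2

theorem aux_measurable {δ : ℝ} (hδ : 0 < δ) :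
    @Measurable (NonemptyCompacts X) ℕ∞ (borel (NonemptyCompacts X)) ⊤
      (fun S => auxN δ (S : Set X)) := by
  letI : MeasurableSpace (NonemptyCompacts X) := borel _
  haveI : BorelSpace (NonemptyCompacts X) := ⟨rfl⟩
  letI : MeasurableSpace ℕ∞ := ⊤
  have hle : ∀ n : ℕ, MeasurableSet {S : NonemptyCompacts X | (n : ℕ∞) ≤ auxN δ (S : Set X)} := by
    intro n
    cases n with
    | zero => simp
    | succ n =>
      have : {S : NonemptyCompacts X | ((n + 1 : ℕ) : ℕ∞) ≤ auxN δ (S : Set X)} =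
          ⋃ m : ℕ, {S : NonemptyCompacts X |
            ∃ f ∈ auxD X δ (1 / ((m : ℝ) + 1)) (n + 1), (S : Set X) = ⋃ i, (f i : Set X)} := by
        ext S
        rw [Set.mem_iUnion]
        constructor
        · exact fun h => aux_exists_D hδ S h
        · rintro ⟨m, f, hf, h⟩
          exact aux_le_of_D (by positivity) S f hf h
      rw [this]
      exact MeasurableSet.iUnion fun m => (aux_isClosed_S δ _ n).measurableSet
  refine measurable_to_countable' fun k => ?_
  induction k using ENat.recTopCoe with
  | top =>
    convert MeasurableSet.iInter hle using 1
    ext S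
    simp only [Set.mem_preimage, Set.mem_singleton_iff, Set.mem_iInter, Set.mem_setOf_eq]
    rw [ENat.eq_top_iff_forall_ge]
  | coe n =>
    convert (hle n).diff (hle (n + 1)) using 1
    ext S
    simp only [Set.mem_preimage, Set.mem_singleton_iff, Set.mem_diff, Set.mem_setOf_eq, not_le]
    rw [Nat.cast_add, Nat.cast_one, ENat.lt_add_one_iff (ENat.coe_ne_top n), and_comm,
      le_antisymm_iff]

end Aux

/-- Fix `d ≥ 1` and `δ > 0`.  Let `K` be the space of nonempty compact
subsets of the closed unit ball of `ℝ^d`, with the Hausdorff metric and its Borel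
σ-algebra.  Then the map `N_δ : K → ℕ ∪ {∞}` sending a compact set `S` to the number of
connected components of `S` of diameter at least `δ` is Borel measurable (the countable
codomain `ℕ∞` carrying the discrete/powerset σ-algebra). -/
theorem statement16 (d : ℕ) (hd : 1 ≤ d) (δ : ℝ) (hδ : 0 < δ) :
    @Measurable
      (NonemptyCompacts (Metric.closedBall (0 : EuclideanSpace ℝ (Fin d)) 1)) ℕ∞
      (borel (NonemptyCompacts (Metric.closedBall (0 : EuclideanSpace ℝ (Fin d)) 1))) ⊤
      (fun S =>
        Set.encard {C : Set (Metric.closedBall (0 : EuclideanSpace ℝ (Fin d)) 1) |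
          (∃ x ∈ (S : Set (Metric.closedBall (0 : EuclideanSpace ℝ (Fin d)) 1)),
            C = connectedComponentIn (S : Set _) x) ∧ δ ≤ Metric.diam C}) := by
  haveI : CompactSpace (Metric.closedBall (0 : EuclideanSpace ℝ (Fin d)) 1) :=
    isCompact_iff_compactSpace.1 (isCompact_closedBall _ _)
  exact aux_measurable hδ
end
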